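/- arXiv:math/0502455 — 6 statements merged into one kernel-verified Lean document; each statement's English description precedes it below -/
import Mathlib

section
/- Let N be a continuous nest on a separable infinite-dimensional complex Hilbert space and let K₋ := {X ∈ Alg N : X N(t) is compact for every t < 1}. Then for every X ∈ Alg N the quotient norm is given by dist(X, K₋) = sup{‖N(t) X N(t)‖_e : 0 ≤ t < 1}. -/
open Set Filter Topology

noncomputable def essNorm {H : Type*} [NormedAddCommGroup H] [InnerProductSpace ℂ H]
    [CompleteSpace H] (T : H →L[ℂ] H) : ℝ :=
  Metric.infDist T {K : H →L[ℂ] H | IsCompactOperator ⇑K}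

/-- A continuous nest on `H`, parameterized by `[0,1]`: an increasing family of orthogonal
projections `N t` whose ranges strictly increase, with `N 0 = 0`, `N 1 = 1`, and
`t ↦ N t ξ` norm-continuous on `[0,1]` for every `ξ`. -/
structure ContinuousNest (H : Type*) [NormedAddCommGroup H] [InnerProductSpace ℂ H]
    [CompleteSpace H] where
  N : ℝ → H →L[ℂ] H
  idem : ∀ t ∈ Icc (0 : ℝ) 1, IsIdempotentElem (N t)
  selfAdjoint : ∀ t ∈ Icc (0 : ℝ) 1, IsSelfAdjoint (N t)
  range_lt : ∀ s t : ℝ, s ∈ Icc (0 : ℝ) 1 → t ∈ Icc (0 : ℝ) 1 → s < t →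
    LinearMap.range (N s).toLinearMap < LinearMap.range (N t).toLinearMap
  N_zero : N 0 = 0
  N_one : N 1 = 1
  contOn : ∀ ξ : H, ContinuousOn (fun t => N t ξ) (Icc (0 : ℝ) 1)

variable {H : Type*} [NormedAddCommGroup H] [InnerProductSpace ℂ H] [CompleteSpace H]

/-- `P₁` refines `P₂`: every interval of `P₁` is dominated by an interval of `P₂`
(in the Loewner order). -/
def OpRefines (P₁ P₂ : Set (H →L[ℂ] H)) : Prop :=
  ∀ E ∈ P₁, ∃ F ∈ P₂, ContinuousLinearMap.IsPositive (F - E)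

namespace ContinuousNest

variable (𝒩 : ContinuousNest H)

/-- The nest algebra of `𝒩`. -/
def alg : Set (H →L[ℂ] H) := {T | ∀ t ∈ Icc (0 : ℝ) 1, (1 - 𝒩.N t) * T * 𝒩.N t = 0}

/-- An interval of the nest: a difference `N t - N s` with `0 ≤ s ≤ t ≤ 1`. -/
def IsInterval (E : H →L[ℂ] H) : Prop :=
  ∃ s t : ℝ, 0 ≤ s ∧ s ≤ t ∧ t ≤ 1 ∧ E = 𝒩.N t - 𝒩.N s

def IsIntervalFamily (P : Set (H →L[ℂ] H)) : Prop := ∀ E ∈ P, 𝒩.IsInterval E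

/-- A net of families of intervals: directed under refinement. -/
def IsNet (O : Set (Set (H →L[ℂ] H))) : Prop :=
  (∀ P ∈ O, 𝒩.IsIntervalFamily P) ∧
  ∀ P ∈ O, ∀ Q ∈ O, ∃ R ∈ O, OpRefines R P ∧ OpRefines R Q

def nestSet : Set (H →L[ℂ] H) := 𝒩.N '' Icc (0 : ℝ) 1

/-- An order automorphism of the nest: an order-preserving bijection of `{N t : t ∈ [0,1]}`
onto itself. -/
def IsAuto (θ : (H →L[ℂ] H) → H →L[ℂ] H) : Prop :=
  Set.BijOn θ 𝒩.nestSet 𝒩.nestSet ∧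
  ∀ s t : ℝ, s ∈ Icc (0 : ℝ) 1 → t ∈ Icc (0 : ℝ) 1 → s ≤ t →
    ContinuousLinearMap.IsPositive (θ (𝒩.N t) - θ (𝒩.N s))

/-- The image family `θ(P) = {θ(N t) - θ(N s) : N t - N s ∈ P}`. -/
def autoImage (θ : (H →L[ℂ] H) → H →L[ℂ] H) (P : Set (H →L[ℂ] H)) : Set (H →L[ℂ] H) :=
  {E | ∃ s t : ℝ, 0 ≤ s ∧ s ≤ t ∧ t ≤ 1 ∧ 𝒩.N t - 𝒩.N s ∈ P ∧ E = θ (𝒩.N t) - θ (𝒩.N s)}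

/-- A stable net of intervals. -/
def IsStableNet (O : Set (Set (H →L[ℂ] H))) : Prop :=
  𝒩.IsNet O ∧ ∀ θ, 𝒩.IsAuto θ → ∀ P ∈ O, 𝒩.autoImage θ P ∈ O

/-- The kernel of a net `O`: those `X` in the nest algebra with
`lim_{P ∈ O} sup_{E ∈ P} ‖EXE‖ₑ = 0`; since the sup decreases under refinement, this limit
is `0` iff for every `ε > 0` some `P ∈ O` has all `‖EXE‖ₑ < ε`. -/
def kernel (O : Set (Set (H →L[ℂ] H))) : Set (H →L[ℂ] H) :=
  {X | X ∈ 𝒩.alg ∧ ∀ ε : ℝ, 0 < ε → ∃ P ∈ O, ∀ E ∈ P, essNorm (E * X * E) < ε}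

/-- A two-sided ideal of the nest algebra. -/
def IsIdeal (I : Set (H →L[ℂ] H)) : Prop :=
  I ⊆ 𝒩.alg ∧ (0 : H →L[ℂ] H) ∈ I ∧
  (∀ X ∈ I, ∀ Y ∈ I, X + Y ∈ I) ∧ (∀ X ∈ I, -X ∈ I) ∧
  ∀ A ∈ 𝒩.alg, ∀ X ∈ I, A * X ∈ I ∧ X * A ∈ I

/-- A stable ideal: a norm-closed two-sided ideal invariant under every automorphism
`T ↦ S T S⁻¹` of the nest algebra implemented by an invertible `S ∈ B(H)`. -/
def IsStableIdeal (I : Set (H →L[ℂ] H)) : Prop :=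
  𝒩.IsIdeal I ∧ IsClosed I ∧
  ∀ S : (H →L[ℂ] H)ˣ,
    (fun T => (↑S : H →L[ℂ] H) * T * (↑S⁻¹ : H →L[ℂ] H)) '' 𝒩.alg = 𝒩.alg →
    (fun T => (↑S : H →L[ℂ] H) * T * (↑S⁻¹ : H →L[ℂ] H)) '' I = I

end ContinuousNest


open ContinuousLinearMap InnerProductSpace

namespace ContinuousNest

section basics
variable {H : Type*} [NormedAddCommGroup H] [InnerProductSpace ℂ H] [CompleteSpace H]
variable (𝒩 : ContinuousNest H)

theorem N_mul_of_le {s t : ℝ} (hs : s ∈ Icc (0 : ℝ) 1) (ht : t ∈ Icc (0 : ℝ) 1) (h : s ≤ t) :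
    𝒩.N t * 𝒩.N s = 𝒩.N s := by
  rcases h.eq_or_lt with rfl | h
  · exact 𝒩.idem s hs
  · ext x
    have h1 : 𝒩.N s x ∈ LinearMap.range (𝒩.N t).toLinearMap :=
      (𝒩.range_lt s t hs ht h).le ⟨x, rfl⟩
    obtain ⟨y, hy⟩ := h1
    have hy' : 𝒩.N t y = 𝒩.N s x := hy
    have h2 : (𝒩.N t * 𝒩.N t) y = 𝒩.N t y := by rw [(𝒩.idem t ht).eq]
    change 𝒩.N t (𝒩.N s x) = 𝒩.N s x
    rw [← hy']
    exact h2

theorem mul_N_of_le {s t : ℝ} (hs : s ∈ Icc (0 : ℝ) 1) (ht : t ∈ Icc (0 : ℝ) 1) (h : s ≤ t) :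
    𝒩.N s * 𝒩.N t = 𝒩.N s := by
  have h1 := congrArg star (𝒩.N_mul_of_le hs ht h)
  rwa [star_mul, (𝒩.selfAdjoint s hs).star_eq, (𝒩.selfAdjoint t ht).star_eq] at h1

theorem mem_alg_iff {A : H →L[ℂ] H} :
    A ∈ 𝒩.alg ↔ ∀ t ∈ Icc (0 : ℝ) 1, A * 𝒩.N t = 𝒩.N t * A * 𝒩.N t := by
  unfold alg
  simp only [Set.mem_ofPred_eq]
  refine forall₂_congr fun t _ => ?_
  rw [sub_mul, sub_mul, one_mul, sub_eq_zero]

theorem zero_mem_alg : (0 : H →L[ℂ] H) ∈ 𝒩.alg := by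
  rw [mem_alg_iff]; intro t _; simp

theorem one_mem_alg : (1 : H →L[ℂ] H) ∈ 𝒩.alg := by
  rw [mem_alg_iff]; intro t ht; simp [(𝒩.idem t ht).eq]

theorem add_mem_alg {A B : H →L[ℂ] H} (hA : A ∈ 𝒩.alg) (hB : B ∈ 𝒩.alg) : A + B ∈ 𝒩.alg := by
  rw [mem_alg_iff] at *
  intro t ht
  rw [add_mul, hA t ht, hB t ht, mul_add, add_mul]

theorem smul_mem_alg (c : ℂ) {A : H →L[ℂ] H} (hA : A ∈ 𝒩.alg) : c • A ∈ 𝒩.alg := by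
  rw [mem_alg_iff] at *
  intro t ht
  rw [smul_mul_assoc, hA t ht, mul_smul_comm, smul_mul_assoc]

theorem sub_mem_alg {A B : H →L[ℂ] H} (hA : A ∈ 𝒩.alg) (hB : B ∈ 𝒩.alg) : A - B ∈ 𝒩.alg := by
  rw [mem_alg_iff] at *
  intro t ht
  rw [sub_mul, hA t ht, hB t ht, mul_sub, sub_mul]

theorem mul_mem_alg {A B : H →L[ℂ] H} (hA : A ∈ 𝒩.alg) (hB : B ∈ 𝒩.alg) : A * B ∈ 𝒩.alg := by
  rw [mem_alg_iff] at *
  intro t ht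
  calc A * B * 𝒩.N t = A * (B * 𝒩.N t) := by rw [mul_assoc]
    _ = (A * 𝒩.N t) * (B * 𝒩.N t) := by
        rw [mul_assoc A, ← mul_assoc (𝒩.N t) B, ← hB t ht]
    _ = (𝒩.N t * A * 𝒩.N t) * (B * 𝒩.N t) := by rw [hA t ht]
    _ = 𝒩.N t * A * (𝒩.N t * B * 𝒩.N t) := by simp only [mul_assoc]
    _ = 𝒩.N t * (A * B) * 𝒩.N t := by rw [← hB t ht]; simp only [mul_assoc]

theorem pow_mem_alg {A : H →L[ℂ] H} (hA : A ∈ 𝒩.alg) (n : ℕ) : A ^ n ∈ 𝒩.alg := by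
  induction n with
  | zero => simpa using 𝒩.one_mem_alg
  | succ n ih => rw [pow_succ]; exact 𝒩.mul_mem_alg ih hA

theorem sum_mem_alg {ι : Type*} (s : Finset ι) (f : ι → H →L[ℂ] H) (hf : ∀ i ∈ s, f i ∈ 𝒩.alg) :
    ∑ i ∈ s, f i ∈ 𝒩.alg :=
  Finset.sum_induction f (· ∈ 𝒩.alg) (fun _ _ => 𝒩.add_mem_alg) 𝒩.zero_mem_alg hf

theorem N_mem_alg {s : ℝ} (hs : s ∈ Icc (0 : ℝ) 1) : 𝒩.N s ∈ 𝒩.alg := by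
  rw [mem_alg_iff]
  intro t ht
  rcases le_total s t with h | h
  · rw [𝒩.N_mul_of_le hs ht h, 𝒩.mul_N_of_le hs ht h]
  · rw [mul_assoc, 𝒩.N_mul_of_le ht hs h, (𝒩.idem t ht).eq]

theorem isClosed_alg : IsClosed 𝒩.alg := by
  have : 𝒩.alg = ⋂ t ∈ Icc (0 : ℝ) 1, {T | (1 - 𝒩.N t) * T * 𝒩.N t = 0} := by
    ext T; simp [alg]
  rw [this]
  refine isClosed_biInter fun t _ => ?_
  exact isClosed_eq (by fun_prop) continuous_const

theorem norm_N_apply_sq {t : ℝ} (ht : t ∈ Icc (0 : ℝ) 1) (x : H) :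
    inner ℂ (𝒩.N t x) x = ((‖𝒩.N t x‖ ^ 2 : ℝ) : ℂ) := by
  have h1 : 𝒩.N t x = 𝒩.N t (𝒩.N t x) := by
    conv_lhs => rw [← (𝒩.idem t ht).eq]
    rfl
  have h2 := (𝒩.selfAdjoint t ht).isSymmetric
  have h3 : inner ℂ (𝒩.N t (𝒩.N t x)) x = inner ℂ (𝒩.N t x) (𝒩.N t x) := h2 _ _
  rw [h1, h3, inner_self_eq_norm_sq_to_K, ← h1]
  norm_cast

theorem inner_N_N {s t : ℝ} (hs : s ∈ Icc (0 : ℝ) 1) (ht : t ∈ Icc (0 : ℝ) 1) (h : s ≤ t) (x : H) :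
    inner ℂ (𝒩.N s x) (𝒩.N t x) = ((‖𝒩.N s x‖ ^ 2 : ℝ) : ℂ) := by
  have h2 : inner ℂ (𝒩.N t (𝒩.N s x)) x = inner ℂ (𝒩.N s x) (𝒩.N t x) :=
    (𝒩.selfAdjoint t ht).isSymmetric _ _
  rw [← h2, ← 𝒩.norm_N_apply_sq hs]
  congr 1
  exact congrArg (fun A : H →L[ℂ] H => A x) (𝒩.N_mul_of_le hs ht h)

theorem inner_N_N' {s t : ℝ} (hs : s ∈ Icc (0 : ℝ) 1) (ht : t ∈ Icc (0 : ℝ) 1) (h : s ≤ t) (x : H) :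
    inner ℂ (𝒩.N t x) (𝒩.N s x) = ((‖𝒩.N s x‖ ^ 2 : ℝ) : ℂ) := by
  rw [← inner_conj_symm, 𝒩.inner_N_N hs ht h, Complex.conj_ofReal]

theorem norm_N_sub_sq {s t : ℝ} (hs : s ∈ Icc (0 : ℝ) 1) (ht : t ∈ Icc (0 : ℝ) 1) (h : s ≤ t)
    (x : H) : ‖𝒩.N t x - 𝒩.N s x‖ ^ 2 = ‖𝒩.N t x‖ ^ 2 - ‖𝒩.N s x‖ ^ 2 := by
  have h1 := @norm_sub_sq ℂ H _ _ _ (𝒩.N t x) (𝒩.N s x)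
  rw [𝒩.inner_N_N' hs ht h] at h1
  rw [h1, RCLike.re_eq_complex_re, Complex.ofReal_re]
  ring

theorem norm_N_le {t : ℝ} (ht : t ∈ Icc (0 : ℝ) 1) : ‖𝒩.N t‖ ≤ 1 := by
  refine ContinuousLinearMap.opNorm_le_bound _ zero_le_one fun x => ?_
  have h := 𝒩.norm_N_sub_sq ht (by simp : (1 : ℝ) ∈ Icc (0 : ℝ) 1) ht.2 x
  rw [𝒩.N_one] at h
  have h2 : ‖𝒩.N t x‖ ^ 2 ≤ ‖x‖ ^ 2 := by
    have := sq_nonneg ‖(1 : H →L[ℂ] H) x - 𝒩.N t x‖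
    simp only [one_apply_eq_self] at *
    linarith
  rw [one_mul]
  exact le_of_sq_le_sq h2 (norm_nonneg _)
end basics

end ContinuousNest

namespace ContinuousNest

section shift
variable {H : Type*} [NormedAddCommGroup H] [InnerProductSpace ℂ H] [CompleteSpace H]
variable (𝒩 : ContinuousNest H)

theorem isCompact_rankOne (x y : H) : IsCompactOperator ⇑(rankOne ℂ x y) := by
  rw [rankOne_def']
  exact (isCompactOperator_of_locallyCompactSpace_dom (innerSL ℂ y)).clm_comp
    (ContinuousLinearMap.toSpanSingleton ℂ x)

theorem isCompact_sum {ι : Type*} (s : Finset ι) (f : ι → H →L[ℂ] H)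
    (hf : ∀ i ∈ s, IsCompactOperator ⇑(f i)) : IsCompactOperator ⇑(∑ i ∈ s, f i) :=
  Finset.sum_induction f (fun A => IsCompactOperator ⇑A) (fun _ _ ha hb => ha.add hb)
    isCompactOperator_zero hf

theorem rankOne_mem_alg {t : ℝ} (ht : t ∈ Icc (0 : ℝ) 1) {x y : H} (hx : 𝒩.N t x = x)
    (hy : 𝒩.N t y = 0) : rankOne ℂ x y ∈ 𝒩.alg := by
  have hx' : ∀ s ∈ Icc (0 : ℝ) 1, t ≤ s → 𝒩.N s x = x := by
    intro s hs h
    rw [← hx]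
    exact congrArg (fun A : H →L[ℂ] H => A x) (𝒩.N_mul_of_le ht hs h)
  have hy' : ∀ s ∈ Icc (0 : ℝ) 1, s ≤ t → 𝒩.N s y = 0 := by
    intro s hs h
    have : 𝒩.N s (𝒩.N t y) = 𝒩.N s y :=
      congrArg (fun A : H →L[ℂ] H => A y) (𝒩.mul_N_of_le hs ht h)
    rw [← this, hy, map_zero]
  rw [mem_alg_iff]
  intro s hs
  ext z
  simp only [mul_apply_eq_comp, rankOne_apply, map_smul]
  rcases le_total t s with h | h
  · rw [hx' s hs h]
  · have : inner ℂ (𝒩.N s y) z = inner ℂ y (𝒩.N s z) := (𝒩.selfAdjoint s hs).isSymmetric _ _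
    rw [← this, hy' s hs h]
    simp

theorem exists_shift (y : H) (m : ℕ) : ∃ S : H →L[ℂ] H, S ∈ 𝒩.alg ∧ IsCompactOperator ⇑S ∧
    ‖S‖ ≤ 1 ∧ ‖y - star S y‖ ^ 2 ≤ ‖y‖ ^ 2 / (m + 1 : ℝ) := by
  rcases eq_or_ne y 0 with rfl | hy
  · exact ⟨0, 𝒩.zero_mem_alg, isCompactOperator_zero, by simp, by simp⟩
  have hy0 : 0 < ‖y‖ := norm_pos_iff.2 hy
  have hm : (0 : ℝ) < m + 1 := by positivity
  have hcont : ContinuousOn (fun t => ‖𝒩.N t y‖ ^ 2) (Icc (0 : ℝ) 1) :=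
    ((𝒩.contOn y).norm).pow 2
  have hivt := intermediate_value_Icc (zero_le_one' ℝ) hcont
  have hex : ∀ i : ℕ, ∃ u ∈ Icc (0 : ℝ) 1, i ≤ m + 1 →
      ‖𝒩.N u y‖ ^ 2 = (i / (m + 1) : ℝ) * ‖y‖ ^ 2 := by
    intro i
    by_cases hi : i ≤ m + 1
    · have hmem : (i / (m + 1) : ℝ) * ‖y‖ ^ 2 ∈
          Icc (‖𝒩.N 0 y‖ ^ 2) (‖𝒩.N 1 y‖ ^ 2) := by
        rw [𝒩.N_zero, 𝒩.N_one]
        have h1 : (i / (m + 1) : ℝ) ≤ 1 := by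
          rw [div_le_one hm]; exact_mod_cast hi
        constructor
        · simp; positivity
        · simpa using mul_le_mul_of_nonneg_right h1 (sq_nonneg ‖y‖)
      obtain ⟨u, hu, hu2⟩ := hivt hmem
      exact ⟨u, hu, fun _ => hu2⟩
    · exact ⟨0, by simp, fun h => absurd h hi⟩
  choose u hu hg using hex
  have hmono : ∀ i j, i ≤ j → j ≤ m + 1 → u i ≤ u j := by
    intro i j hij hj
    rcases hij.eq_or_lt with rfl | hlt
    · exact le_rfl
    by_contra hcon
    push Not at hcon
    have h1 := 𝒩.norm_N_sub_sq (hu j) (hu i) hcon.le y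
    rw [hg i (hij.trans hj), hg j hj] at h1
    have h2 : (i : ℝ) < j := by exact_mod_cast hlt
    have h3 : (i / (m + 1) : ℝ) * ‖y‖ ^ 2 < (j / (m + 1) : ℝ) * ‖y‖ ^ 2 := by gcongr
    have := sq_nonneg ‖𝒩.N (u i) y - 𝒩.N (u j) y‖
    linarith
  let d : ℕ → H := fun i => 𝒩.N (u (i + 1)) y - 𝒩.N (u i) y
  have hNN : ∀ i j, i ≤ m + 1 → j ≤ m + 1 →
      inner ℂ (𝒩.N (u i) y) (𝒩.N (u j) y) = (((min i j : ℕ) / (m + 1) * ‖y‖ ^ 2 : ℝ) : ℂ) := by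
    intro i j hi hj
    rcases le_total i j with h | h
    · rw [𝒩.inner_N_N (hu i) (hu j) (hmono i j h hj), hg i hi, min_eq_left h]
    · rw [𝒩.inner_N_N' (hu j) (hu i) (hmono j i h hi), hg j hj, min_eq_right h]
  have hdd : ∀ i j, i < j → j ≤ m → inner ℂ (d i) (d j) = 0 := by
    intro i j hij hj
    simp only [d, inner_sub_left, inner_sub_right]
    rw [hNN _ _ (by lia) (by lia), hNN _ _ (by lia) (by lia), hNN _ _ (by lia) (by lia),
      hNN _ _ (by lia) (by lia)]
    rw [min_eq_left (by lia : i + 1 ≤ j + 1), min_eq_left (by lia : i ≤ j + 1),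
      min_eq_left (by lia : i + 1 ≤ j), min_eq_left (by lia : i ≤ j)]
    simp
  have hd1 : ∀ i, i ≤ m → ‖d i‖ ^ 2 = ‖y‖ ^ 2 / (m + 1) := by
    intro i hi
    simp only [d]
    rw [𝒩.norm_N_sub_sq (hu _) (hu _) (hmono _ _ (by lia) (by lia)), hg _ (by lia), hg _ (by lia)]
    push_cast
    field_simp
    ring
  have hdy : ∀ i, i ≤ m → inner ℂ (d i) y = ((‖y‖ ^ 2 / (m + 1) : ℝ) : ℂ) := by
    intro i hi
    simp only [d]
    rw [inner_sub_left, 𝒩.norm_N_apply_sq (hu _), 𝒩.norm_N_apply_sq (hu _), hg _ (by lia),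
      hg _ (by lia), ← Complex.ofReal_sub]
    congr 1
    push_cast
    field_simp
    ring
  -- normalised vectors
  let κ : ℝ := Real.sqrt (m + 1) / ‖y‖
  have hκ : κ ^ 2 = (m + 1) / ‖y‖ ^ 2 := by
    simp only [κ, div_pow]; rw [Real.sq_sqrt hm.le]
  have hκ0 : 0 ≤ κ := by positivity
  let w : Fin (m + 1) → H := fun i => (κ : ℂ) • d i
  have hw : Orthonormal ℂ w := by
    constructor
    · intro i
      have : ‖w i‖ ^ 2 = 1 := by
        simp only [w, norm_smul, mul_pow, Complex.norm_real, Real.norm_eq_abs, sq_abs]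
        rw [hκ, hd1 _ (by lia)]
        field_simp
      have h0 := norm_nonneg (w i)
      nlinarith
    · intro i j hij
      simp only [w, inner_smul_left, inner_smul_right]
      rcases lt_or_gt_of_ne (fun h => hij (Fin.ext h) : (i : ℕ) ≠ j) with h | h
      · rw [hdd _ _ h (by lia)]; simp
      · rw [← inner_conj_symm, hdd _ _ h (by lia)]; simp
  let S : H →L[ℂ] H := ∑ i : Fin m, rankOne ℂ (w i.castSucc) (w i.succ)
  have hNd : ∀ i j, i ≤ m + 1 → j ≤ m + 1 → 𝒩.N (u i) (𝒩.N (u j) y) = 𝒩.N (u (min i j)) y := by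
    intro i j hi hj
    rcases le_total i j with h | h
    · rw [min_eq_left h]
      exact congrArg (fun A : H →L[ℂ] H => A y) (𝒩.mul_N_of_le (hu i) (hu j) (hmono i j h hj))
    · rw [min_eq_right h]
      exact congrArg (fun A : H →L[ℂ] H => A y) (𝒩.N_mul_of_le (hu j) (hu i) (hmono j i h hi))
  refine ⟨S, ?_, ?_, ?_, ?_⟩
  · refine 𝒩.sum_mem_alg _ _ fun i _ => 𝒩.rankOne_mem_alg (hu (i + 1)) ?_ ?_
    · simp only [w, d, map_smul, map_sub, Fin.val_castSucc]
      rw [hNd _ _ (by lia) (by lia), hNd _ _ (by lia) (by lia), min_self,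
        min_eq_right (by lia)]
    · simp only [w, d, map_smul, map_sub, Fin.val_succ]
      rw [hNd _ _ (by lia) (by lia), hNd _ _ (by lia) (by lia), min_self,
        min_eq_left (by lia), sub_self, smul_zero]
  · exact isCompact_sum _ _ fun i _ => isCompact_rankOne _ _
  · refine ContinuousLinearMap.opNorm_le_bound _ zero_le_one fun x => ?_
    rw [one_mul]
    refine le_of_sq_le_sq ?_ (norm_nonneg _)
    have hw1 : Orthonormal ℂ (fun i : Fin m => w i.castSucc) :=
      hw.comp _ (Fin.castSucc_injective m)
    have hw2 : Orthonormal ℂ (fun i : Fin m => w i.succ) :=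
      hw.comp _ (Fin.succ_injective m)
    have h1 : S x = ∑ i : Fin m, inner ℂ (w i.succ) x • w i.castSucc := by
      simp [S]
    have h2 : ‖S x‖ ^ 2 = ∑ i : Fin m, ‖inner ℂ (w i.succ) x‖ ^ 2 := by
      have h3 := hw1.inner_sum (fun i => inner ℂ (w i.succ) x) (fun i => inner ℂ (w i.succ) x)
        Finset.univ
      rw [← h1, inner_self_eq_norm_sq_to_K] at h3
      simp only [RCLike.conj_mul] at h3
      exact_mod_cast h3
    rw [h2]
    exact hw2.sum_inner_products_le x
  · have h1 : star S y = ∑ i : Fin m, d ((i : ℕ) + 1) := by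
      simp only [S, star_sum, star_eq_adjoint, adjoint_rankOne, _root_.sum_apply,
        rankOne_apply]
      refine Finset.sum_congr rfl fun i _ => ?_
      simp only [w, Fin.val_castSucc, Fin.val_succ, inner_smul_left, smul_smul]
      rw [hdy _ (by lia), Complex.conj_ofReal]
      have : ((κ : ℂ) * ((‖y‖ ^ 2 / (m + 1) : ℝ) : ℂ) * (κ : ℂ)) = 1 := by
        have h5 : κ * (‖y‖ ^ 2 / (m + 1)) * κ = 1 := by
          have : κ * (‖y‖ ^ 2 / (m + 1)) * κ = κ ^ 2 * (‖y‖ ^ 2 / (m + 1)) := by ring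
          rw [this, hκ]
          field_simp
        exact_mod_cast h5
      rw [this, one_smul]
    have h2 : ∑ i : Fin m, d ((i : ℕ) + 1) = 𝒩.N (u (m + 1)) y - 𝒩.N (u 1) y := by
      rw [Fin.sum_univ_eq_sum_range (fun i => d (i + 1)) m]
      exact Finset.sum_range_sub (fun i => 𝒩.N (u (i + 1)) y) m
    have h3 : 𝒩.N (u (m + 1)) y = y := by
      have h4 := 𝒩.norm_N_sub_sq (hu (m + 1)) (by simp : (1 : ℝ) ∈ Icc (0 : ℝ) 1) (hu _).2 y
      rw [hg _ le_rfl, 𝒩.N_one] at h4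
      have h5 : ‖y - 𝒩.N (u (m + 1)) y‖ ^ 2 = 0 := by
        have h6 : (((m + 1 : ℕ) : ℝ) / (m + 1)) = 1 := by push_cast; exact div_self hm.ne'
        rw [h6] at h4
        simpa using h4
      have h7 := pow_eq_zero_iff (two_ne_zero) |>.1 h5
      exact (sub_eq_zero.1 (norm_eq_zero.1 h7)).symm
    rw [h1, h2, h3, sub_sub_cancel, hg 1 (by lia)]
    push_cast
    apply le_of_eq
    ring

end shift

end ContinuousNest

namespace ContinuousNest

section kill
variable {H : Type*} [NormedAddCommGroup H] [InnerProductSpace ℂ H] [CompleteSpace H]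
variable (𝒩 : ContinuousNest H)

theorem isCompact_mul_right {A : H →L[ℂ] H} (hA : IsCompactOperator ⇑A) (B : H →L[ℂ] H) :
    IsCompactOperator ⇑(A * B) := hA.comp_clm B

theorem isCompact_mul_left {A : H →L[ℂ] H} (hA : IsCompactOperator ⇑A) (B : H →L[ℂ] H) :
    IsCompactOperator ⇑(B * A) := hA.clm_comp B

theorem geom_mem_alg {A : H →L[ℂ] H} (hA : A ∈ 𝒩.alg) (h : ‖A‖ < 1) :
    (∑' i : ℕ, A ^ i) ∈ 𝒩.alg := by
  have hs : HasSum (fun i : ℕ => A ^ i) (∑' i : ℕ, A ^ i) :=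
    (summable_geometric_of_norm_lt_one h).hasSum
  exact 𝒩.isClosed_alg.mem_of_tendsto hs
    (Eventually.of_forall fun s => 𝒩.sum_mem_alg s _ fun i _ => 𝒩.pow_mem_alg hA i)

theorem exists_kill_one (y : H) {c ε : ℝ} (hc : 0 < c) (hε : 0 < ε) :
    ∃ R : H →L[ℂ] H, R ∈ 𝒩.alg ∧ IsCompactOperator ⇑R ∧ ‖1 - R‖ ≤ 1 + c ∧
      ‖star (1 - R) y‖ ≤ ε := by
  let r : ℝ := 1 / (1 + c)
  have hr0 : 0 < r := by positivity
  have hr1 : r < 1 := by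
    simp only [r]; rw [div_lt_one (by positivity)]; linarith
  obtain ⟨m, hm⟩ := exists_nat_gt (‖y‖ ^ 2 / (ε * (1 - r)) ^ 2)
  have hpos : 0 < ε * (1 - r) := mul_pos hε (by linarith)
  obtain ⟨S, hSa, hSc, hS1, hSy⟩ := 𝒩.exists_shift y m
  have hSy' : ‖y - star S y‖ ≤ ε * (1 - r) := by
    refine le_of_sq_le_sq (hSy.trans ?_) hpos.le
    rw [div_lt_iff₀ (by positivity)] at hm
    rw [div_le_iff₀ (by positivity)]
    nlinarith [sq_nonneg (ε * (1 - r))]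
  let B : H →L[ℂ] H := (r : ℂ) • S
  have hBn : ‖B‖ ≤ r := by
    simp only [B, norm_smul, Complex.norm_real, Real.norm_eq_abs, abs_of_pos hr0]
    nlinarith
  have hB1 : ‖B‖ < 1 := hBn.trans_lt hr1
  have hBa : B ∈ 𝒩.alg := 𝒩.smul_mem_alg _ hSa
  let V : H →L[ℂ] H := ∑' i : ℕ, B ^ i
  have hVa : V ∈ 𝒩.alg := 𝒩.geom_mem_alg hBa hB1
  have hV : (1 - B) * V = 1 := mul_neg_geom_series B hB1
  have hVn : ‖V‖ ≤ (1 - r)⁻¹ := by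
    have h1 : (1 : ℝ) - r > 0 := by linarith
    refine ContinuousLinearMap.opNorm_le_bound _ (by positivity) fun x => ?_
    have h2 : x = V x - B (V x) := by
      conv_lhs => rw [← one_apply_eq_self (F := H →L[ℂ] H) x, ← hV]
      simp
    have h3 : ‖V x‖ - ‖B (V x)‖ ≤ ‖x‖ := by
      conv_rhs => rw [h2]
      exact norm_sub_norm_le _ _
    have h4 : ‖B (V x)‖ ≤ r * ‖V x‖ := B.le_of_opNorm_le hBn _
    rw [inv_mul_eq_div, le_div_iff₀ h1]
    linarith
  let R : H →L[ℂ] H := ((1 - r : ℝ) : ℂ) • (S * V)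
  have hR : 1 - R = (1 - S) * V := by
    have : (1 - S) * V = (1 - B) * V - ((1 - r : ℝ) : ℂ) • (S * V) := by
      simp only [B, sub_mul, one_mul, smul_mul_assoc]
      push_cast
      rw [sub_smul, one_smul]
      abel
    rw [this, hV]
  refine ⟨R, 𝒩.smul_mem_alg _ (𝒩.mul_mem_alg hSa hVa), ?_, ?_, ?_⟩
  · exact (isCompact_mul_right hSc V).smul (((1 - r : ℝ) : ℂ))
  · rw [hR]
    refine ContinuousLinearMap.opNorm_le_bound _ (by positivity) fun x => ?_
    set z := V x with hz
    have h2 : x = z - B z := by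
      conv_lhs => rw [← one_apply_eq_self (F := H →L[ℂ] H) x, ← hV]
      simp [hz]
    have h3 : ((1 - S) * V) x = z - S z := by simp [hz]
    rw [h3]
    have h4 : x = (r : ℂ) • (z - S z) + ((1 - r : ℝ) : ℂ) • z := by
      rw [h2]
      simp only [B, smul_sub, _root_.smul_apply]
      push_cast
      rw [sub_smul, one_smul]
      abel
    have h5 : 0 ≤ RCLike.re (inner ℂ (z - S z) z) := by
      rw [inner_sub_left, map_sub, inner_self_eq_norm_sq]
      have h6 : RCLike.re (inner ℂ (S z) z) ≤ ‖S z‖ * ‖z‖ := re_inner_le_norm _ _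
      have h7 : ‖S z‖ ≤ 1 * ‖z‖ := S.le_of_opNorm_le hS1 z
      nlinarith [norm_nonneg z]
    have h6 : (r * ‖z - S z‖) ^ 2 ≤ ‖x‖ ^ 2 := by
      rw [h4, @norm_add_sq ℂ, inner_smul_left, inner_smul_right, Complex.conj_ofReal, norm_smul,
        Complex.norm_real, Real.norm_eq_abs, abs_of_pos hr0, ← mul_assoc, ← Complex.ofReal_mul,
        RCLike.re_eq_complex_re, Complex.re_ofReal_mul]
      rw [RCLike.re_eq_complex_re] at h5
      have h8 : 0 ≤ r * (1 - r) * (inner ℂ (z - S z) z).re :=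
        mul_nonneg (mul_nonneg hr0.le (by linarith)) h5
      have := sq_nonneg ‖((1 - r : ℝ) : ℂ) • z‖
      linarith
    have h7 := le_of_sq_le_sq h6 (norm_nonneg _)
    simp only [r] at h7
    rw [div_mul_eq_mul_div, one_mul, div_le_iff₀ (by positivity)] at h7
    linarith
  · rw [hR, star_mul]
    have h1 : (star V * star (1 - S)) y = star V (y - star S y) := by simp
    rw [h1]
    have h2 : ‖star V‖ ≤ (1 - r)⁻¹ := by rw [norm_star]; exact hVn
    have h3 : (1 : ℝ) - r > 0 := by linarith
    calc ‖star V (y - star S y)‖ ≤ (1 - r)⁻¹ * ‖y - star S y‖ := (star V).le_of_opNorm_le h2 _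
      _ ≤ (1 - r)⁻¹ * (ε * (1 - r)) := by gcongr
      _ = ε := by field_simp

theorem exists_kill_finite {s : Set H} (hs : s.Finite) : ∀ {c ε : ℝ}, 0 < c → 0 < ε →
    ∃ R : H →L[ℂ] H, R ∈ 𝒩.alg ∧ IsCompactOperator ⇑R ∧ ‖1 - R‖ ≤ 1 + c ∧
      ∀ y ∈ s, ‖star (1 - R) y‖ ≤ ε := by
  induction s, hs using Set.Finite.induction_on with
  | empty =>
    intro c ε hc hε
    refine ⟨0, 𝒩.zero_mem_alg, isCompactOperator_zero, ?_, by simp⟩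
    rw [sub_zero]
    exact ContinuousLinearMap.norm_id_le.trans (by linarith)
  | @insert y s _ _ ih =>
    intro c ε hc hε
    have hc1 : 0 < min (c / 3) 1 := by positivity
    have hle1 : min (c / 3) 1 ≤ 1 := min_le_right _ _
    have hle2 : min (c / 3) 1 ≤ c / 3 := min_le_left _ _
    set c' := min (c / 3) 1 with hc'
    obtain ⟨R₁, h1a, h1c, h1n, h1y⟩ := ih hc1 (half_pos hε)
    obtain ⟨R₂, h2a, h2c, h2n, h2y⟩ := 𝒩.exists_kill_one (star (1 - R₁) y) hc1 hε
    have heq : 1 - (R₁ + R₂ - R₁ * R₂) = (1 - R₁) * (1 - R₂) := by noncomm_ring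
    refine ⟨R₁ + R₂ - R₁ * R₂, ?_, ?_, ?_, ?_⟩
    · exact 𝒩.sub_mem_alg (𝒩.add_mem_alg h1a h2a) (𝒩.mul_mem_alg h1a h2a)
    · exact (h1c.add h2c).sub (isCompact_mul_right h1c R₂)
    · rw [heq]
      refine (norm_mul_le _ _).trans ?_
      have := mul_le_mul h1n h2n (norm_nonneg _) (by linarith)
      nlinarith
    · intro z hz
      rw [heq, star_mul]
      change ‖star (1 - R₂) (star (1 - R₁) z)‖ ≤ ε
      rcases hz with rfl | hz
      · exact h2y
      · have h3 : ‖star (1 - R₂)‖ ≤ 2 := by rw [norm_star]; linarith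
        have h4 := (star (1 - R₂)).le_of_opNorm_le h3 (star (1 - R₁) z)
        have h5 := h1y z hz
        linarith

theorem exists_net {T : H →L[ℂ] H} (hT : IsCompactOperator ⇑T) {δ : ℝ} (hδ : 0 < δ) :
    ∃ s : Set H, s.Finite ∧ ∀ x : H, ∃ y ∈ s, ‖T x - (‖x‖ : ℂ) • y‖ ≤ δ * ‖x‖ := by
  obtain ⟨K, hK, hsub⟩ :=
    IsCompactOperator.image_closedBall_subset_compact (f := T.toLinearMap) hT 1
  obtain ⟨s, hs, hcov⟩ := Metric.totallyBounded_iff.1 hK.totallyBounded δ hδ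
  refine ⟨s, hs, fun x => ?_⟩
  have key : ∀ z : H, ‖z‖ ≤ 1 → ∃ y ∈ s, ‖T z - y‖ ≤ δ := by
    intro z hz
    have h1 : T z ∈ K := hsub ⟨z, by simpa using hz, rfl⟩
    have h2 := hcov h1
    simp only [Set.mem_iUnion, Metric.mem_ball, dist_eq_norm] at h2
    obtain ⟨y, hy, h3⟩ := h2
    exact ⟨y, hy, h3.le⟩
  rcases eq_or_ne x 0 with rfl | hx
  · obtain ⟨y, hy, -⟩ := key 0 (by simp)
    exact ⟨y, hy, by simp⟩
  · have hx0 : 0 < ‖x‖ := norm_pos_iff.2 hx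
    obtain ⟨y, hy, h1⟩ := key (((‖x‖ : ℂ)⁻¹) • x) (by
      rw [norm_smul, norm_inv, Complex.norm_real, norm_norm, inv_mul_cancel₀ hx0.ne'])
    refine ⟨y, hy, ?_⟩
    have h2 : T x - (‖x‖ : ℂ) • y = (‖x‖ : ℂ) • (T (((‖x‖ : ℂ)⁻¹) • x) - y) := by
      rw [map_smul, smul_sub, smul_smul, mul_inv_cancel₀ (by exact_mod_cast hx0.ne'), one_smul]
    rw [h2, norm_smul, Complex.norm_real, norm_norm, mul_comm]
    gcongr

theorem exists_kill {T : H →L[ℂ] H} (hT : IsCompactOperator ⇑T) {c ε : ℝ} (hc : 0 < c)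
    (hc1 : c ≤ 1) (hε : 0 < ε) :
    ∃ R : H →L[ℂ] H, R ∈ 𝒩.alg ∧ IsCompactOperator ⇑R ∧ ‖1 - R‖ ≤ 1 + c ∧
      ∀ x, ‖star (1 - R) (T x)‖ ≤ ε * ‖x‖ := by
  obtain ⟨s, hs, hnet⟩ := exists_net hT (by positivity : 0 < ε / 4)
  obtain ⟨R, ha, hRc, hn, hy⟩ := 𝒩.exists_kill_finite hs hc (half_pos hε)
  refine ⟨R, ha, hRc, hn, fun x => ?_⟩
  obtain ⟨y, hys, h1⟩ := hnet x
  have h3 : ‖star (1 - R)‖ ≤ 2 := by rw [norm_star]; linarith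
  have h4 := (star (1 - R)).le_of_opNorm_le h3 (T x - (‖x‖ : ℂ) • y)
  have h5 : star (1 - R) (T x) = star (1 - R) (T x - (‖x‖ : ℂ) • y)
      + (‖x‖ : ℂ) • star (1 - R) y := by
    rw [← map_smul, ← map_add, sub_add_cancel]
  have h6 : ‖(‖x‖ : ℂ) • star (1 - R) y‖ ≤ ‖x‖ * (ε / 2) := by
    rw [norm_smul, Complex.norm_real, norm_norm]
    have := hy y hys
    gcongr
  rw [h5]
  refine (norm_add_le _ _).trans ?_
  linarith

end kill

end ContinuousNest

namespace ContinuousNest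

section pinch
variable {H : Type*} [NormedAddCommGroup H] [InnerProductSpace ℂ H] [CompleteSpace H]
variable (𝒩 : ContinuousNest H)

/-- Krylov-type increasing sequence of subspaces. -/
def krylov (S : H →L[ℂ] H) (F : Submodule ℂ H) : ℕ → Submodule ℂ H
  | 0 => F
  | k + 1 => krylov S F k ⊔ (krylov S F k).map S.toLinearMap

theorem exists_pinch (S : H →L[ℂ] H) (hS : IsSelfAdjoint S) (F : Submodule ℂ H)
    [FiniteDimensional ℂ F] (m : ℕ) (hm : 0 < m) :
    ∃ G : Submodule ℂ H, FiniteDimensional ℂ G ∧ ∀ x : H, ∃ u v : H, x = u + v ∧ u ∈ G ∧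
      v ∈ Fᗮ ∧ ‖x‖ ^ 2 = ‖u‖ ^ 2 + ‖v‖ ^ 2 ∧
      2 * ‖inner ℂ (S u) v‖ ≤ ‖S‖ * (‖x‖ ^ 2 / m) := by
  let K := krylov S F
  have hfin : ∀ k, FiniteDimensional ℂ (K k) := by
    intro k
    induction k with
    | zero => exact ‹FiniteDimensional ℂ F›
    | succ k ih =>
      change FiniteDimensional ℂ ↥(K k ⊔ (K k).map S.toLinearMap)
      infer_instance
  have hle : ∀ k, K k ≤ K (k + 1) := fun k => le_sup_left
  have hmono : Monotone K := monotone_nat_of_le_succ hle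
  have hSK : ∀ k, ∀ z ∈ K k, S z ∈ K (k + 1) := fun k z hz =>
    (le_sup_right : (K k).map S.toLinearMap ≤ K (k + 1)) ⟨z, hz, rfl⟩
  refine ⟨K (2 * m), hfin _, fun x => ?_⟩
  let p : ℕ → H := fun k => (K k).starProjection x
  have hpK : ∀ k, p k ∈ K k := fun k => (K k).starProjection_apply_mem x
  have hort : ∀ k, x - p k ∈ (K k)ᗮ := fun k => (K k).sub_starProjection_mem_orthogonal x
  have hpyth : ∀ k z, z ∈ K k → ∀ w, w ∈ (K k)ᗮ → ‖z + w‖ ^ 2 = ‖z‖ ^ 2 + ‖w‖ ^ 2 := by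
    intro k z hz w hw
    have := norm_add_sq_eq_norm_sq_add_norm_sq_of_inner_eq_zero z w
      ((Submodule.mem_orthogonal _ _).1 hw z hz)
    simpa [sq] using this
  have hdiff : ∀ k l, k ≤ l → p l - p k ∈ (K k)ᗮ := by
    intro k l hkl
    have h1 : p l - p k = (x - p k) - (x - p l) := by abel
    rw [h1]
    exact Submodule.sub_mem _ (hort k) (Submodule.orthogonal_le (hmono hkl) (hort l))
  have hnd : ∀ k l, k ≤ l → ‖p l‖ ^ 2 = ‖p k‖ ^ 2 + ‖p l - p k‖ ^ 2 := by
    intro k l hkl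
    have := hpyth k (p k) (hpK k) _ (hdiff k l hkl)
    rwa [add_sub_cancel] at this
  have hx : ∀ k, ‖x‖ ^ 2 = ‖p k‖ ^ 2 + ‖x - p k‖ ^ 2 := by
    intro k
    have := hpyth k (p k) (hpK k) _ (hort k)
    rwa [add_sub_cancel] at this
  -- pigeonhole
  have hpig : ∃ j < m, ‖p (2 * (j + 1))‖ ^ 2 - ‖p (2 * j)‖ ^ 2 ≤ ‖x‖ ^ 2 / m := by
    by_contra hcon
    push Not at hcon
    have hm' : (0 : ℝ) < m := by exact_mod_cast hm
    have h1 : ∑ j ∈ Finset.range m, (‖x‖ ^ 2 / m) <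
        ∑ j ∈ Finset.range m, (‖p (2 * (j + 1))‖ ^ 2 - ‖p (2 * j)‖ ^ 2) :=
      Finset.sum_lt_sum_of_nonempty (by simpa using hm.ne')
        (fun j hj => hcon j (Finset.mem_range.1 hj))
    rw [Finset.sum_range_sub (fun j => ‖p (2 * j)‖ ^ 2)] at h1
    simp only [Finset.sum_const, Finset.card_range, nsmul_eq_mul] at h1
    rw [mul_div_cancel₀ _ hm'.ne'] at h1
    have h2 := hx (2 * m)
    have h3 := sq_nonneg ‖x - p (2 * m)‖
    have h4 := sq_nonneg ‖p (2 * 0)‖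
    linarith
  obtain ⟨j, hj, hjx⟩ := hpig
  have hSsymm : ∀ a b, inner ℂ (S a) b = inner ℂ a (S b) := fun a b => hS.isSymmetric a b
  refine ⟨p (2 * j + 1), x - p (2 * j + 1), by abel, hmono (by lia) (hpK _), ?_, hx _, ?_⟩
  · exact Submodule.orthogonal_le (hmono (Nat.zero_le _) : K 0 ≤ _) (hort (2 * j + 1))
  · set u := p (2 * j + 1) with hu
    set q := p (2 * j + 2) - u with hq
    set q' := u - p (2 * j) with hq'
    have h1 : inner ℂ (S u) (x - u) = inner ℂ (S u) q := by
      have h2 : x - u = (x - p (2 * j + 2)) + q := by rw [hq]; abel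
      have h3 : inner ℂ (S u) (x - p (2 * j + 2)) = 0 :=
        (Submodule.mem_orthogonal _ _).1 (hort (2 * j + 2)) _ (hSK _ _ (hpK (2 * j + 1)))
      rw [h2, inner_add_right, h3, zero_add]
    have h4 : inner ℂ (S u) q = inner ℂ (S q') q := by
      have h5 : u = p (2 * j) + q' := by rw [hq']; abel
      have h6 : inner ℂ (S (p (2 * j))) q = 0 :=
        (Submodule.mem_orthogonal _ _).1 (hdiff (2 * j + 1) (2 * j + 2) (by lia)) _
          (hSK _ _ (hpK (2 * j)))
      conv_lhs => rw [h5]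
      rw [map_add, inner_add_left, h6, zero_add]
    rw [h1, h4]
    have h7 : ‖inner ℂ (S q') q‖ ≤ ‖S‖ * (‖q'‖ * ‖q‖) := by
      refine (norm_inner_le_norm _ _).trans ?_
      rw [← mul_assoc]
      gcongr
      exact S.le_opNorm q'
    have h8 := hnd (2 * j) (2 * j + 1) (by lia)
    have h9 := hnd (2 * j + 1) (2 * j + 2) (by lia)
    have h10 : 2 * (‖q'‖ * ‖q‖) ≤ ‖x‖ ^ 2 / m := by
      have h11 : ‖q'‖ ^ 2 + ‖q‖ ^ 2 ≤ ‖x‖ ^ 2 / m := by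
        have : 2 * (j + 1) = 2 * j + 2 := by ring
        rw [this] at hjx
        linarith
      nlinarith [sq_nonneg (‖q'‖ - ‖q‖)]
    calc 2 * ‖inner ℂ (S q') q‖ ≤ ‖S‖ * (2 * (‖q'‖ * ‖q‖)) := by linarith
      _ ≤ _ := by gcongr

/-- The adjoint is small off a finite dimensional space. -/
theorem exists_finite_dim {A : H →L[ℂ] H} {β : ℝ} (hA : essNorm A < β) :
    ∃ (β₁ : ℝ) (F : Submodule ℂ H), 0 ≤ β₁ ∧ β₁ < β ∧ FiniteDimensional ℂ F ∧
      ∀ v ∈ Fᗮ, ‖star A v‖ ≤ β₁ * ‖v‖ := by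
  have hne : {K : H →L[ℂ] H | IsCompactOperator ⇑K}.Nonempty := ⟨0, isCompactOperator_zero⟩
  obtain ⟨C, hC, hAC⟩ := (Metric.infDist_lt_iff hne).1 hA
  rw [dist_eq_norm] at hAC
  set b := ‖A - C‖ with hb
  have hδ : 0 < (β - b) / 2 := by linarith
  obtain ⟨s, hs, hnet⟩ := exists_net hC hδ
  refine ⟨(b + β) / 2, Submodule.span ℂ s, ?_, by linarith,
    FiniteDimensional.span_of_finite ℂ hs, fun v hv => ?_⟩
  · have : 0 ≤ b := norm_nonneg _
    linarith
  · have h1 : star A v = star (A - C) v + star C v := by simp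
    have h2 : ‖star (A - C) v‖ ≤ b * ‖v‖ := by
      refine (star (A - C)).le_of_opNorm_le ?_ v
      rw [norm_star]
    have h3 : ‖star C v‖ ≤ (β - b) / 2 * ‖v‖ := by
      set z := star C v with hz
      obtain ⟨y, hy, h4⟩ := hnet z
      have h5 : ‖z‖ ^ 2 = ‖inner ℂ v (C z)‖ := by
        have h6 : inner ℂ v (C z) = inner ℂ (star C v) z := by
          rw [star_eq_adjoint, ContinuousLinearMap.adjoint_inner_left]
        rw [h6, ← hz, inner_self_eq_norm_sq_to_K]
        simp
      have h7 : inner ℂ v (C z) = inner ℂ v (C z - (‖z‖ : ℂ) • y) := by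
        have h8 : inner ℂ v y = 0 :=
          Submodule.inner_left_of_mem_orthogonal (Submodule.subset_span hy) hv
        rw [inner_sub_right, inner_smul_right, h8, mul_zero, sub_zero]
      have h9 : ‖z‖ ^ 2 ≤ ‖v‖ * ((β - b) / 2 * ‖z‖) := by
        rw [h5, h7]
        refine (norm_inner_le_norm _ _).trans ?_
        gcongr
      rcases eq_or_lt_of_le (norm_nonneg z) with h0 | h0
      · rw [← h0]; positivity
      · have : ‖z‖ * ‖z‖ ≤ ((β - b) / 2 * ‖v‖) * ‖z‖ := by nlinarith
        exact le_of_mul_le_mul_right this h0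
    rw [h1]
    refine (norm_add_le _ _).trans ?_
    linarith

end pinch

end ContinuousNest

namespace ContinuousNest

section step
variable {H : Type*} [NormedAddCommGroup H] [InnerProductSpace ℂ H] [CompleteSpace H]
variable (𝒩 : ContinuousNest H)

set_option maxHeartbeats 1600000 in
theorem exists_step {A : H →L[ℂ] H} (hA : A ∈ 𝒩.alg) {s t : ℝ} (hs : s ∈ Icc (0 : ℝ) 1)
    (ht : t ∈ Icc (0 : ℝ) 1) (hst : s ≤ t) (hAt : A * 𝒩.N t = A) {β : ℝ}
    (hβ : ‖A * 𝒩.N s‖ < β) (hess : essNorm A < β) :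
    ∃ D : H →L[ℂ] H, D ∈ 𝒩.alg ∧ IsCompactOperator ⇑D ∧ D * 𝒩.N s = 0 ∧ D * 𝒩.N t = D ∧
      ‖A - D‖ < β := by
  obtain ⟨β₁, F, hβ₁0, hβ₁, hF, hFv⟩ := exists_finite_dim hess
  set P := 𝒩.N s with hP
  set E := 𝒩.N t - 𝒩.N s with hE
  have hPs : star P = P := (𝒩.selfAdjoint s hs).star_eq
  have hNts : star (𝒩.N t) = 𝒩.N t := (𝒩.selfAdjoint t ht).star_eq
  have hEs : star E = E := by rw [hE, star_sub, hNts, hPs]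
  have hPP : P * P = P := (𝒩.idem s hs).eq
  have hNN : 𝒩.N t * 𝒩.N t = 𝒩.N t := (𝒩.idem t ht).eq
  have hNP : 𝒩.N t * P = P := 𝒩.N_mul_of_le hs ht hst
  have hPN : P * 𝒩.N t = P := 𝒩.mul_N_of_le hs ht hst
  have hEP : E * P = 0 := by rw [hE, sub_mul, hNP, hPP, sub_self]
  have hPE : P * E = 0 := by rw [hE, mul_sub, hPN, hPP, sub_self]
  have hEN : E * 𝒩.N t = E := by rw [hE, sub_mul, hNN, hPN]
  have hAPE : A = A * P + A * E := by rw [hE, ← mul_add, add_sub_cancel, hAt]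
  have hEnorm : ∀ z, ‖E z‖ ^ 2 = ‖𝒩.N t z‖ ^ 2 - ‖P z‖ ^ 2 := fun z => 𝒩.norm_N_sub_sq hs ht hst z
  have hEle : ∀ z, ‖E z‖ ≤ ‖z‖ := by
    intro z
    refine le_of_sq_le_sq ?_ (norm_nonneg _)
    have h1 := hEnorm z
    have h2 : ‖𝒩.N t z‖ ≤ 1 * ‖z‖ := (𝒩.N t).le_of_opNorm_le (𝒩.norm_N_le ht) z
    have h3 := norm_nonneg (𝒩.N t z)
    have := sq_nonneg ‖P z‖
    nlinarith
  have hEa : E ∈ 𝒩.alg := 𝒩.sub_mem_alg (𝒩.N_mem_alg ht) (𝒩.N_mem_alg hs)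
  set M := ‖A‖ with hM
  have hM0 : 0 ≤ M := norm_nonneg _
  set b := max ‖A * P‖ β₁ with hb
  have hb0 : 0 ≤ b := le_max_of_le_right hβ₁0
  have hbβ : b < β := max_lt hβ hβ₁
  set η := β ^ 2 - b ^ 2 with hη
  have hη0 : 0 < η := by rw [hη]; nlinarith
  obtain ⟨m, hm⟩ := exists_nat_gt (8 * M ^ 2 / η)
  have hm0 : (0 : ℝ) < m := lt_of_le_of_lt (by positivity) hm
  have hMm : M ^ 2 / m ≤ η / 8 := by
    rw [div_lt_iff₀ hη0] at hm
    rw [div_le_iff₀ hm0]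
    linarith
  let S : H →L[ℂ] H := A * P * star A
  have hS : IsSelfAdjoint S := by
    change star S = S
    simp only [S, star_mul, star_star, hPs, mul_assoc]
  have hPn : ‖P‖ ≤ 1 := 𝒩.norm_N_le hs
  have hSn : ‖S‖ ≤ M ^ 2 := by
    calc ‖S‖ ≤ ‖A * P‖ * ‖star A‖ := norm_mul_le _ _
      _ ≤ (‖A‖ * ‖P‖) * ‖star A‖ := by gcongr; exact norm_mul_le _ _
      _ ≤ (M * 1) * M := by rw [norm_star]; gcongr
      _ = M ^ 2 := by ring
  obtain ⟨G, hG, hpin⟩ := exists_pinch S hS F m (by exact_mod_cast hm0)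
  set c := min 1 (η / (24 * (M ^ 2 + 1))) with hc
  have hc0 : 0 < c := by positivity
  have hc1 : c ≤ 1 := min_le_left _ _
  have hcM : 3 * c * M ^ 2 ≤ η / 8 := by
    have h1 : c ≤ η / (24 * (M ^ 2 + 1)) := min_le_right _ _
    rw [le_div_iff₀ (by positivity)] at h1
    nlinarith
  set ε := min 1 (η / (8 * (4 * M + 1))) with hε
  have hε0 : 0 < ε := by positivity
  have hε1 : ε ≤ 1 := min_le_left _ _
  have hεM : 4 * ε * M + ε ≤ η / 8 := by
    have h1 : ε ≤ η / (8 * (4 * M + 1)) := min_le_right _ _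
    rw [le_div_iff₀ (by positivity)] at h1
    linarith
  have hGc : IsCompactOperator ⇑(G.starProjection : H →L[ℂ] H) := by
    have : IsCompactOperator ⇑(G.subtypeL : G →L[ℂ] H) :=
      isCompactOperator_of_locallyCompactSpace_rng G.subtypeL
    exact this.comp_clm G.orthogonalProjectionOnto
  obtain ⟨R, hRa, hRc, hRn, hRT⟩ := 𝒩.exists_kill
    (isCompact_mul_left hGc (E * star A)) hc0 hc1 hε0
  set L := star (1 - R) with hL
  have hLn : ‖L‖ ≤ 1 + c := by rw [hL, norm_star]; exact hRn
  refine ⟨A * E * R * E, ?_, ?_, ?_, ?_, ?_⟩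
  · exact 𝒩.mul_mem_alg (𝒩.mul_mem_alg (𝒩.mul_mem_alg hA hEa) hRa) hEa
  · exact isCompact_mul_right (isCompact_mul_left hRc _) _
  · rw [mul_assoc, hEP, mul_zero]
  · rw [mul_assoc, hEN]
  have hEE : E * E = E := by
    have : E * E = E * 𝒩.N t - E * P := by rw [← mul_sub]
    rw [this, hEN, hEP, sub_zero]
  have hADs : A - A * E * R * E = A * P + A * E * (1 - R) * E := by
    have h1 : A * E * (1 - R) * E = A * (E * E) - A * E * R * E := by noncomm_ring
    rw [h1, hEE, ← add_sub_assoc, ← hAPE]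
  have hstar : star (A - A * E * R * E) = P * star A + E * (L * (E * star A)) := by
    rw [hADs, star_add, star_mul, star_mul, star_mul, star_mul, hPs, hEs]
  set κ := Real.sqrt (b ^ 2 + 3 * η / 8) with hκ
  have hκβ : κ < β := by
    rw [hκ, Real.sqrt_lt' (by linarith)]
    linarith
  refine lt_of_le_of_lt ?_ hκβ
  rw [← norm_star, hstar]
  refine ContinuousLinearMap.opNorm_le_bound _ (Real.sqrt_nonneg _) fun x => ?_
  refine le_of_sq_le_sq ?_ (by positivity)
  rw [mul_pow, hκ, Real.sq_sqrt (by positivity)]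
  obtain ⟨u, v, hxuv, huG, hvF, hnx, hcross⟩ := hpin x
  have hgoal : (P * star A + E * (L * (E * star A))) x
      = P (star A x) + E (L (E (star A x))) := by simp
  rw [hgoal]
  -- orthogonality
  have horth : ‖P (star A x) + E (L (E (star A x)))‖ ^ 2
      = ‖P (star A x)‖ ^ 2 + ‖E (L (E (star A x)))‖ ^ 2 := by
    have h0 : inner ℂ (P (star A x)) (E (L (E (star A x)))) = 0 := by
      have h1 : inner ℂ (P (star A x)) (E (L (E (star A x))))
          = inner ℂ (star A x) (P (E (L (E (star A x))))) := (𝒩.selfAdjoint s hs).isSymmetric _ _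
      have h2 : P (E (L (E (star A x)))) = 0 := by
        change (P * E) _ = 0
        rw [hPE]; simp
      rw [h1, h2, inner_zero_right]
    have := norm_add_sq_eq_norm_sq_add_norm_sq_of_inner_eq_zero _ _ h0
    simpa [sq] using this
  rw [horth]
  have hux : ‖u‖ ≤ ‖x‖ := by
    refine le_of_sq_le_sq ?_ (norm_nonneg _)
    have := sq_nonneg ‖v‖
    linarith
  have hvx : ‖v‖ ≤ ‖x‖ := by
    refine le_of_sq_le_sq ?_ (norm_nonneg _)
    have := sq_nonneg ‖u‖
    linarith
  -- first term
  have hPu : ‖P (star A u)‖ ≤ b * ‖u‖ := by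
    have h1 : P (star A u) = star (A * P) u := by rw [star_mul, hPs]; rfl
    rw [h1]
    refine (star (A * P)).le_of_opNorm_le ?_ u
    rw [norm_star]
    exact le_max_left _ _
  have hPx : ‖P (star A x)‖ ^ 2 ≤ b ^ 2 * ‖u‖ ^ 2 + M ^ 2 * (‖x‖ ^ 2 / m)
      + ‖P (star A v)‖ ^ 2 := by
    have h1 : P (star A x) = P (star A u) + P (star A v) := by
      conv_lhs => rw [hxuv, map_add, map_add]
    have h2 : inner ℂ (P (star A u)) (P (star A v)) = inner ℂ (S u) v := by
      have h3 : inner ℂ (P (star A u)) (P (star A v)) = inner ℂ (P (P (star A u))) (star A v) :=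
        ((𝒩.selfAdjoint s hs).isSymmetric _ _).symm
      have h4 : P (P (star A u)) = P (star A u) := by
        change (P * P) (star A u) = _
        rw [hPP]
      rw [h3, h4, star_eq_adjoint, ContinuousLinearMap.adjoint_inner_right]
      rfl
    rw [h1, @norm_add_sq ℂ, h2]
    have h5 : RCLike.re (inner ℂ (S u) v) ≤ ‖inner ℂ (S u) v‖ := RCLike.re_le_norm _
    have h6 : ‖P (star A u)‖ ^ 2 ≤ b ^ 2 * ‖u‖ ^ 2 := by
      rw [← mul_pow]; gcongr
    have h7 : ‖S‖ * (‖x‖ ^ 2 / m) ≤ M ^ 2 * (‖x‖ ^ 2 / m) := by gcongr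
    linarith
  -- second term
  set τ := ‖E (star A v)‖ with hτ
  have hτ0 : 0 ≤ τ := norm_nonneg _
  have hτM : τ ≤ M * ‖x‖ := by
    have h1 : ‖star A v‖ ≤ M * ‖v‖ := (star A).le_of_opNorm_le (by rw [norm_star]) v
    have h2 := hEle (star A v)
    have h3 : M * ‖v‖ ≤ M * ‖x‖ := by gcongr
    linarith
  have hPv : ‖P (star A v)‖ ^ 2 + τ ^ 2 ≤ b ^ 2 * ‖v‖ ^ 2 := by
    have h1 := hEnorm (star A v)
    have h2 : 𝒩.N t (star A v) = star A v := by
      have h3 : 𝒩.N t * star A = star A := by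
        have := congrArg star hAt
        rwa [star_mul, hNts] at this
      exact congrArg (fun B : H →L[ℂ] H => B v) h3
    rw [h2] at h1
    have h4 : ‖star A v‖ ≤ b * ‖v‖ := (hFv v hvF).trans (by gcongr; exact le_max_right _ _)
    have h5 : ‖star A v‖ ^ 2 ≤ b ^ 2 * ‖v‖ ^ 2 := by
      rw [← mul_pow]; gcongr
    linarith
  have hLx : ‖E (L (E (star A x)))‖ ≤ ε * ‖x‖ + (1 + c) * τ := by
    refine (hEle _).trans ?_
    have h1 : L (E (star A x)) = L (E (star A u)) + L (E (star A v)) := by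
      conv_lhs => rw [hxuv, map_add, map_add, map_add]
    have h2 : ‖L (E (star A u))‖ ≤ ε * ‖x‖ := by
      have h3 := hRT u
      have h4 : (E * star A * G.starProjection) u = E (star A u) := by
        change E (star A (G.starProjection u)) = _
        rw [Submodule.starProjection_eq_self_iff.2 huG]
      rw [h4] at h3
      exact h3.trans (by gcongr)
    have h5 : ‖L (E (star A v))‖ ≤ (1 + c) * τ := L.le_of_opNorm_le hLn _
    rw [h1]
    exact (norm_add_le _ _).trans (add_le_add h2 h5)
  have hLx2 : ‖E (L (E (star A x)))‖ ^ 2 ≤ τ ^ 2 + (3 * c * M ^ 2 + (4 * ε * M + ε)) * ‖x‖ ^ 2 := by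
    have h1 : ‖E (L (E (star A x)))‖ ^ 2 ≤ (ε * ‖x‖ + (1 + c) * τ) ^ 2 := by gcongr
    have h2 : τ ^ 2 ≤ M ^ 2 * ‖x‖ ^ 2 := by rw [← mul_pow]; gcongr
    have h3 : τ * ‖x‖ ≤ M * ‖x‖ ^ 2 := by nlinarith [norm_nonneg x]
    have h4 : (2 * c + c ^ 2) * τ ^ 2 ≤ 3 * c * (M ^ 2 * ‖x‖ ^ 2) := by
      have : 2 * c + c ^ 2 ≤ 3 * c := by nlinarith
      gcongr
    have h5 : 2 * ε * (1 + c) * (τ * ‖x‖) ≤ 4 * ε * (M * ‖x‖ ^ 2) := by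
      have : 2 * ε * (1 + c) ≤ 4 * ε := by nlinarith
      gcongr
    have h6 : ε ^ 2 * ‖x‖ ^ 2 ≤ ε * ‖x‖ ^ 2 := by
      have : ε ^ 2 ≤ ε := by nlinarith
      gcongr
    nlinarith
  have hfin1 : M ^ 2 * (‖x‖ ^ 2 / m) ≤ η / 8 * ‖x‖ ^ 2 := by
    have : M ^ 2 * (‖x‖ ^ 2 / m) = M ^ 2 / m * ‖x‖ ^ 2 := by ring
    rw [this]; gcongr
  have hfin2 : (3 * c * M ^ 2 + (4 * ε * M + ε)) * ‖x‖ ^ 2 ≤ (η / 8 + η / 8) * ‖x‖ ^ 2 := by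
    gcongr
  have hfin3 : b ^ 2 * ‖x‖ ^ 2 = b ^ 2 * ‖u‖ ^ 2 + b ^ 2 * ‖v‖ ^ 2 := by rw [hnx]; ring
  linarith

end step

end ContinuousNest

namespace ContinuousNest

section assembly
variable {H : Type*} [NormedAddCommGroup H] [InnerProductSpace ℂ H] [CompleteSpace H]
variable (𝒩 : ContinuousNest H)

theorem isCompact_zero' : IsCompactOperator ⇑(0 : H →L[ℂ] H) := by
  have := isCompactOperator_zero (M₁ := H) (M₂ := H)
  simpa using this

theorem essNorm_le_of_isCompact {A B : H →L[ℂ] H} (h : IsCompactOperator ⇑(A - B)) :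
    essNorm A ≤ essNorm B := by
  unfold essNorm
  refine (Metric.le_infDist ⟨0, isCompact_zero'⟩).2 ?_
  intro K hK
  have hK' : IsCompactOperator ⇑(K + (A - B)) := by
    have := IsCompactOperator.add (show IsCompactOperator ⇑K from hK) h
    simpa using this
  refine (Metric.infDist_le_dist_of_mem (show K + (A - B) ∈ _ from hK')).trans ?_
  rw [dist_eq_norm, dist_eq_norm]
  apply le_of_eq
  congr 1
  abel

theorem essNorm_le_norm (A : H →L[ℂ] H) : essNorm A ≤ ‖A‖ := by
  unfold essNorm
  refine (Metric.infDist_le_dist_of_mem (show (0 : H →L[ℂ] H) ∈ _ from isCompact_zero')).trans ?_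
  rw [dist_zero_right]

theorem norm_compress_le {t : ℝ} (ht : t ∈ Icc (0 : ℝ) 1) (A : H →L[ℂ] H) :
    ‖𝒩.N t * A * 𝒩.N t‖ ≤ ‖A‖ := by
  have h := 𝒩.norm_N_le ht
  calc ‖𝒩.N t * A * 𝒩.N t‖ ≤ ‖𝒩.N t‖ * ‖A‖ * ‖𝒩.N t‖ :=
        (norm_mul_le _ _).trans (by gcongr; exact norm_mul_le _ _)
    _ ≤ 1 * ‖A‖ * 1 := by gcongr
    _ = ‖A‖ := by ring

/-- The cut points. -/
noncomputable def cut (m : ℕ) : ℝ := 1 - 1 / ((m : ℝ) + 1)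

theorem cut_zero : cut 0 = 0 := by simp [cut]

theorem cut_mono : Monotone cut := by
  intro m n h
  unfold cut
  have : (1 : ℝ) / ((n : ℝ) + 1) ≤ 1 / ((m : ℝ) + 1) := Nat.one_div_le_one_div h
  linarith

theorem cut_lt (m : ℕ) : cut m < 1 := by
  unfold cut
  have : (0 : ℝ) < 1 / ((m : ℝ) + 1) := by positivity
  linarith

theorem cut_nonneg (m : ℕ) : 0 ≤ cut m := by
  rw [← cut_zero]; exact cut_mono (Nat.zero_le m)

theorem cut_mem (m : ℕ) : cut m ∈ Icc (0 : ℝ) 1 := ⟨cut_nonneg m, (cut_lt m).le⟩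

theorem cut_tendsto : Tendsto cut atTop (𝓝 1) := by
  have := (tendsto_one_div_add_atTop_nhds_zero_nat (𝕜 := ℝ)).const_sub 1
  rw [sub_zero] at this
  exact this

/-- The property of the recursively constructed operators. -/
def Good (X : H →L[ℂ] H) (β : ℝ) (m : ℕ) (Y : H →L[ℂ] H) : Prop :=
  Y ∈ 𝒩.alg ∧ Y * 𝒩.N (cut m) = Y ∧ IsCompactOperator ⇑(X * 𝒩.N (cut m) - Y) ∧ ‖Y‖ < β

theorem good_step {X : H →L[ℂ] H} (hX : X ∈ 𝒩.alg) {β : ℝ}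
    (hβ : ∀ t : ℝ, 0 ≤ t → t < 1 → essNorm (𝒩.N t * X * 𝒩.N t) < β) (m : ℕ)
    (Y : H →L[ℂ] H) (hY : 𝒩.Good X β m Y) :
    ∃ Z, 𝒩.Good X β (m + 1) Z ∧ Z * 𝒩.N (cut m) = Y := by
  obtain ⟨hYa, hYP, hYc, hYn⟩ := hY
  have hs := cut_mem m
  have ht := cut_mem (m + 1)
  have hst : cut m ≤ cut (m + 1) := cut_mono (Nat.le_succ m)
  set P := 𝒩.N (cut m) with hP
  set Q := 𝒩.N (cut (m + 1)) with hQ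
  have hPP : P * P = P := (𝒩.idem _ hs).eq
  have hQQ : Q * Q = Q := (𝒩.idem _ ht).eq
  have hQP : Q * P = P := 𝒩.N_mul_of_le hs ht hst
  have hPQ : P * Q = P := 𝒩.mul_N_of_le hs ht hst
  have hYQ : Y * Q = Y := by rw [← hYP, mul_assoc, hPQ]
  have hAa : Y + X * (Q - P) ∈ 𝒩.alg :=
    𝒩.add_mem_alg hYa (𝒩.mul_mem_alg hX (𝒩.sub_mem_alg (𝒩.N_mem_alg ht) (𝒩.N_mem_alg hs)))
  have hAQ : (Y + X * (Q - P)) * Q = Y + X * (Q - P) := by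
    rw [add_mul, hYQ, mul_assoc, sub_mul, hQQ, hPQ]
  have hAP : (Y + X * (Q - P)) * P = Y := by
    rw [add_mul, hYP, mul_assoc, sub_mul, hQP, hPP, sub_self, mul_zero, add_zero]
  have hc : X * Q - (Y + X * (Q - P)) = X * P - Y := by rw [mul_sub]; abel
  have hess : essNorm (Y + X * (Q - P)) < β := by
    have h1 : essNorm (Y + X * (Q - P)) ≤ essNorm (X * Q) := by
      apply essNorm_le_of_isCompact
      have h2 : Y + X * (Q - P) - X * Q = -(X * P - Y) := by rw [← hc]; abel
      rw [h2]
      have := IsCompactOperator.neg hYc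
      simpa using this
    have h3 : X * Q = Q * X * Q := 𝒩.mem_alg_iff.1 hX _ ht
    rw [h3] at h1
    exact h1.trans_lt (hβ _ (cut_nonneg _) (cut_lt _))
  obtain ⟨D, hDa, hDc, hDP, hDQ, hDn⟩ :=
    𝒩.exists_step hAa hs ht hst hAQ (by rw [← hP, hAP]; exact hYn) hess
  refine ⟨Y + X * (Q - P) - D, ⟨𝒩.sub_mem_alg hAa hDa, ?_, ?_, hDn⟩, ?_⟩
  · rw [← hQ, sub_mul, hAQ, hDQ]
  · have h1 : X * Q - (Y + X * (Q - P) - D) = (X * P - Y) + D := by rw [← hc]; abel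
    rw [← hQ, h1]
    have := IsCompactOperator.add hYc hDc
    simpa using this
  · rw [sub_mul, hAP, hDP, sub_zero]

theorem exists_approx {X : H →L[ℂ] H} (hX : X ∈ 𝒩.alg) {β : ℝ} (hβ0 : 0 < β)
    (hβ : ∀ t : ℝ, 0 ≤ t → t < 1 → essNorm (𝒩.N t * X * 𝒩.N t) < β) :
    ∃ K, (K ∈ 𝒩.alg ∧ ∀ t : ℝ, 0 ≤ t → t < 1 → IsCompactOperator ⇑(K * 𝒩.N t)) ∧
      ‖X - K‖ ≤ β := by
  have h0 : 𝒩.Good X β 0 0 := by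
    refine ⟨𝒩.zero_mem_alg, zero_mul _, ?_, by simpa using hβ0⟩
    rw [cut_zero, 𝒩.N_zero, mul_zero, sub_zero]
    exact isCompact_zero'
  choose! f hf1 hf2 using 𝒩.good_step hX hβ
  let Y : ℕ → H →L[ℂ] H := fun n => Nat.rec 0 f n
  have hYs : ∀ n, Y (n + 1) = f n (Y n) := fun n => rfl
  have hG : ∀ n, 𝒩.Good X β n (Y n) := by
    intro n
    induction n with
    | zero => exact h0
    | succ n ih => rw [hYs]; exact hf1 n _ ih
  have hstep : ∀ n, Y (n + 1) * 𝒩.N (cut n) = Y n := fun n => by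
    rw [hYs]; exact hf2 n _ (hG n)
  have hYP : ∀ m n, m ≤ n → Y n * 𝒩.N (cut m) = Y m := by
    intro m n h
    induction n, h using Nat.le_induction with
    | base => exact (hG m).2.1
    | succ n hmn ih =>
      have h1 : 𝒩.N (cut n) * 𝒩.N (cut m) = 𝒩.N (cut m) :=
        𝒩.N_mul_of_le (cut_mem m) (cut_mem n) (cut_mono hmn)
      rw [← h1, ← mul_assoc, hstep, ih]
  have hPx : ∀ x : H, Tendsto (fun n => 𝒩.N (cut n) x) atTop (𝓝 x) := by
    intro x
    have h1 := 𝒩.contOn x 1 ⟨zero_le_one, le_rfl⟩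
    have h2 : Tendsto cut atTop (𝓝[Icc (0 : ℝ) 1] 1) :=
      tendsto_nhdsWithin_iff.2 ⟨cut_tendsto, Eventually.of_forall cut_mem⟩
    have h3 := Tendsto.comp h1 h2
    simpa [𝒩.N_one, Function.comp_def] using h3
  have hdiff : ∀ x : H, ∀ m n, m ≤ n →
      ‖Y n x - Y m x‖ ≤ β * ‖𝒩.N (cut n) x - 𝒩.N (cut m) x‖ := by
    intro x m n h
    have h1 : Y n x - Y m x = Y n (𝒩.N (cut n) x - 𝒩.N (cut m) x) := by
      rw [map_sub]
      have h2 : Y n (𝒩.N (cut n) x) = Y n x :=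
        congrArg (fun B : H →L[ℂ] H => B x) (hYP n n le_rfl)
      have h3 : Y n (𝒩.N (cut m) x) = Y m x :=
        congrArg (fun B : H →L[ℂ] H => B x) (hYP m n h)
      rw [h2, h3]
    rw [h1]
    exact (Y n).le_of_opNorm_le (hG n).2.2.2.le _
  have hcau : ∀ x : H, ∃ y, Tendsto (fun n => Y n x) atTop (𝓝 y) := by
    intro x
    apply cauchySeq_tendsto_of_complete
    have h1 := (hPx x).cauchySeq
    rw [Metric.cauchySeq_iff'] at h1 ⊢
    intro ε hε
    obtain ⟨M, hM⟩ := h1 (ε / β) (div_pos hε hβ0)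
    refine ⟨M, fun n hn => ?_⟩
    rw [dist_eq_norm]
    refine (hdiff x M n hn).trans_lt ?_
    have := hM n hn
    rw [dist_eq_norm, lt_div_iff₀ hβ0] at this
    linarith
  choose g hg using hcau
  have hgle : ∀ x, ‖g x‖ ≤ β * ‖x‖ := by
    intro x
    exact le_of_tendsto (hg x).norm
      (Eventually.of_forall fun n => (Y n).le_of_opNorm_le (hG n).2.2.2.le x)
  let L : H →ₗ[ℂ] H :=
    { toFun := g
      map_add' := fun x y => by
        refine tendsto_nhds_unique (hg (x + y)) ?_
        simpa using (hg x).add (hg y)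
      map_smul' := fun c x => by
        refine tendsto_nhds_unique (hg (c • x)) ?_
        simpa using (hg x).const_smul c }
  let Z : H →L[ℂ] H := L.mkContinuous β hgle
  have hZ : ∀ x, Tendsto (fun n => Y n x) atTop (𝓝 (Z x)) := hg
  have hZn : ‖Z‖ ≤ β := L.mkContinuous_norm_le hβ0.le hgle
  have hZP : ∀ m, Z * 𝒩.N (cut m) = Y m := by
    intro m
    ext x
    refine tendsto_nhds_unique (hZ (𝒩.N (cut m) x)) ?_
    refine tendsto_const_nhds.congr' ?_
    filter_upwards [eventually_ge_atTop m] with n hn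
    exact (congrArg (fun B : H →L[ℂ] H => B x) (hYP m n hn)).symm
  have hZa : Z ∈ 𝒩.alg := by
    rw [mem_alg_iff]
    intro t ht
    ext x
    refine tendsto_nhds_unique (hZ (𝒩.N t x)) ?_
    have h1 : Tendsto (fun n => 𝒩.N t (Y n (𝒩.N t x))) atTop (𝓝 (𝒩.N t (Z (𝒩.N t x)))) :=
      ((𝒩.N t).continuous.tendsto _).comp (hZ (𝒩.N t x))
    refine h1.congr fun n => ?_
    exact (congrArg (fun B : H →L[ℂ] H => B x) (𝒩.mem_alg_iff.1 (hG n).1 t ht)).symm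
  refine ⟨X - Z, ⟨𝒩.sub_mem_alg hX hZa, ?_⟩, by rwa [sub_sub_cancel]⟩
  intro t ht0 ht1
  obtain ⟨m, hm⟩ := (cut_tendsto.eventually (eventually_gt_nhds ht1)).exists
  have h1 : 𝒩.N (cut m) * 𝒩.N t = 𝒩.N t := 𝒩.N_mul_of_le ⟨ht0, ht1.le⟩ (cut_mem m) hm.le
  have h2 : (X - Z) * 𝒩.N t = (X * 𝒩.N (cut m) - Y m) * 𝒩.N t := by
    rw [← hZP m, ← sub_mul, mul_assoc, h1]
  rw [h2]
  exact isCompact_mul_right (hG m).2.2.1 _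

end assembly

end ContinuousNest
/-- Quotient norm formula for
`K₋ = {X ∈ Alg 𝒩 : X N(t) is compact for every t < 1}`:
`dist(X, K₋) = sup_{0 ≤ t < 1} ‖N(t) X N(t)‖ₑ`. -/
theorem stmt8 {H : Type*} [NormedAddCommGroup H] [InnerProductSpace ℂ H] [CompleteSpace H]
    [TopologicalSpace.SeparableSpace H] (hH : ¬FiniteDimensional ℂ H)
    (𝒩 : ContinuousNest H) (X : H →L[ℂ] H) (hX : X ∈ 𝒩.alg) :
    Metric.infDist X
        {K | K ∈ 𝒩.alg ∧ ∀ t : ℝ, 0 ≤ t → t < 1 → IsCompactOperator ⇑(K * 𝒩.N t)} =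
      ⨆ t : Ico (0 : ℝ) 1, essNorm (𝒩.N t.1 * X * 𝒩.N t.1) := by
  have hbdd : BddAbove (range fun t : Ico (0 : ℝ) 1 => essNorm (𝒩.N t.1 * X * 𝒩.N t.1)) := by
    refine ⟨‖X‖, ?_⟩
    rintro _ ⟨t, rfl⟩
    exact (ContinuousNest.essNorm_le_norm _).trans
      (𝒩.norm_compress_le ⟨t.2.1, t.2.2.le⟩ X)
  haveI : Nonempty (Ico (0 : ℝ) 1) := ⟨⟨0, le_rfl, zero_lt_one⟩⟩
  apply le_antisymm
  · refine le_of_forall_gt_imp_ge_of_dense fun β hβ => ?_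
    have hlt : ∀ t : ℝ, 0 ≤ t → t < 1 → essNorm (𝒩.N t * X * 𝒩.N t) < β := fun t h0 h1 =>
      (le_ciSup hbdd ⟨t, h0, h1⟩).trans_lt hβ
    have hβ0 : 0 < β := lt_of_le_of_lt Metric.infDist_nonneg (hlt 0 le_rfl zero_lt_one)
    obtain ⟨K, hK, hKn⟩ := 𝒩.exists_approx hX hβ0 hlt
    have hK' : K ∈ {K : H →L[ℂ] H | K ∈ 𝒩.alg ∧ ∀ t : ℝ, 0 ≤ t → t < 1 → IsCompactOperator ⇑(K * 𝒩.N t)} := hK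
    refine (Metric.infDist_le_dist_of_mem hK').trans ?_
    rwa [dist_eq_norm]
  · refine ciSup_le fun t => ?_
    have hne : {K : H →L[ℂ] H | K ∈ 𝒩.alg ∧ ∀ t : ℝ, 0 ≤ t → t < 1 → IsCompactOperator ⇑(K * 𝒩.N t)}.Nonempty := by
      refine ⟨0, 𝒩.zero_mem_alg, fun s _ _ => ?_⟩
      rw [zero_mul]
      exact ContinuousNest.isCompact_zero'
    refine (Metric.le_infDist hne).2 ?_
    · rintro K ⟨hKa, hKc⟩
      have h1 : IsCompactOperator ⇑(𝒩.N t.1 * K * 𝒩.N t.1) := by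
        rw [mul_assoc]
        exact ContinuousNest.isCompact_mul_left (hKc t.1 t.2.1 t.2.2) _
      have h2 : essNorm (𝒩.N t.1 * X * 𝒩.N t.1)
          ≤ dist (𝒩.N t.1 * X * 𝒩.N t.1) (𝒩.N t.1 * K * 𝒩.N t.1) :=
        Metric.infDist_le_dist_of_mem h1
      refine h2.trans ?_
      rw [dist_eq_norm, dist_eq_norm, ← sub_mul, ← mul_sub]
      exact 𝒩.norm_compress_le ⟨t.2.1, t.2.2.le⟩ _
end

section
/- Let N be a continuous nest on a separable infinite-dimensional complex Hilbert space and let K₊ := {X ∈ Alg N : (I − N(t)) X is compact for every t > 0}. Then for every X ∈ Alg N the quotient norm is given by dist(X, K₊) = sup{‖(I − N(t)) X (I − N(t))‖_e : 0 < t ≤ 1}. -/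
open Set Filter Topology

variable {H : Type*} [NormedAddCommGroup H] [InnerProductSpace ℂ H] [CompleteSpace H]

set_option linter.unusedSectionVars false

namespace NestAux

variable {H : Type*} [NormedAddCommGroup H] [InnerProductSpace ℂ H] [CompleteSpace H]

lemma cpt_mul_left {K : H →L[ℂ] H} (hK : IsCompactOperator ⇑K) (A : H →L[ℂ] H) :
    IsCompactOperator ⇑(A * K) := hK.clm_comp A

lemma cpt_mul_right {K : H →L[ℂ] H} (hK : IsCompactOperator ⇑K) (A : H →L[ℂ] H) :
    IsCompactOperator ⇑(K * A) := hK.comp_clm A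

lemma cpt_add {K L : H →L[ℂ] H} (hK : IsCompactOperator ⇑K) (hL : IsCompactOperator ⇑L) :
    IsCompactOperator ⇑(K + L) := hK.add hL

lemma cpt_sub {K L : H →L[ℂ] H} (hK : IsCompactOperator ⇑K) (hL : IsCompactOperator ⇑L) :
    IsCompactOperator ⇑(K - L) := hK.sub hL

lemma cpt_zero : IsCompactOperator ⇑(0 : H →L[ℂ] H) := isCompactOperator_zero

lemma cpt_smul {K : H →L[ℂ] H} (hK : IsCompactOperator ⇑K) (c : ℂ) :
    IsCompactOperator ⇑(c • K) := hK.smul c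

lemma re_star_mul_self (Z : H →L[ℂ] H) (x : H) :
    (inner ℂ ((star Z * Z) x) x).re = ‖Z x‖ ^ 2 := by
  rw [ContinuousLinearMap.star_eq_adjoint, mul_apply_eq_comp,
    ContinuousLinearMap.adjoint_inner_left]
  exact inner_self_eq_norm_sq (𝕜 := ℂ) (Z x)

lemma re_mul_star_self (Z : H →L[ℂ] H) (x : H) :
    (inner ℂ ((Z * star Z) x) x).re = ‖star Z x‖ ^ 2 := by
  simpa using re_star_mul_self (star Z) x

lemma re_self (x : H) : (inner ℂ x x).re = ‖x‖ ^ 2 :=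
  inner_self_eq_norm_sq (𝕜 := ℂ) x

lemma re_inner_le (x y : H) : (inner ℂ x y).re ≤ ‖x‖ * ‖y‖ := re_inner_le_norm (𝕜 := ℂ) x y

lemma star_inner (Z : H →L[ℂ] H) (x y : H) : inner ℂ (Z x) y = inner ℂ x (star Z y) := by
  rw [ContinuousLinearMap.star_eq_adjoint, ContinuousLinearMap.adjoint_inner_right]

lemma exists_defect (Z : H →L[ℂ] H) (r : ℝ) (hr : ‖Z‖ < r) :
    ∃ D G : H →L[ℂ] H, D * G = 1 ∧ G * D = 1 ∧
      ∀ x, ‖D x‖ ^ 2 = r ^ 2 * ‖x‖ ^ 2 - ‖Z x‖ ^ 2 := by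
  set η : ℝ := r ^ 2 - ‖Z‖ ^ 2 with hη
  have hη0 : 0 < η := by nlinarith [norm_nonneg Z]
  set a : H →L[ℂ] H := ((r ^ 2 : ℝ) : ℂ) • 1 - star Z * Z with ha
  have hval : ∀ x, (inner ℂ (a x) x).re = r ^ 2 * ‖x‖ ^ 2 - ‖Z x‖ ^ 2 := by
    intro x
    have := re_star_mul_self Z x
    have h2 := re_self x
    rw [ha, sub_apply, inner_sub_left, Complex.sub_re, this,
      smul_apply, inner_smul_left, Complex.conj_ofReal, Complex.re_ofReal_mul,
      one_apply_eq_self, h2]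
  have hsa : IsSelfAdjoint a := by
    rw [ha]
    refine IsSelfAdjoint.sub ?_ (IsSelfAdjoint.star_mul_self Z)
    refine IsSelfAdjoint.smul ?_ (IsSelfAdjoint.one _)
    simp [isSelfAdjoint_iff]
  have hle : ((η : ℝ) : ℂ) • (1 : H →L[ℂ] H) ≤ a := by
    rw [ContinuousLinearMap.le_def, ContinuousLinearMap.isPositive_def']
    refine ⟨?_, fun x => ?_⟩
    · refine IsSelfAdjoint.sub hsa (IsSelfAdjoint.smul ?_ (IsSelfAdjoint.one _))
      simp [isSelfAdjoint_iff]
    · rw [ContinuousLinearMap.reApplyInnerSelf_apply]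
      change 0 ≤ (inner ℂ _ _).re
      have h2 := re_self x
      have h3 := hval x
      rw [sub_apply, inner_sub_left, Complex.sub_re, h3,
        smul_apply, inner_smul_left, Complex.conj_ofReal,
        Complex.re_ofReal_mul, one_apply_eq_self, h2]
      have h4 : ‖Z x‖ ^ 2 ≤ ‖Z‖ ^ 2 * ‖x‖ ^ 2 := by
        rw [← mul_pow]; exact pow_le_pow_left₀ (norm_nonneg _) (Z.le_opNorm x) 2
      rw [hη]; nlinarith
  have hpos : IsStrictlyPositive (((η : ℝ) : ℂ) • (1 : H →L[ℂ] H)) := by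
    have h0 : (0 : H →L[ℂ] H) ≤ ((η : ℝ) : ℂ) • (1 : H →L[ℂ] H) := by
      have : (0 : H →L[ℂ] H) ≤ η • (1 : H →L[ℂ] H) := smul_nonneg hη0.le zero_le_one
      rwa [Complex.coe_smul]
    refine IsUnit.isStrictlyPositive ?_ h0
    exact (isUnit_one).smul (Units.mk0 ((η : ℝ) : ℂ) (by exact_mod_cast hη0.ne'))
  have hu : IsUnit a := CStarAlgebra.isUnit_of_le _ hle hpos
  have hnn : 0 ≤ a := hpos.nonneg.trans hle
  have hus := (CFC.isUnit_sqrt_iff a hnn).2 hu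
  obtain ⟨u, hu'⟩ := hus
  refine ⟨CFC.sqrt a, ↑u⁻¹, ?_, ?_, fun x => ?_⟩
  · rw [← hu']; simp
  · rw [← hu']; simp
  · rw [← re_star_mul_self, (IsSelfAdjoint.of_nonneg (CFC.sqrt_nonneg a)).star_eq,
      CFC.sqrt_mul_sqrt_self a hnn, hval]

lemma exists_damp (k : H →L[ℂ] H) (hk : IsCompactOperator ⇑k) (γ : ℝ) (hγ : 0 < γ) :
    ∃ B : H →L[ℂ] H, IsCompactOperator ⇑(1 - B) ∧ (∀ x, ‖B x‖ ≤ ‖x‖) ∧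
      ∀ x, ‖k (B x)‖ ≤ γ * ‖x‖ := by
  set c : H →L[ℂ] H := (γ⁻¹ : ℂ) • k with hc
  have hcc : IsCompactOperator ⇑c := cpt_smul hk _
  have hu : IsUnit (1 + star c * c) := by
    refine CStarAlgebra.isUnit_of_le (1 : H →L[ℂ] H) ?_ ?_
    · exact le_add_of_nonneg_right (star_mul_self_nonneg c)
    · exact isUnit_one.isStrictlyPositive zero_le_one
  obtain ⟨u, hu⟩ := hu
  set B : H →L[ℂ] H := ↑u⁻¹ with hB
  have h1 : (1 + star c * c) * B = 1 := by rw [← hu]; simp [hB]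
  have key : ∀ x, ‖B x‖ ^ 2 + ‖c (B x)‖ ^ 2 ≤ ‖x‖ * ‖B x‖ := by
    intro x
    have h2 : x = B x + (star c * c) (B x) := by
      have := congrArg (fun T : H →L[ℂ] H => T x) h1
      simpa using this.symm
    have h3 := re_star_mul_self c (B x)
    have h4 := re_self (B x)
    have h5 := re_inner_le x (B x)
    have h6 : (inner ℂ x (B x)).re = ‖B x‖ ^ 2 + ‖c (B x)‖ ^ 2 := by
      conv_lhs => rw [h2]
      rw [inner_add_left, Complex.add_re, ← h2, h4, h3]
    linarith
  have hb : ∀ x, ‖B x‖ ≤ ‖x‖ := by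
    intro x
    have := key x
    by_contra hcon
    push Not at hcon
    nlinarith [norm_nonneg x, norm_nonneg (B x), sq_nonneg ‖c (B x)‖]
  refine ⟨B, ?_, hb, fun x => ?_⟩
  · have : 1 - B = star c * c * B := by
      rw [← h1]; noncomm_ring
    rw [this]
    exact cpt_mul_right (cpt_mul_left hcc _) _
  · have h7 : ‖c (B x)‖ ≤ ‖x‖ := by
      refine abs_le_of_sq_le_sq' ?_ (norm_nonneg x) |>.2
      nlinarith [key x, hb x, norm_nonneg x, norm_nonneg (B x)]
    have h8 : ‖c (B x)‖ = γ⁻¹ * ‖k (B x)‖ := by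
      rw [hc, smul_apply, norm_smul, norm_inv, Complex.norm_real,
        Real.norm_of_nonneg hγ.le]
    rw [h8] at h7
    rwa [inv_mul_le_iff₀ hγ] at h7

/-- if `W` is, modulo compacts, dominated by the defect of `Z`. -/
lemma ess_contr (Z W U K1 D G : H →L[ℂ] H) (r : ℝ) (hr : 0 ≤ r)
    (hDG : D * G = 1)
    (hD : ∀ x, ‖D x‖ ^ 2 = r ^ 2 * ‖x‖ ^ 2 - ‖Z x‖ ^ 2)
    (hU : ∀ x, ‖U x‖ ^ 2 = ‖Z x‖ ^ 2 + ‖W x‖ ^ 2)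
    (hK1 : IsCompactOperator ⇑K1) (hUK : ‖U - K1‖ ≤ r) (δ : ℝ) (hδ : 0 < δ) :
    ∃ K0 : H →L[ℂ] H, IsCompactOperator ⇑K0 ∧ ‖W * G - K0‖ ≤ 1 + δ := by
  obtain ⟨γ, hγ, hγ1, hγ2⟩ : ∃ γ : ℝ, 0 < γ ∧ γ ≤ 1 ∧ γ * (2 * r * ‖G‖ + 1) ≤ δ := by
    have h0 : 0 < 2 * r * ‖G‖ + 1 := by positivity
    refine ⟨min 1 (δ / (2 * r * ‖G‖ + 1)), by positivity, min_le_left _ _, ?_⟩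
    rw [← le_div_iff₀ h0]; exact min_le_right _ _
  obtain ⟨B, hB1, hB2, hB3⟩ := exists_damp (K1 * G) (cpt_mul_right hK1 G) γ hγ
  refine ⟨W * G * (1 - B), cpt_mul_left hB1 _, ?_⟩
  refine ContinuousLinearMap.opNorm_le_bound _ (by positivity) fun y => ?_
  have e1 : W * G - W * G * (1 - B) = W * G * B := by noncomm_ring
  rw [e1]
  set x := G (B y) with hx
  have e2 : (W * G * B) y = W x := rfl
  rw [e2]
  have hGx : ‖x‖ ≤ ‖G‖ * ‖y‖ :=
    (G.le_opNorm _).trans (mul_le_mul_of_nonneg_left (hB2 y) (norm_nonneg _))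
  have hDx : D x = B y := by
    have := congrArg (fun T : H →L[ℂ] H => T (B y)) hDG
    simpa using this
  have hUx : ‖U x‖ ≤ r * ‖x‖ + γ * ‖y‖ := by
    have e3 : U x = (U - K1) x + (K1 * G) (B y) := by simp [hx]
    rw [e3]
    refine (norm_add_le _ _).trans (add_le_add ?_ (hB3 y))
    exact ((U - K1).le_opNorm x).trans (mul_le_mul_of_nonneg_right hUK (norm_nonneg _))
  have hU2 : ‖U x‖ ^ 2 ≤ (r * ‖x‖ + γ * ‖y‖) ^ 2 := pow_le_pow_left₀ (norm_nonneg _) hUx 2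
  have hB2' : ‖B y‖ ^ 2 ≤ ‖y‖ ^ 2 := pow_le_pow_left₀ (norm_nonneg _) (hB2 y) 2
  have h1 := hD x
  rw [hDx] at h1
  have h2 := hU x
  have h3 : r * γ * ‖y‖ * ‖x‖ ≤ r * γ * ‖y‖ * (‖G‖ * ‖y‖) :=
    mul_le_mul_of_nonneg_left hGx (by positivity)
  have h4 : γ ^ 2 * ‖y‖ ^ 2 ≤ γ * ‖y‖ ^ 2 :=
    mul_le_mul_of_nonneg_right (by nlinarith) (by positivity)
  have h5 : γ * (2 * r * ‖G‖ + 1) * ‖y‖ ^ 2 ≤ δ * ‖y‖ ^ 2 :=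
    mul_le_mul_of_nonneg_right hγ2 (by positivity)
  have h6 : ‖W x‖ ^ 2 ≤ (1 + δ) * ‖y‖ ^ 2 := by nlinarith
  refine abs_le_of_sq_le_sq' ?_ (by positivity) |>.2
  rw [mul_pow]
  refine h6.trans (mul_le_mul_of_nonneg_right (by nlinarith) (by positivity))

section Nest

variable (𝒩 : ContinuousNest H)

lemma N_mul_of_le {s t : ℝ} (hs : s ∈ Icc (0 : ℝ) 1) (ht : t ∈ Icc (0 : ℝ) 1) (hst : s ≤ t) :
    𝒩.N t * 𝒩.N s = 𝒩.N s := by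
  rcases hst.eq_or_lt with rfl | hlt
  · exact 𝒩.idem _ hs
  · have h := (𝒩.range_lt s t hs ht hlt).le
    ext x
    obtain ⟨y, hy⟩ := h (LinearMap.mem_range_self (𝒩.N s).toLinearMap x)
    have hy' : 𝒩.N t y = 𝒩.N s x := hy
    have hi : 𝒩.N t (𝒩.N t y) = 𝒩.N t y :=
      congrArg (fun T : H →L[ℂ] H => T y) (𝒩.idem t ht)
    change 𝒩.N t (𝒩.N s x) = 𝒩.N s x
    rw [← hy', hi]

lemma N_mul_of_ge {s t : ℝ} (hs : s ∈ Icc (0 : ℝ) 1) (ht : t ∈ Icc (0 : ℝ) 1) (hst : s ≤ t) :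
    𝒩.N s * 𝒩.N t = 𝒩.N s := by
  have h := congrArg star (N_mul_of_le 𝒩 hs ht hst)
  rwa [star_mul, (𝒩.selfAdjoint s hs).star_eq, (𝒩.selfAdjoint t ht).star_eq] at h

lemma alg_sub {A B : H →L[ℂ] H} (hA : A ∈ 𝒩.alg) (hB : B ∈ 𝒩.alg) : A - B ∈ 𝒩.alg := by
  intro t ht
  rw [mul_sub, sub_mul, hA t ht, hB t ht, sub_zero]

lemma alg_mul {A B : H →L[ℂ] H} (hA : A ∈ 𝒩.alg) (hB : B ∈ 𝒩.alg) : A * B ∈ 𝒩.alg := by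
  intro t ht
  have e : (1 - 𝒩.N t) * (A * B) * 𝒩.N t =
      (1 - 𝒩.N t) * A * 𝒩.N t * B * 𝒩.N t + (1 - 𝒩.N t) * A * ((1 - 𝒩.N t) * B * 𝒩.N t) := by
    noncomm_ring
  rw [e, hA t ht, hB t ht]; simp

lemma alg_one : (1 : H →L[ℂ] H) ∈ 𝒩.alg := by
  intro t ht
  rw [mul_one, sub_mul, one_mul, 𝒩.idem t ht, sub_self]

lemma alg_N {s : ℝ} (hs : s ∈ Icc (0 : ℝ) 1) : 𝒩.N s ∈ 𝒩.alg := by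
  intro t ht
  rcases le_total s t with h | h
  · rw [sub_mul, one_mul, N_mul_of_le 𝒩 hs ht h, sub_self, zero_mul]
  · rw [mul_assoc, N_mul_of_le 𝒩 ht hs h, sub_mul, one_mul, 𝒩.idem t ht, sub_self]

lemma alg_corner {s t : ℝ} (hs : s ∈ Icc (0 : ℝ) 1) (ht : t ∈ Icc (0 : ℝ) 1) (hst : s ≤ t)
    (C : H →L[ℂ] H) : 𝒩.N s * C * (𝒩.N t - 𝒩.N s) ∈ 𝒩.alg := by
  intro u hu
  rcases le_total s u with h | h
  · have : (1 - 𝒩.N u) * 𝒩.N s = 0 := by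
      rw [sub_mul, one_mul, N_mul_of_le 𝒩 hs hu h, sub_self]
    rw [← mul_assoc, ← mul_assoc, this]; simp
  · have : (𝒩.N t - 𝒩.N s) * 𝒩.N u = 0 := by
      rw [sub_mul, N_mul_of_le 𝒩 hu hs h, N_mul_of_le 𝒩 hu ht (h.trans hst), sub_self]
    rw [mul_assoc, mul_assoc, this]; simp

lemma proj_norm_le {P : H →L[ℂ] H} (hi : P * P = P) (hs : IsSelfAdjoint P) (x : H) :
    ‖P x‖ ≤ ‖x‖ := by
  have h1 : ‖P x‖ ^ 2 = (inner ℂ (P x) x).re := by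
    rw [← re_star_mul_self, hs.star_eq, hi]
  have h2 := re_inner_le (P x) x
  by_contra hcon
  push Not at hcon
  nlinarith [norm_nonneg x, norm_nonneg (P x)]

lemma proj_pyth {P Q : H →L[ℂ] H} (hs : IsSelfAdjoint P) (hPQ : P * Q = 0) (x y : H) :
    ‖P x + Q y‖ ^ 2 = ‖P x‖ ^ 2 + ‖Q y‖ ^ 2 := by
  have h : inner ℂ (P x) (Q y) = 0 := by
    rw [star_inner, hs.star_eq]
    have : P (Q y) = 0 := congrArg (fun T : H →L[ℂ] H => T y) hPQ
    rw [this, inner_zero_right]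
  have := norm_add_sq (𝕜 := ℂ) (P x) (Q y)
  rw [h] at this
  simpa using this

lemma mesh (K : H →L[ℂ] H) (hK : IsCompactOperator ⇑K) (γ : ℝ) (hγ : 0 < γ) :
    ∃ η > 0, ∀ s ∈ Icc (0 : ℝ) 1, ∀ t ∈ Icc (0 : ℝ) 1, |t - s| < η →
      ‖(𝒩.N t - 𝒩.N s) * K‖ ≤ γ := by
  have hc : IsCompact (closure (K '' Metric.closedBall 0 1)) :=
    IsCompactOperator.isCompact_closure_image_closedBall (f := K.toLinearMap) hK 1
  obtain ⟨F, hFfin, hF⟩ := Metric.totallyBounded_iff.1 hc.totallyBounded (γ / 4) (by positivity)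
  have huc : ∀ y ∈ F, ∃ η > 0, ∀ s ∈ Icc (0 : ℝ) 1, ∀ t ∈ Icc (0 : ℝ) 1, |t - s| < η →
      ‖𝒩.N t y - 𝒩.N s y‖ < γ / 2 := by
    intro y _
    have h := (isCompact_Icc : IsCompact (Icc (0 : ℝ) 1)).uniformContinuousOn_of_continuous
      (𝒩.contOn y)
    obtain ⟨η, hη, h⟩ := Metric.uniformContinuousOn_iff.1 h (γ / 2) (by positivity)
    refine ⟨η, hη, fun s hs t ht hst => ?_⟩
    have := h t ht s hs (by rwa [Real.dist_eq])
    rwa [dist_eq_norm] at this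
  obtain ⟨η, hη, hall⟩ : ∃ η > 0, ∀ y ∈ F, ∀ s ∈ Icc (0 : ℝ) 1, ∀ t ∈ Icc (0 : ℝ) 1,
      |t - s| < η → ‖𝒩.N t y - 𝒩.N s y‖ < γ / 2 := by
    clear hF
    induction F, hFfin using Set.Finite.induction_on with
    | empty => exact ⟨1, one_pos, by simp⟩
    | insert _ _ ih =>
      obtain ⟨η1, h1, h1'⟩ := ih fun y hy => huc y (Set.mem_insert_of_mem _ hy)
      obtain ⟨η2, h2, h2'⟩ := huc _ (Set.mem_insert _ _)
      refine ⟨min η1 η2, lt_min h1 h2, ?_⟩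
      rintro y (rfl | hy) s hs t ht hst
      · exact h2' s hs t ht (hst.trans_le (min_le_right _ _))
      · exact h1' y hy s hs t ht (hst.trans_le (min_le_left _ _))
  refine ⟨η, hη, fun s hs t ht hst => ?_⟩
  refine ContinuousLinearMap.opNorm_le_of_unit_norm hγ.le fun x hx => ?_
  have hx' : K x ∈ closure (K '' Metric.closedBall 0 1) :=
    subset_closure ⟨x, by simp [hx], rfl⟩
  obtain ⟨y, hy, hxy⟩ := Set.mem_iUnion₂.1 (hF hx')
  rw [Metric.mem_ball, dist_eq_norm] at hxy
  have e : ((𝒩.N t - 𝒩.N s) * K) x =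
      (𝒩.N t y - 𝒩.N s y) + (𝒩.N t (K x - y) - 𝒩.N s (K x - y)) := by
    simp only [mul_apply_eq_comp, sub_apply, map_sub]; abel
  rw [e]
  have h1 := proj_norm_le (𝒩.idem t ht) (𝒩.selfAdjoint t ht) (K x - y)
  have h2 := proj_norm_le (𝒩.idem s hs) (𝒩.selfAdjoint s hs) (K x - y)
  have h3 := hall y hy s hs t ht hst
  have h4 := norm_add_le (𝒩.N t y - 𝒩.N s y) (𝒩.N t (K x - y) - 𝒩.N s (K x - y))
  have h5 := norm_sub_le (𝒩.N t (K x - y)) (𝒩.N s (K x - y))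
  linarith

/-- Inductive statement for the triangular truncation. -/
def Good (K : H →L[ℂ] H) (δ t : ℝ) : Prop :=
  ∃ V A : H →L[ℂ] H, A ∈ 𝒩.alg ∧ (1 + V) * A = 1 ∧ 𝒩.N t * V = V ∧ IsCompactOperator ⇑V ∧
    ∀ x, ‖star K (𝒩.N t x)‖ ^ 2 / 2 - δ / 2 * ‖𝒩.N t x‖ ^ 2 ≤ (inner ℂ (V x) x).re

lemma good_step (K : H →L[ℂ] H) (hK : IsCompactOperator ⇑K) (δ : ℝ) (hδ : 0 ≤ δ) {s t : ℝ}
    (hs : s ∈ Icc (0 : ℝ) 1) (ht : t ∈ Icc (0 : ℝ) 1) (hst : s ≤ t)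
    (hsm : ‖(𝒩.N t - 𝒩.N s) * K‖ ≤ √δ) (h : Good 𝒩 K δ s) : Good 𝒩 K δ t := by
  obtain ⟨V, A, hA, hVA, hNV, hV, hre⟩ := h
  set E := 𝒩.N t - 𝒩.N s with hE
  set B := 𝒩.N s * (K * star K) * E with hB
  have hss : 𝒩.N s * 𝒩.N s = 𝒩.N s := 𝒩.idem s hs
  have htt : 𝒩.N t * 𝒩.N t = 𝒩.N t := 𝒩.idem t ht
  have hts := N_mul_of_le 𝒩 hs ht hst
  have hst' := N_mul_of_ge 𝒩 hs ht hst
  have hEN : E * 𝒩.N s = 0 := by rw [hE, sub_mul, hts, hss, sub_self]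
  have hNE : 𝒩.N s * E = 0 := by rw [hE, mul_sub, hst', hss, sub_self]
  have hEE : E * E = E := by
    rw [hE, sub_mul, mul_sub, mul_sub, htt, hts, hst', hss]; abel
  have hEs : IsSelfAdjoint E := (𝒩.selfAdjoint t ht).sub (𝒩.selfAdjoint s hs)
  have hBV : B * V = 0 := by
    rw [← hNV, hB, mul_assoc, ← mul_assoc E, hEN]; simp
  have hBB : B * B = 0 := by
    have : E * B = 0 := by rw [hB, ← mul_assoc, ← mul_assoc, hEN]; simp
    nth_rw 1 [hB]
    rw [mul_assoc, this, mul_zero]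
  refine ⟨V + B, A * (1 - B), ?_, ?_, ?_, ?_, ?_⟩
  · exact alg_mul 𝒩 hA (alg_sub 𝒩 (alg_one 𝒩) (alg_corner 𝒩 hs ht hst _))
  · have e : 1 + (V + B) = (1 + B) * (1 + V) := by
      rw [add_mul, mul_add, mul_add, hBV]; noncomm_ring
    rw [e, mul_assoc, ← mul_assoc (1 + V), hVA, one_mul, add_mul, mul_sub, mul_sub, hBB]
    noncomm_ring
  · rw [mul_add]
    congr 1
    · rw [← hNV, ← mul_assoc, hts]
    · rw [hB, ← mul_assoc, ← mul_assoc, hts]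
  · exact cpt_add hV (cpt_mul_right (cpt_mul_left (cpt_mul_right hK _) _) _)
  · intro x
    have h1 := hre x
    have h2 : inner ℂ (B x) x = inner ℂ (star K (E x)) (star K (𝒩.N s x)) := by
      have : B x = 𝒩.N s (K (star K (E x))) := rfl
      rw [this, star_inner, (𝒩.selfAdjoint s hs).star_eq, star_inner]
    have h3 : 𝒩.N t x = E x + 𝒩.N s x := by rw [hE, sub_apply]; abel
    have h4 := norm_add_sq (𝕜 := ℂ) (star K (E x)) (star K (𝒩.N s x))
    have h5 : ‖𝒩.N t x‖ ^ 2 = ‖E x‖ ^ 2 + ‖𝒩.N s x‖ ^ 2 := by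
      rw [h3, proj_pyth hEs hEN]
    have h6 : ‖star K (E x)‖ ≤ √δ * ‖E x‖ := by
      have e1 : star K (E x) = (star (E * K)) (E x) := by
        rw [star_mul, hEs.star_eq, mul_apply_eq_comp]
        congr 1
        exact (congrArg (fun T : H →L[ℂ] H => T x) hEE).symm
      rw [e1]
      refine ((star (E * K)).le_opNorm _).trans ?_
      rw [norm_star]
      exact mul_le_mul_of_nonneg_right hsm (norm_nonneg _)
    have h7 : ‖star K (E x)‖ ^ 2 ≤ δ * ‖E x‖ ^ 2 := by
      have := pow_le_pow_left₀ (norm_nonneg _) h6 2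
      rwa [mul_pow, Real.sq_sqrt hδ] at this
    rw [add_apply, inner_add_left, Complex.add_re, h2]
    have h8 : ‖star K (𝒩.N t x)‖ ^ 2 = ‖star K (E x)‖ ^ 2 +
        2 * (inner ℂ (star K (E x)) (star K (𝒩.N s x))).re + ‖star K (𝒩.N s x)‖ ^ 2 := by
      rw [h3, map_add]; exact h4
    rw [h8, h5]
    linarith

lemma good_one (K : H →L[ℂ] H) (hK : IsCompactOperator ⇑K) (δ : ℝ) (hδ : 0 < δ) :
    Good 𝒩 K δ 1 := by
  obtain ⟨η, hη, hm⟩ := mesh 𝒩 K hK (√δ) (Real.sqrt_pos.2 hδ)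
  obtain ⟨m, hm'⟩ := exists_nat_one_div_lt hη
  have hm0 : (0 : ℝ) < (m : ℝ) + 1 := by positivity
  have key : ∀ i : ℕ, i ≤ m + 1 → Good 𝒩 K δ ((i : ℝ) / ((m : ℝ) + 1)) := by
    intro i
    induction i with
    | zero =>
      intro _
      refine ⟨0, 1, alg_one 𝒩, by simp, by simp, cpt_zero, fun x => ?_⟩
      simp [𝒩.N_zero]
    | succ i ih =>
      intro hi
      have hi' : (i : ℝ) + 1 ≤ (m : ℝ) + 1 := by exact_mod_cast hi
      have h0 : (0 : ℝ) ≤ i := by positivity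
      have e : ((i + 1 : ℕ) : ℝ) / ((m : ℝ) + 1) - (i : ℝ) / ((m : ℝ) + 1) = 1 / ((m : ℝ) + 1) := by
        push_cast; ring
      have hs : (i : ℝ) / ((m : ℝ) + 1) ∈ Icc (0 : ℝ) 1 :=
        ⟨by positivity, by rw [div_le_one hm0]; linarith⟩
      have ht : ((i + 1 : ℕ) : ℝ) / ((m : ℝ) + 1) ∈ Icc (0 : ℝ) 1 :=
        ⟨by positivity, by rw [div_le_one hm0]; push_cast; linarith⟩
      have hpos : 0 < 1 / ((m : ℝ) + 1) := by positivity
      refine good_step 𝒩 K hK δ hδ.le hs ht (by linarith) (hm _ hs _ ht ?_) (ih (by omega))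
      rw [e, abs_of_pos hpos]; exact hm'
  have := key (m + 1) le_rfl
  have e : ((m + 1 : ℕ) : ℝ) / ((m : ℝ) + 1) = 1 := by push_cast; field_simp
  rwa [e] at this

lemma exists_killer (K : H →L[ℂ] H) (hK : IsCompactOperator ⇑K) (ε : ℝ) (hε : 0 < ε)
    (hε1 : ε ≤ 1) :
    ∃ A : H →L[ℂ] H, A ∈ 𝒩.alg ∧ IsCompactOperator ⇑(1 - A) ∧ ‖A‖ ≤ 1 + ε ∧ ‖A * K‖ ≤ ε := by
  set c : H →L[ℂ] H := ((ε⁻¹ : ℝ) : ℂ) • K with hc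
  obtain ⟨V, A, hA, hVA, -, hV, hre⟩ := good_one 𝒩 c (cpt_smul hK _) ε hε
  rw [𝒩.N_one] at hre
  simp only [one_apply_eq_self] at hre
  have key : ∀ x, (1 - ε / 2) * ‖A x‖ ^ 2 + ‖star c (A x)‖ ^ 2 / 2 ≤ (inner ℂ x (A x)).re := by
    intro x
    have h2 : x = A x + V (A x) := by
      have := congrArg (fun T : H →L[ℂ] H => T x) hVA
      simpa using this.symm
    have h3 := hre (A x)
    have h4 := re_self (A x)
    have h6 : (inner ℂ x (A x)).re = ‖A x‖ ^ 2 + (inner ℂ (V (A x)) (A x)).re := by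
      conv_lhs => rw [h2]
      rw [inner_add_left, Complex.add_re, ← h2, h4]
    linarith
  refine ⟨A, hA, ?_, ?_, ?_⟩
  · have : 1 - A = V * A := by rw [← hVA]; noncomm_ring
    rw [this]; exact cpt_mul_right hV _
  · refine ContinuousLinearMap.opNorm_le_bound _ (by positivity) fun x => ?_
    have h1 := key x
    have h2 := re_inner_le x (A x)
    by_contra hcon
    push Not at hcon
    have h3 : 0 < ‖A x‖ := lt_of_le_of_lt (by positivity) hcon
    have h4 : (1 - ε / 2) * ‖A x‖ ≤ ‖x‖ := by
      refine le_of_mul_le_mul_right ?_ h3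
      nlinarith [sq_nonneg ‖star c (A x)‖]
    have h5 : 1 ≤ (1 - ε / 2) * (1 + ε) := by nlinarith
    have h6 : (1 - ε / 2) * ((1 + ε) * ‖x‖) < (1 - ε / 2) * ‖A x‖ :=
      mul_lt_mul_of_pos_left hcon (by linarith)
    nlinarith [norm_nonneg x]
  · refine ContinuousLinearMap.opNorm_le_bound _ (by positivity) fun z => ?_
    have h1 := key (K z)
    rw [mul_apply_eq_comp]
    set y := A (K z) with hy
    have h2 : K z = (ε : ℂ) • c z := by
      rw [hc, smul_apply, smul_smul, ← Complex.ofReal_mul, mul_inv_cancel₀ hε.ne']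
      simp
    have h3 : (inner ℂ (K z) y).re = ε * (inner ℂ z (star c y)).re := by
      rw [h2, inner_smul_left, Complex.conj_ofReal, Complex.re_ofReal_mul, star_inner]
    have h4 := re_inner_le z (star c y)
    have h5 : (inner ℂ (K z) y).re ≤ ε * (‖z‖ * ‖star c y‖) := by
      rw [h3]; exact mul_le_mul_of_nonneg_left h4 hε.le
    have h6 : ε * (‖z‖ * ‖star c y‖) ≤ (ε * ‖z‖) ^ 2 / 2 + ‖star c y‖ ^ 2 / 2 := by
      nlinarith [sq_nonneg (ε * ‖z‖ - ‖star c y‖)]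
    have h7 : 1 / 2 * ‖y‖ ^ 2 ≤ (1 - ε / 2) * ‖y‖ ^ 2 :=
      mul_le_mul_of_nonneg_right (by linarith) (by positivity)
    refine abs_le_of_sq_le_sq' ?_ (by positivity) |>.2
    linarith

lemma step {a b : ℝ} (ha : a ∈ Icc (0 : ℝ) 1) (hb : b ∈ Icc (0 : ℝ) 1) (hab : a ≤ b)
    (Y : H →L[ℂ] H) (hY : Y ∈ 𝒩.alg) (r r' : ℝ) (hrr : r < r')
    (hYr : ‖(1 - 𝒩.N b) * Y‖ < r) (K1 : H →L[ℂ] H) (hK1 : IsCompactOperator ⇑K1)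
    (hYK : ‖(1 - 𝒩.N a) * Y - K1‖ ≤ r) :
    ∃ Y' ∈ 𝒩.alg, IsCompactOperator ⇑(Y - Y') ∧ (1 - 𝒩.N b) * Y' = (1 - 𝒩.N b) * Y ∧
      ‖(1 - 𝒩.N a) * Y'‖ < r' := by
  have hr0 : 0 < r := (norm_nonneg _).trans_lt hYr
  obtain ⟨δ, hδ, hδ1, hδr⟩ : ∃ δ : ℝ, 0 < δ ∧ δ ≤ 1 ∧ (1 + 4 * δ) * r < r' := by
    have h0 : 0 < (r' - r) / (8 * r) := div_pos (by linarith) (by positivity)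
    refine ⟨min 1 ((r' - r) / (8 * r)), lt_min one_pos h0, min_le_left _ _, ?_⟩
    have h1 : min 1 ((r' - r) / (8 * r)) * (8 * r) ≤ r' - r := by
      rw [← le_div_iff₀ (by positivity)]; exact min_le_right _ _
    nlinarith
  have haa : 𝒩.N a * 𝒩.N a = 𝒩.N a := 𝒩.idem a ha
  have hbb : 𝒩.N b * 𝒩.N b = 𝒩.N b := 𝒩.idem b hb
  have hba := N_mul_of_le 𝒩 ha hb hab
  have hab' := N_mul_of_ge 𝒩 ha hb hab
  set E := 𝒩.N b - 𝒩.N a with hE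
  set Q := 1 - 𝒩.N b with hQ
  have hEE : E * E = E := by
    rw [hE, sub_mul, mul_sub, mul_sub, hbb, hba, hab', haa]; abel
  have hQE : Q * E = 0 := by
    rw [hQ, hE, sub_mul, one_mul, mul_sub, hbb, hba, sub_self]
  have hEs : IsSelfAdjoint E := (𝒩.selfAdjoint b hb).sub (𝒩.selfAdjoint a ha)
  have hQs : IsSelfAdjoint Q := (IsSelfAdjoint.one _).sub (𝒩.selfAdjoint b hb)
  have hQa : 1 - 𝒩.N a = Q + E := by rw [hQ, hE]; abel
  have hEQ : E * Q = 0 := by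
    have := congrArg star hQE
    rwa [star_mul, hEs.star_eq, hQs.star_eq, star_zero] at this
  have hEalg : E ∈ 𝒩.alg := alg_sub 𝒩 (alg_N 𝒩 hb) (alg_N 𝒩 ha)
  obtain ⟨D, G, hDG, hGD, hD⟩ := exists_defect (Q * Y) r hYr
  obtain ⟨K0, hK0, hWG⟩ := ess_contr (Q * Y) (E * Y) ((1 - 𝒩.N a) * Y) K1 D G r hr0.le hDG hD
    (fun x => by
      rw [hQa, add_mul, add_apply]
      exact proj_pyth hQs hQE (Y x) (Y x)) hK1 hYK δ hδ
  obtain ⟨A, hA, hA1, hAn, hAK⟩ := exists_killer 𝒩 K0 hK0 δ hδ hδ1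
  have hAWG : ‖A * (E * Y * G)‖ ≤ 1 + 4 * δ := by
    have e : A * (E * Y * G) = A * (E * Y * G - K0) + A * K0 := by noncomm_ring
    rw [e]
    have h1 := norm_add_le (A * (E * Y * G - K0)) (A * K0)
    have h2 := norm_mul_le A (E * Y * G - K0)
    have h3 : ‖A‖ * ‖E * Y * G - K0‖ ≤ (1 + δ) * (1 + δ) :=
      mul_le_mul hAn hWG (norm_nonneg _) (by positivity)
    nlinarith
  refine ⟨Y - E * (1 - A) * E * Y, ?_, ?_, ?_, ?_⟩
  · exact alg_sub 𝒩 hY (alg_mul 𝒩 (alg_mul 𝒩 (alg_mul 𝒩 hEalg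
      (alg_sub 𝒩 (alg_one 𝒩) hA)) hEalg) hY)
  · rw [sub_sub_cancel]
    exact cpt_mul_right (cpt_mul_right (cpt_mul_left hA1 _) _) _
  · rw [mul_sub, ← mul_assoc, ← mul_assoc, ← mul_assoc, hQE]; simp
  · refine lt_of_le_of_lt ?_ hδr
    refine ContinuousLinearMap.opNorm_le_bound _ (by positivity) fun x => ?_
    have e1 : (1 - 𝒩.N a) * (Y - E * (1 - A) * E * Y) = Q * Y + E * (A * (E * Y)) := by
      rw [hQa]
      have e2 : (Q + E) * (Y - E * (1 - A) * E * Y) =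
          Q * Y - (Q * E) * (1 - A) * E * Y + E * Y - (E * E) * (1 - A) * E * Y := by
        noncomm_ring
      have e3 : E * (1 - A) * E * Y = (E * E) * Y - E * (A * (E * Y)) := by noncomm_ring
      rw [e2, hQE, hEE, e3, hEE]
      simp only [zero_mul, sub_zero]
      abel
    rw [e1]
    have h1 : ‖(Q * Y + E * (A * (E * Y))) x‖ ^ 2 =
        ‖(Q * Y) x‖ ^ 2 + ‖E ((A * (E * Y)) x)‖ ^ 2 :=
      proj_pyth hQs hQE (Y x) ((A * (E * Y)) x)
    have h2 := proj_norm_le hEE hEs ((A * (E * Y)) x)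
    have h3 : (A * (E * Y)) x = (A * (E * Y * G)) (D x) := by
      have : A * (E * Y) = A * (E * Y * G) * D := by
        rw [mul_assoc, mul_assoc (E * Y), hGD, mul_one]
      exact congrArg (fun T : H →L[ℂ] H => T x) this
    have h4 : ‖(A * (E * Y)) x‖ ≤ (1 + 4 * δ) * ‖D x‖ := by
      rw [h3]
      exact ((A * (E * Y * G)).le_opNorm _).trans
        (mul_le_mul_of_nonneg_right hAWG (norm_nonneg _))
    have h5 : ‖E ((A * (E * Y)) x)‖ ^ 2 ≤ (1 + 4 * δ) ^ 2 * ‖D x‖ ^ 2 := by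
      rw [← mul_pow]; exact pow_le_pow_left₀ (norm_nonneg _) (h2.trans h4) 2
    rw [hD x] at h5
    refine abs_le_of_sq_le_sq' ?_ (by positivity) |>.2
    rw [h1]
    have h6 : ‖(Q * Y) x‖ ^ 2 ≤ (1 + 4 * δ) ^ 2 * ‖(Q * Y) x‖ ^ 2 :=
      le_mul_of_one_le_left (by positivity) (by nlinarith)
    nlinarith

/-- Strong limit of a coherent bounded sequence. -/
lemma exists_limit (Q Y : ℕ → H →L[ℂ] H) (c : ℝ)
    (hQs : ∀ n, IsSelfAdjoint (Q n)) (hQ : ∀ n, Q n * Q n = Q n)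
    (hcoh : ∀ n m, n ≤ m → Q n * Y m = Y n) (hb : ∀ n, ‖Y n‖ ≤ c) :
    ∃ L : H →L[ℂ] H, ‖L‖ ≤ c ∧ ∀ x, Tendsto (fun n => Y n x) atTop (𝓝 (L x)) := by
  have hc0 : 0 ≤ c := (norm_nonneg _).trans (hb 0)
  have hbx : ∀ n x, ‖Y n x‖ ≤ c * ‖x‖ := fun n x =>
    ((Y n).le_opNorm x).trans (mul_le_mul_of_nonneg_right (hb n) (norm_nonneg _))
  have hdiff : ∀ x n m, n ≤ m → ‖Y m x‖ ^ 2 = ‖Y n x‖ ^ 2 + ‖Y m x - Y n x‖ ^ 2 := by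
    intro x n m hnm
    have h1 : Y n x = Q n (Y m x) := (congrArg (fun T : H →L[ℂ] H => T x) (hcoh n m hnm)).symm
    have h2 : Q n * (1 - Q n) = 0 := by rw [mul_sub, mul_one, hQ, sub_self]
    have h3 := proj_pyth (hQs n) h2 (Y m x) (Y m x)
    have h4 : (1 - Q n) (Y m x) = Y m x - Y n x := by rw [h1]; rfl
    rw [h4, ← h1] at h3
    rw [← h3]; congr 2; abel
  have hcau : ∀ x, ∃ l, Tendsto (fun n => Y n x) atTop (𝓝 l) := by
    intro x
    apply cauchySeq_tendsto_of_complete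
    have hmono : Monotone fun n => ‖Y n x‖ ^ 2 := by
      intro n m hnm
      have := hdiff x n m hnm
      simp only
      nlinarith [sq_nonneg ‖Y m x - Y n x‖]
    have hbdd : BddAbove (Set.range fun n => ‖Y n x‖ ^ 2) := by
      refine ⟨(c * ‖x‖) ^ 2, ?_⟩
      rintro _ ⟨n, rfl⟩
      exact pow_le_pow_left₀ (norm_nonneg _) (hbx n x) 2
    have hcs := (tendsto_atTop_ciSup hmono hbdd).cauchySeq
    rw [Metric.cauchySeq_iff'] at hcs ⊢
    intro ε hε
    obtain ⟨N, hN⟩ := hcs (ε ^ 2) (by positivity)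
    refine ⟨N, fun n hn => ?_⟩
    have h1 := hN n hn
    rw [Real.dist_eq] at h1
    have h2 := (abs_lt.1 h1).2
    have h3 := hdiff x N n hn
    rw [dist_eq_norm]
    exact lt_of_pow_lt_pow_left₀ 2 hε.le (by linarith)
  choose f hf using hcau
  have ht : Tendsto (fun n x => Y n x) atTop (𝓝 f) := tendsto_pi_nhds.2 hf
  refine ⟨continuousLinearMapOfTendsto Y ht, ?_, hf⟩
  refine ContinuousLinearMap.opNorm_le_bound _ hc0 fun x => ?_
  exact le_of_tendsto (hf x).norm (Eventually.of_forall fun n => hbx n x)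

lemma exists_approx (X : H →L[ℂ] H) (hX : X ∈ 𝒩.alg) (s ε : ℝ) (hε : 0 < ε) (hs0 : 0 ≤ s)
    (hs : ∀ t : ℝ, 0 < t → t ≤ 1 → essNorm ((1 - 𝒩.N t) * X * (1 - 𝒩.N t)) ≤ s) :
    ∃ K ∈ 𝒩.alg, (∀ t : ℝ, 0 < t → t ≤ 1 → IsCompactOperator ⇑((1 - 𝒩.N t) * K)) ∧
      ‖X - K‖ ≤ s + ε := by
  set τ : ℕ → ℝ := fun n => 1 / ((n : ℝ) + 1) with hτ
  have hτpos : ∀ n, 0 < τ n := fun n => by simp only [hτ]; positivity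
  have hτ1 : ∀ n, τ n ≤ 1 := fun n => by
    simp only [hτ]; rw [div_le_one (by positivity)]; linarith [(Nat.cast_nonneg n : (0 : ℝ) ≤ n)]
  have hτI : ∀ n, τ n ∈ Icc (0 : ℝ) 1 := fun n => ⟨(hτpos n).le, hτ1 n⟩
  have hτanti : ∀ n m, n ≤ m → τ m ≤ τ n := fun n m h => Nat.one_div_le_one_div h
  set ρ : ℕ → ℝ := fun n => s + ε * (1 - 1 / ((n : ℝ) + 2)) with hρ
  have hρs : ∀ n, s < ρ n := fun n => by
    simp only [hρ]
    have h2 : 1 / ((n : ℝ) + 2) < 1 := by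
      rw [div_lt_one (by positivity)]; linarith [(Nat.cast_nonneg n : (0 : ℝ) ≤ n)]
    have : 0 < ε * (1 - 1 / ((n : ℝ) + 2)) := mul_pos hε (by linarith)
    linarith
  have hρlt : ∀ n, ρ n < ρ (n + 1) := fun n => by
    simp only [hρ]
    have h2 : 1 / (((n + 1 : ℕ) : ℝ) + 2) < 1 / ((n : ℝ) + 2) := by
      apply one_div_lt_one_div_of_lt (by positivity)
      push_cast; linarith
    have := mul_lt_mul_of_pos_left h2 hε
    linarith
  have hρle : ∀ n, ρ n ≤ s + ε := fun n => by
    simp only [hρ]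
    have h2 : 0 < 1 / ((n : ℝ) + 2) := by positivity
    have := mul_pos hε h2
    linarith
  set P : ℕ → (H →L[ℂ] H) → Prop := fun n Y => Y ∈ 𝒩.alg ∧ IsCompactOperator ⇑(X - Y) ∧
    ‖(1 - 𝒩.N (τ n)) * Y‖ < ρ n with hP
  have hstep : ∀ n Y, P n Y → ∃ Y', P (n + 1) Y' ∧
      (1 - 𝒩.N (τ n)) * Y' = (1 - 𝒩.N (τ n)) * Y := by
    rintro n Y ⟨hY, hXY, hn⟩
    set Q := 1 - 𝒩.N (τ (n + 1)) with hQ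
    have h1 : essNorm (Q * X * Q) < ρ n := (hs _ (hτpos _) (hτ1 _)).trans_lt (hρs n)
    obtain ⟨K, hK, hKd⟩ := (Metric.infDist_lt_iff ⟨0, cpt_zero⟩).1 h1
    have h2 : Q * X * Q = Q * X := by
      have := hX (τ (n + 1)) (hτI _)
      rw [hQ, mul_sub, mul_one, this, sub_zero]
    rw [h2, dist_eq_norm] at hKd
    have h3 : Q * Y - (K - Q * (X - Y)) = Q * X - K := by noncomm_ring
    obtain ⟨Y', hY', hc, he, hl⟩ := step 𝒩 (hτI (n + 1)) (hτI n) (hτanti _ _ (Nat.le_succ n)) Y hY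
      (ρ n) (ρ (n + 1)) (hρlt n) hn (K - Q * (X - Y)) (cpt_sub hK (cpt_mul_left hXY _))
      (by rw [← hQ, h3]; exact hKd.le)
    refine ⟨Y', ⟨hY', ?_, hl⟩, he⟩
    have : X - Y' = (X - Y) + (Y - Y') := by abel
    rw [this]; exact cpt_add hXY hc
  have h0 : P 0 X := by
    refine ⟨hX, by rw [sub_self]; exact cpt_zero, ?_⟩
    have : τ 0 = 1 := by simp [hτ]
    rw [this, 𝒩.N_one, sub_self, zero_mul, norm_zero]
    exact hs0.trans_lt (hρs 0)
  choose! F hF1 hF2 using hstep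
  set Y : ℕ → H →L[ℂ] H := fun n => Nat.rec X (fun n Y => F n Y) n with hYdef
  have hYs : ∀ n, Y (n + 1) = F n (Y n) := fun n => rfl
  have hPY : ∀ n, P n (Y n) := by
    intro n
    induction n with
    | zero => exact h0
    | succ n ih => rw [hYs]; exact hF1 n _ ih
  set Q : ℕ → H →L[ℂ] H := fun n => 1 - 𝒩.N (τ n) with hQ
  have hQQ : ∀ t ∈ Icc (0 : ℝ) 1, ∀ u ∈ Icc (0 : ℝ) 1, u ≤ t →
      (1 - 𝒩.N t) * (1 - 𝒩.N u) = 1 - 𝒩.N t := by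
    intro t ht u hu hut
    rw [mul_sub, mul_one, sub_mul, one_mul, N_mul_of_le 𝒩 hu ht hut, sub_self, sub_zero]
  have hQY : ∀ n m, n ≤ m → Q n * Y m = Q n * Y n := by
    intro n m hnm
    induction m, hnm using Nat.le_induction with
    | base => rfl
    | succ m hnm ih =>
      rw [← ih, hYs]
      have e1 : Q n = Q n * Q m := (hQQ _ (hτI n) _ (hτI m) (hτanti _ _ hnm)).symm
      have e2 : Q m * F m (Y m) = Q m * Y m := hF2 m _ (hPY m)
      rw [e1, mul_assoc, e2, mul_assoc]
  obtain ⟨L, hL, hLt⟩ := exists_limit Q (fun n => Q n * Y n) (s + ε)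
    (fun n => (IsSelfAdjoint.one _).sub (𝒩.selfAdjoint _ (hτI n)))
    (fun n => hQQ _ (hτI n) _ (hτI n) le_rfl)
    (fun n m hnm => by
      rw [← mul_assoc, hQQ _ (hτI n) _ (hτI m) (hτanti _ _ hnm)]; exact hQY n m hnm)
    (fun n => (hPY n).2.2.le.trans (hρle n))
  have hLalg : L ∈ 𝒩.alg := by
    intro t ht
    ext x
    have h1 : Tendsto (fun n => (1 - 𝒩.N t) ((Q n * Y n) (𝒩.N t x))) atTop
        (𝓝 ((1 - 𝒩.N t) (L (𝒩.N t x)))) :=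
      ((1 - 𝒩.N t).continuous.tendsto _).comp (hLt _)
    have h2 : ∀ n, (1 - 𝒩.N t) ((Q n * Y n) (𝒩.N t x)) = 0 := by
      intro n
      have hm : Q n * Y n ∈ 𝒩.alg :=
        alg_mul 𝒩 (alg_sub 𝒩 (alg_one 𝒩) (alg_N 𝒩 (hτI n))) (hPY n).1
      exact congrArg (fun T : H →L[ℂ] H => T x) (hm t ht)
    simp only [h2] at h1
    exact tendsto_nhds_unique h1 tendsto_const_nhds |>.symm ▸ rfl
  have hQL : ∀ n, Q n * L = Q n * Y n := by
    intro n
    ext x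
    have h1 : Tendsto (fun m => Q n ((Q m * Y m) x)) atTop (𝓝 (Q n (L x))) :=
      ((Q n).continuous.tendsto _).comp (hLt _)
    have h2 : Tendsto (fun m => Q n ((Q m * Y m) x)) atTop (𝓝 ((Q n * Y n) x)) := by
      refine tendsto_const_nhds.congr' ?_
      filter_upwards [eventually_ge_atTop n] with m hm
      have e1 : Q n * (Q m * Y m) = Q n * Y n := by
        rw [← mul_assoc, hQQ _ (hτI n) _ (hτI m) (hτanti _ _ hm)]; exact hQY n m hm
      exact (congrArg (fun T : H →L[ℂ] H => T x) e1).symm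
    exact tendsto_nhds_unique h1 h2
  refine ⟨X - L, alg_sub 𝒩 hX hLalg, fun t ht ht1 => ?_, by rwa [sub_sub_cancel]⟩
  obtain ⟨n, hn⟩ := exists_nat_one_div_lt ht
  have e1 : (1 - 𝒩.N t) * (X - L) = (1 - 𝒩.N t) * (Q n * (X - Y n)) := by
    have e2 : 1 - 𝒩.N t = (1 - 𝒩.N t) * Q n := (hQQ t ⟨ht.le, ht1⟩ _ (hτI n) hn.le).symm
    have e3 : Q n * (X - L) = Q n * (X - Y n) := by rw [mul_sub, mul_sub, hQL]
    rw [← e3, ← mul_assoc, ← e2]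
  rw [e1]
  exact cpt_mul_left (cpt_mul_left (hPY n).2.1 _) _

lemma ess_le (X K : H →L[ℂ] H) (hK : K ∈ 𝒩.alg) (t : ℝ) (ht : t ∈ Icc (0 : ℝ) 1)
    (hKc : IsCompactOperator ⇑((1 - 𝒩.N t) * K)) :
    essNorm ((1 - 𝒩.N t) * X * (1 - 𝒩.N t)) ≤ dist X K := by
  have hmem : (1 - 𝒩.N t) * K * (1 - 𝒩.N t) ∈ {K : H →L[ℂ] H | IsCompactOperator ⇑K} :=
    cpt_mul_right hKc (1 - 𝒩.N t)
  refine (Metric.infDist_le_dist_of_mem hmem).trans ?_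
  rw [dist_eq_norm, dist_eq_norm, ← sub_mul, ← mul_sub]
  have hii : (1 - 𝒩.N t) * (1 - 𝒩.N t) = 1 - 𝒩.N t := by
    have := 𝒩.idem t ht
    rw [mul_sub, mul_one, sub_mul, one_mul, this, sub_self, sub_zero]
  have hn : ‖1 - 𝒩.N t‖ ≤ 1 := ContinuousLinearMap.opNorm_le_bound _ zero_le_one fun x => by
    rw [one_mul]
    exact proj_norm_le hii ((IsSelfAdjoint.one _).sub (𝒩.selfAdjoint t ht)) x
  calc ‖(1 - 𝒩.N t) * (X - K) * (1 - 𝒩.N t)‖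
      ≤ ‖1 - 𝒩.N t‖ * ‖X - K‖ * ‖1 - 𝒩.N t‖ :=
        (norm_mul_le _ _).trans (mul_le_mul_of_nonneg_right (norm_mul_le _ _) (norm_nonneg _))
    _ ≤ 1 * ‖X - K‖ * 1 := by gcongr
    _ = ‖X - K‖ := by ring

end Nest

end NestAux

/-- Quotient norm formula for
`K₊ = {X ∈ Alg 𝒩 : (1 - N(t)) X is compact for every t > 0}`:
`dist(X, K₊) = sup_{0 < t ≤ 1} ‖(1 - N(t)) X (1 - N(t))‖ₑ`. -/
theorem stmt9 {H : Type*} [NormedAddCommGroup H] [InnerProductSpace ℂ H] [CompleteSpace H]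
    [TopologicalSpace.SeparableSpace H] (hH : ¬FiniteDimensional ℂ H)
    (𝒩 : ContinuousNest H) (X : H →L[ℂ] H) (hX : X ∈ 𝒩.alg) :
    Metric.infDist X
        {K | K ∈ 𝒩.alg ∧ ∀ t : ℝ, 0 < t → t ≤ 1 → IsCompactOperator ⇑((1 - 𝒩.N t) * K)} =
      ⨆ t : Ioc (0 : ℝ) 1, essNorm ((1 - 𝒩.N t.1) * X * (1 - 𝒩.N t.1)) := by
  have hne : Nonempty (Ioc (0 : ℝ) 1) := ⟨⟨1, one_pos, le_rfl⟩⟩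
  set S : Set (H →L[ℂ] H) :=
    {K | K ∈ 𝒩.alg ∧ ∀ t : ℝ, 0 < t → t ≤ 1 → IsCompactOperator ⇑((1 - 𝒩.N t) * K)} with hS
  have hz : (0 : H →L[ℂ] H) ∈ S := by
    refine ⟨fun t _ => by simp, fun t _ _ => ?_⟩
    rw [mul_zero]; exact NestAux.cpt_zero
  have hle : ∀ K ∈ S, ∀ t : Ioc (0 : ℝ) 1,
      essNorm ((1 - 𝒩.N t.1) * X * (1 - 𝒩.N t.1)) ≤ dist X K := fun K hK t =>
    NestAux.ess_le 𝒩 X K hK.1 t.1 ⟨t.2.1.le, t.2.2⟩ (hK.2 t.1 t.2.1 t.2.2)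
  have hbdd : BddAbove (Set.range fun t : Ioc (0 : ℝ) 1 =>
      essNorm ((1 - 𝒩.N t.1) * X * (1 - 𝒩.N t.1))) := by
    refine ⟨dist X 0, ?_⟩
    rintro _ ⟨t, rfl⟩
    exact hle 0 hz t
  apply le_antisymm
  · refine le_of_forall_pos_le_add fun ε hε => ?_
    obtain ⟨K, hK, hKc, hd⟩ := NestAux.exists_approx 𝒩 X hX
      (⨆ t : Ioc (0 : ℝ) 1, essNorm ((1 - 𝒩.N t.1) * X * (1 - 𝒩.N t.1))) ε hε
      (Real.iSup_nonneg fun t => Metric.infDist_nonneg)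
      (fun t ht ht1 => le_ciSup hbdd ⟨t, ht, ht1⟩)
    refine (Metric.infDist_le_dist_of_mem (show K ∈ S from ⟨hK, hKc⟩)).trans ?_
    rwa [dist_eq_norm]
  · refine (Metric.le_infDist ⟨0, hz⟩).2 fun {K} hK => ?_
    exact ciSup_le fun t => hle K hK t
end

section
/- Let H be a complex Hilbert space, X ∈ B(H), P an orthogonal projection on H, and a > 0 such that ‖X‖_e < a and ‖X(I − P)‖ < a. Suppose (E_n) is a sequence in B(H) with E_n = E_n P for all n, such that E_n → P and E_n* → P in the strong operator topology, and lim_n ‖I − E_n‖ = 1. Then for every ε > 0 there exists n₀ such that ‖X(I − E_n)‖ ≤ a + ε for all n ≥ n₀. -/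
open Filter Topology

theorem weak_cluster_aux {H : Type*} [NormedAddCommGroup H] [InnerProductSpace ℂ H]
    [CompleteSpace H] (U : Ultrafilter ℕ) (x : ℕ → H) (hx : ∀ n, ‖x n‖ ≤ 1) :
    ∃ y : H, ∀ v : H, Tendsto (fun n => inner ℂ (x n) v) U (𝓝 (inner ℂ y v)) := by
  let f : ℕ → WeakDual ℂ H :=
    fun n => StrongDual.toWeakDual (InnerProductSpace.toDual ℂ H (x n))
  have hc := WeakDual.isCompact_closedBall (𝕜 := ℂ) (E := H) 0 1
  have hf : ∀ n, f n ∈ (WeakDual.toStrongDual ⁻¹'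
      Metric.closedBall (0 : StrongDual ℂ H) 1 : Set (WeakDual ℂ H)) := by
    intro n
    have : ‖InnerProductSpace.toDual ℂ H (x n)‖ ≤ 1 := by
      rw [LinearIsometryEquiv.norm_map]; exact hx n
    exact mem_closedBall_zero_iff.mpr this
  obtain ⟨g, -, hg⟩ := hc.ultrafilter_le_nhds (U.map f)
    (by
      rw [le_principal_iff]
      exact Filter.Eventually.of_forall (f := (U : Filter ℕ)) hf)
  refine ⟨(InnerProductSpace.toDual ℂ H).symm (WeakDual.toStrongDual g), fun v => ?_⟩
  have h1 : Tendsto f U (𝓝 g) := hg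
  have h2 := ((WeakDual.eval_continuous v).tendsto g).comp h1
  rw [InnerProductSpace.toDual_symm_apply]
  exact h2

theorem compact_weak_aux {H : Type*} [NormedAddCommGroup H] [InnerProductSpace ℂ H]
    [CompleteSpace H] (U : Ultrafilter ℕ) (K : H →L[ℂ] H) (hK : IsCompactOperator ⇑K)
    (z : ℕ → H) (R : ℝ) (hz : ∀ᶠ n in (U : Filter ℕ), ‖z n‖ ≤ R)
    (hw : ∀ v : H, Tendsto (fun n => inner ℂ (z n) v) U (𝓝 0)) :
    Tendsto (fun n => K (z n)) U (𝓝 0) := by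
  obtain ⟨C, hC, hsub⟩ := IsCompactOperator.image_closedBall_subset_compact
    (f := (K : H →ₗ[ℂ] H)) hK R
  obtain ⟨w, -, hg⟩ := hC.ultrafilter_le_nhds (U.map fun n => K (z n))
    (by
      rw [le_principal_iff]
      have : ∀ᶠ n in (U : Filter ℕ), K (z n) ∈ C := by
        filter_upwards [hz] with n hn
        exact hsub ⟨z n, mem_closedBall_zero_iff.mpr hn, rfl⟩
      exact this)
  have h1 : Tendsto (fun n => K (z n)) U (𝓝 w) := hg
  have h2 : Tendsto (fun n => inner ℂ (K (z n)) w) U (𝓝 (inner ℂ w w)) :=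
    h1.inner tendsto_const_nhds
  have h3 : Tendsto (fun n => inner ℂ (K (z n)) w) U (𝓝 0) := by
    have := hw (ContinuousLinearMap.adjoint K w)
    simpa only [ContinuousLinearMap.adjoint_inner_right] using this
  have h4 : w = 0 := inner_self_eq_zero.mp (tendsto_nhds_unique h2 h3)
  rwa [h4] at h1

/-- after Axler–Berg–Jewell–Shields. If `‖X‖ₑ < a`, `‖X(1-P)‖ < a` for an
orthogonal projection `P`, and `Eₙ = Eₙ P` converges strong-* to `P` with `‖1 - Eₙ‖ → 1`,
then for every `ε > 0` eventually `‖X(1 - Eₙ)‖ ≤ a + ε`. -/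
theorem stmt10 {H : Type*} [NormedAddCommGroup H] [InnerProductSpace ℂ H] [CompleteSpace H]
    (X P : H →L[ℂ] H) (hPidem : IsIdempotentElem P) (hPsa : IsSelfAdjoint P)
    (a : ℝ) (ha : 0 < a) (hXe : essNorm X < a) (hXP : ‖X * (1 - P)‖ < a)
    (E : ℕ → H →L[ℂ] H) (hEP : ∀ n, E n = E n * P)
    (hsot : ∀ ξ : H, Tendsto (fun n => E n ξ) atTop (𝓝 (P ξ)))
    (hsot_star : ∀ ξ : H, Tendsto (fun n => (star (E n)) ξ) atTop (𝓝 (P ξ)))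
    (hnorm : Tendsto (fun n => ‖1 - E n‖) atTop (𝓝 1)) :
    ∀ ε : ℝ, 0 < ε → ∃ n₀ : ℕ, ∀ n ≥ n₀, ‖X * (1 - E n)‖ ≤ a + ε := by
  intro ε hε
  by_contra hcon
  push Not at hcon
  have hfreq : ∃ᶠ n in atTop, a + ε < ‖X * (1 - E n)‖ := by
    rw [Filter.frequently_atTop]
    intro n
    obtain ⟨m, hm, h⟩ := hcon n
    exact ⟨m, hm, h⟩
  have hvec : ∀ n, ∃ x : H, ‖x‖ ≤ 1 ∧
      (a + ε < ‖X * (1 - E n)‖ → a + ε < ‖(X * (1 - E n)) x‖) := by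
    intro n
    by_cases h : a + ε < ‖X * (1 - E n)‖
    · obtain ⟨x, hx, hx'⟩ := ContinuousLinearMap.exists_lt_apply_of_lt_opNorm _ h
      exact ⟨x, hx.le, fun _ => hx'⟩
    · exact ⟨0, by simp, fun h' => absurd h' h⟩
  choose x hx1 hx2 using hvec
  haveI : NeBot (atTop ⊓ 𝓟 {n | a + ε < ‖X * (1 - E n)‖}) :=
    Filter.frequently_mem_iff_neBot.mp hfreq
  obtain ⟨U, hU⟩ := Ultrafilter.exists_le (atTop ⊓ 𝓟 {n | a + ε < ‖X * (1 - E n)‖})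
  have hUtop : (U : Filter ℕ) ≤ atTop := hU.trans inf_le_left
  have hUS : ∀ᶠ n in (U : Filter ℕ), a + ε < ‖X * (1 - E n)‖ :=
    le_principal_iff.mp (hU.trans inf_le_right)
  obtain ⟨x₀, hx₀⟩ := weak_cluster_aux U x hx1
  have hK : ∃ K ∈ {K : H →L[ℂ] H | IsCompactOperator ⇑K}, dist X K < a := by
    refine (Metric.infDist_lt_iff ⟨0, ?_⟩).mp hXe
    exact isCompactOperator_zero
  obtain ⟨K, hKc, hKd⟩ := hK
  rw [dist_eq_norm] at hKd
  have hPin : ∀ y v : H, inner ℂ (P y) v = inner ℂ y (P v) := by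
    intro y v
    rw [← ContinuousLinearMap.adjoint_inner_right, hPsa.adjoint_eq]
  set u : H := x₀ - P x₀ with hu
  let z : ℕ → H := fun n => (1 - E n) (x n) - u
  have hz0 : ∀ v : H, Tendsto (fun n => inner ℂ (z n) v) U (𝓝 0) := by
    intro v
    have h1 := hx₀ v
    have h2 := hx₀ (P v)
    have h3 : Tendsto (fun n => inner ℂ (x n) ((star (E n)) v - P v)) U (𝓝 0) := by
      have h4 : Tendsto (fun n => ‖(star (E n)) v - P v‖) U (𝓝 0) :=
        (tendsto_iff_norm_sub_tendsto_zero.mp (hsot_star v)).mono_left hUtop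
      refine squeeze_zero_norm (fun n => ?_) h4
      calc ‖inner ℂ (x n) ((star (E n)) v - P v)‖ ≤ ‖x n‖ * ‖(star (E n)) v - P v‖ :=
            norm_inner_le_norm _ _
        _ ≤ 1 * ‖(star (E n)) v - P v‖ := by gcongr; exact hx1 n
        _ = _ := one_mul _
    have h5 := ((h1.sub h2).sub h3).sub (tendsto_const_nhds (x := (inner ℂ u v : ℂ)))
    convert h5 using 2 with n
    · simp only [z, inner_sub_left, inner_sub_right, ContinuousLinearMap.sub_apply,
        ContinuousLinearMap.one_apply, ContinuousLinearMap.star_eq_adjoint,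
        ContinuousLinearMap.adjoint_inner_right]
      ring
    · simp only [hu, inner_sub_left, hPin]
      ring
  have hr : Tendsto (fun n => ‖1 - E n‖) U (𝓝 1) := hnorm.mono_left hUtop
  have hyr : ∀ n, ‖(1 - E n) (x n)‖ ≤ ‖1 - E n‖ := fun n => by
    simpa using (1 - E n).le_opNorm_of_le (hx1 n)
  have hzr : ∀ n, ‖z n‖ ≤ ‖1 - E n‖ + ‖u‖ := fun n =>
    (norm_sub_le _ _).trans (by gcongr; exact hyr n)
  have hzb : ∀ᶠ n in (U : Filter ℕ), ‖z n‖ ≤ 2 + ‖u‖ := by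
    filter_upwards [hr.eventually (gt_mem_nhds (show (1 : ℝ) < 2 by norm_num))] with n hn
    linarith [hzr n]
  have hKz := compact_weak_aux U K hKc z _ hzb hz0
  have hKz' : Tendsto (fun n => ‖K (z n)‖) U (𝓝 0) := by simpa using hKz.norm
  have hre : ∀ v : H, Tendsto (fun n => (inner ℂ (z n) v : ℂ).re) U (𝓝 0) := fun v => by
    simpa [Function.comp_def] using (Complex.continuous_re.tendsto _).comp (hz0 v)
  have hXu : ‖X u‖ ≤ a * ‖u‖ := by
    have hPu : P u = 0 := by
      have : P (P x₀) = P x₀ := by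
        rw [← ContinuousLinearMap.mul_apply, hPidem.eq]
      rw [hu, map_sub, this, sub_self]
    have h1 := (X * (1 - P)).le_opNorm u
    have h2 : (X * (1 - P)) u = X u := by
      simp [hPu]
    rw [h2] at h1
    exact h1.trans (by gcongr)
  set w : H := ContinuousLinearMap.adjoint X (X u) with hw
  have hbound : ∀ n, ‖(X * (1 - E n)) (x n)‖ ^ 2 ≤ a ^ 2 * ‖1 - E n‖ ^ 2
      + 2 * (inner ℂ (z n) w : ℂ).re - 2 * a ^ 2 * (inner ℂ (z n) u : ℂ).re
      + 2 * a * (‖1 - E n‖ + ‖u‖) * ‖K (z n)‖ + ‖K (z n)‖ ^ 2 := by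
    intro n
    have hy : (1 - E n) (x n) = z n + u := by simp only [z, sub_add_cancel]
    have e1 : ‖(X * (1 - E n)) (x n)‖ ^ 2
        = ‖X (z n)‖ ^ 2 + 2 * (inner ℂ (z n) w : ℂ).re + ‖X u‖ ^ 2 := by
      rw [ContinuousLinearMap.mul_apply, hy, map_add, @norm_add_sq ℂ, hw,
        ContinuousLinearMap.adjoint_inner_right]
      rfl
    have e2 : ‖(1 - E n) (x n)‖ ^ 2
        = ‖z n‖ ^ 2 + 2 * (inner ℂ (z n) u : ℂ).re + ‖u‖ ^ 2 := by
      rw [hy, @norm_add_sq ℂ]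
      rfl
    have e3 : ‖X (z n)‖ ≤ a * ‖z n‖ + ‖K (z n)‖ := by
      have h1 : X (z n) = (X - K) (z n) + K (z n) := by simp
      rw [h1]
      refine (norm_add_le _ _).trans ?_
      gcongr
      exact ((X - K).le_opNorm (z n)).trans (by gcongr)
    have e4 : ‖X (z n)‖ ^ 2 ≤ (a * ‖z n‖ + ‖K (z n)‖) ^ 2 := by gcongr
    have e5 : ‖X u‖ ^ 2 ≤ (a * ‖u‖) ^ 2 := by gcongr
    have e6 : a ^ 2 * ‖(1 - E n) (x n)‖ ^ 2 ≤ a ^ 2 * ‖1 - E n‖ ^ 2 := by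
      gcongr; exact hyr n
    have e7 : 2 * a * ‖z n‖ * ‖K (z n)‖ ≤ 2 * a * (‖1 - E n‖ + ‖u‖) * ‖K (z n)‖ := by
      gcongr; exact hzr n
    rw [e2] at e6
    rw [e1]
    nlinarith
  have hlim : Tendsto (fun n => a ^ 2 * ‖1 - E n‖ ^ 2
      + 2 * (inner ℂ (z n) w : ℂ).re - 2 * a ^ 2 * (inner ℂ (z n) u : ℂ).re
      + 2 * a * (‖1 - E n‖ + ‖u‖) * ‖K (z n)‖ + ‖K (z n)‖ ^ 2) U
      (𝓝 (a ^ 2 * 1 ^ 2 + 2 * 0 - 2 * a ^ 2 * 0 + 2 * a * (1 + ‖u‖) * 0 + 0 ^ 2)) :=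
    (((((hr.pow 2).const_mul _).add ((hre w).const_mul _)).sub ((hre u).const_mul _)).add
      (((hr.add_const _).const_mul _).mul hKz')).add (hKz'.pow 2)
  have hfin : (a + ε) ^ 2
      ≤ a ^ 2 * 1 ^ 2 + 2 * 0 - 2 * a ^ 2 * 0 + 2 * a * (1 + ‖u‖) * 0 + 0 ^ 2 := by
    refine ge_of_tendsto hlim ?_
    filter_upwards [hUS] with n hn
    refine le_trans ?_ (hbound n)
    have := hx2 n hn
    gcongr
  nlinarith
end

section
/- If P is a collection of nonempty bounded open intervals of ℝ whose union equals (a,b) for some real numbers a < b, then (a,b) has an inner cover with respect to P. -/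
open Set

/-- A linked list of (nonempty bounded open) intervals `(a i, b i)` of `ℝ`, indexed by a
nonempty set `S` of consecutive integers, consecutive intervals overlapping and the chain
condition `a i < b (i-1) < a (i+1) < b i` holding whenever the indices involved lie in `S`. -/
structure LinkedList where
  S : Set ℤ
  nonempty : S.Nonempty
  consecutive : ∀ i ∈ S, ∀ k ∈ S, ∀ j : ℤ, i ≤ j → j ≤ k → j ∈ S
  a : ℤ → ℝ
  b : ℤ → ℝ
  lt : ∀ i ∈ S, a i < b i
  mono_a : ∀ i : ℤ, i ∈ S → i + 1 ∈ S → a i < a (i + 1)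
  mono_b : ∀ i : ℤ, i ∈ S → i + 1 ∈ S → b i < b (i + 1)
  overlap : ∀ i : ℤ, i ∈ S → i + 1 ∈ S → a (i + 1) < b i
  gap : ∀ i : ℤ, i ∈ S → i + 2 ∈ S → b i < a (i + 2)

namespace LinkedList

/-- The `i`-th interval of the list. -/
def interval (L : LinkedList) (i : ℤ) : Set ℝ := Ioo (L.a i) (L.b i)

/-- The union of the intervals of the list. -/
def union (L : LinkedList) : Set ℝ := ⋃ i ∈ L.S, L.interval i

/-- The list has a least element. -/
def HasLeast (L : LinkedList) : Prop := ∃ i ∈ L.S, ∀ j ∈ L.S, i ≤ j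

/-- The list has a greatest element. -/
def HasGreatest (L : LinkedList) : Prop := ∃ i ∈ L.S, ∀ j ∈ L.S, j ≤ i

end LinkedList

/-- `P` is a collection of nonempty bounded open intervals of `ℝ`. -/
def IsIntervalCollection (P : Set (Set ℝ)) : Prop :=
  ∀ J ∈ P, ∃ c d : ℝ, c < d ∧ J = Ioo c d

/-- An interval is dominated by `P` if it is contained in some member of `P`. -/
def Dominated (P : Set (Set ℝ)) (J : Set ℝ) : Prop := ∃ K ∈ P, J ⊆ K

/-- An interval is approximately dominated by `P` if it is the union of an increasing
sequence of intervals, each dominated by `P`. -/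
def ApproxDominated (P : Set (Set ℝ)) (J : Set ℝ) : Prop :=
  ∃ c d : ℕ → ℝ, (∀ n, c n < d n) ∧
    (∀ n, Ioo (c n) (d n) ⊆ Ioo (c (n + 1)) (d (n + 1))) ∧
    (∀ n, Dominated P (Ioo (c n) (d n))) ∧ J = ⋃ n, Ioo (c n) (d n)

/-- An inner cover of `(x, y)` with respect to `P`: a linked list with union `(x, y)`, each of
whose intervals is approximately dominated by `P`. -/
def IsInnerCover (P : Set (Set ℝ)) (x y : ℝ) (L : LinkedList) : Prop :=
  L.union = Ioo x y ∧ ∀ i ∈ L.S, ApproxDominated P (L.interval i)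

/-- An outer cover of `(x, y)` with respect to `P`: a linked list with union `(x, y)` such that
every member of `P` is contained in some interval of the list. -/
def IsOuterCover (P : Set (Set ℝ)) (x y : ℝ) (L : LinkedList) : Prop :=
  L.union = Ioo x y ∧ ∀ J ∈ P, ∃ i ∈ L.S, J ⊆ L.interval i

/-- `L_P(x)`: the infimum of left endpoints of members of `P` containing `x`. -/
noncomputable def leftEnd (P : Set (Set ℝ)) (x : ℝ) : ℝ :=
  sInf {c | ∃ d, Ioo c d ∈ P ∧ x ∈ Ioo c d}

/-- `R_P(x)`: the supremum of right endpoints of members of `P` containing `x`. -/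
noncomputable def rightEnd (P : Set (Set ℝ)) (x : ℝ) : ℝ :=
  sSup {d | ∃ c, Ioo c d ∈ P ∧ x ∈ Ioo c d}

/-- A greedy sequence going to the right end of `(a, b)`. -/
theorem exists_greedy (δ : ℝ → ℝ) (a b x0 : ℝ) (hx0 : x0 ∈ Ioo a b)
    (hL : ∀ x y, δ x ≤ δ y + |x - y|) (hpos : ∀ x ∈ Ioo a b, 0 < δ x)
    (hb : ∀ x ∈ Ioo a b, x + δ x ≤ b) :
    ∃ u : ℕ → ℝ, u 0 = x0 ∧ (∀ n, u n ∈ Ioo a b) ∧ (∀ n, u (n + 1) = u n + δ (u n) / 8) ∧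
      ∀ c < b, ∃ n, c < u n := by
  let u : ℕ → ℝ := fun n => Nat.rec x0 (fun _ x => x + δ x / 8) n
  have hs : ∀ n, u (n + 1) = u n + δ (u n) / 8 := fun n => rfl
  have hm : ∀ n, u n ∈ Ioo a b := by
    intro n
    induction n with
    | zero => exact hx0
    | succ k ih =>
      have h1 := hpos _ ih
      have h2 := hb _ ih
      rw [hs]
      exact ⟨by linarith [ih.1], by linarith⟩
  refine ⟨u, rfl, hm, hs, ?_⟩
  have hmono : Monotone u := monotone_nat_of_le_succ fun n => by
    rw [hs]; linarith [hpos _ (hm n)]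
  have hbdd : BddAbove (range u) := ⟨b, by rintro _ ⟨n, rfl⟩; exact (hm n).2.le⟩
  have ht := tendsto_atTop_ciSup hmono hbdd
  set c := ⨆ i, u i with hc
  have hle : ∀ n, u n ≤ c := fun n => le_ciSup hbdd n
  intro d hd
  by_contra! hcon
  have hcd : c ≤ d := ciSup_le hcon
  have hcm : c ∈ Ioo a b := ⟨lt_of_lt_of_le (hm 0).1 (hle 0), by linarith⟩
  have hp := hpos _ hcm
  obtain ⟨n, hn⟩ := (ht.eventually (lt_mem_nhds (show c - δ c / 16 < c by linarith))).exists
  have h1 := hL c (u n)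
  rw [abs_of_nonneg (by linarith [hle n])] at h1
  have h2 := hle (n + 1)
  rw [hs] at h2
  linarith

/-- A bi-infinite greedy sequence. -/
theorem exists_bi (δ : ℝ → ℝ) (a b : ℝ) (hab : a < b)
    (hL : ∀ x y, δ x ≤ δ y + |x - y|) (hpos : ∀ x ∈ Ioo a b, 0 < δ x)
    (hb : ∀ x ∈ Ioo a b, x + δ x ≤ b) (ha : ∀ x ∈ Ioo a b, a ≤ x - δ x) :
    ∃ s : ℤ → ℝ, (∀ k, s k ∈ Ioo a b) ∧ (∀ k, s k < s (k + 1)) ∧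
      (∀ k, s (k + 1) ≤ s k + δ (s k) / 7) ∧
      (∀ c < b, ∃ n, c < s n) ∧ (∀ c > a, ∃ n, s n < c) := by
  have hmid : (a + b) / 2 ∈ Ioo a b := ⟨by linarith, by linarith⟩
  obtain ⟨u, u0, um, us, ut⟩ := exists_greedy δ a b _ hmid hL hpos hb
  obtain ⟨v, v0, vm, vs, vt⟩ := exists_greedy (fun x => δ (-x)) (-b) (-a) (-((a + b) / 2))
    ⟨by linarith, by linarith⟩
    (fun x y => by
      have := hL (-x) (-y)
      rwa [show -x - -y = -(x - y) by ring, abs_neg] at this)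
    (fun x hx => hpos _ ⟨by linarith [hx.2], by linarith [hx.1]⟩)
    (fun x hx => by
      have := ha (-x) ⟨by linarith [hx.2], by linarith [hx.1]⟩
      linarith)
  have vm' : ∀ n, -v n ∈ Ioo a b := fun n => ⟨by linarith [(vm n).2], by linarith [(vm n).1]⟩
  let s : ℤ → ℝ := fun k => if 0 ≤ k then u k.toNat else -v (-k).toNat
  have sp : ∀ n : ℕ, s n = u n := fun n => by simp [s]
  have sn : ∀ n : ℕ, s (-n) = -v n := fun n => by
    rcases Nat.eq_zero_or_pos n with rfl | h
    · simp [s, u0, v0]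
    · have : ¬ (0 : ℤ) ≤ -n := by omega
      simp only [s, if_neg this]
      simp
  have key : ∀ k, s k ∈ Ioo a b ∧ s k < s (k + 1) ∧ s (k + 1) ≤ s k + δ (s k) / 7 := by
    intro k
    rcases le_or_gt 0 k with h | h
    · lift k to ℕ using h
      have e : s (k + 1) = u (k + 1) := by exact_mod_cast sp (k + 1)
      rw [sp, e, us]
      have := hpos _ (um k)
      exact ⟨um k, by linarith, by linarith⟩
    · obtain ⟨n, rfl⟩ : ∃ n : ℕ, k = -((n + 1 : ℕ) : ℤ) := ⟨(-k - 1).toNat, by omega⟩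
      have e : s (-((n + 1 : ℕ) : ℤ) + 1) = -v n := by
        rw [← sn]; congr 1; push_cast; ring
      rw [sn, e]
      have h1 := hpos _ (vm' n)
      have h2 := hL (-v n) (-v (n + 1))
      have h3 := vs n
      rw [abs_of_nonneg (by linarith)] at h2
      exact ⟨vm' _, by linarith, by linarith⟩
  refine ⟨s, fun k => (key k).1, fun k => (key k).2.1, fun k => (key k).2.2, ?_, ?_⟩
  · intro c hc
    obtain ⟨n, hn⟩ := ut c hc
    exact ⟨n, by rwa [sp]⟩
  · intro c hc
    obtain ⟨n, hn⟩ := vt (-c) (by linarith)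
    exact ⟨-n, by rw [sn]; linarith⟩

/-- The Lebesgue-number function of the cover. -/
theorem exists_delta (P : Set (Set ℝ)) (a b : ℝ) (hne : P.Nonempty)
    (hP : IsIntervalCollection P) (hU : ⋃₀ P = Ioo a b) :
    ∃ δ : ℝ → ℝ, (∀ x y, δ x ≤ δ y + |x - y|) ∧ (∀ x ∈ Ioo a b, 0 < δ x) ∧
      (∀ x, ∀ r < δ x, ∃ K ∈ P, Ioo (x - r) (x + r) ⊆ K) := by
  let T : ℝ → Set ℝ := fun x => {r | 0 ≤ r ∧ ∃ K ∈ P, Ioo (x - r) (x + r) ⊆ K}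
  have hbd : ∀ x, BddAbove (T x) := by
    intro x
    refine ⟨|b - a|, ?_⟩
    rintro r ⟨hr, K, hK, hs⟩
    by_contra! hlt
    have hr0 : 0 < r := lt_of_le_of_lt (abs_nonneg _) hlt
    have h1 : Ioo (x - r) (x + r) ⊆ Ioo a b := hs.trans (hU ▸ subset_sUnion_of_mem hK)
    rw [Ioo_subset_Ioo_iff (by linarith)] at h1
    have := le_abs_self (b - a)
    linarith [h1.1, h1.2]
  have hnn : ∀ x, 0 ≤ sSup (T x) := fun x => Real.sSup_nonneg fun r hr => hr.1
  have hlt : ∀ x, ∀ r < sSup (T x), T x = ∅ ∨ ∃ K ∈ P, Ioo (x - r) (x + r) ⊆ K := by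
    intro x r hr
    rcases (T x).eq_empty_or_nonempty with h | h
    · exact Or.inl h
    · obtain ⟨q, ⟨_, K, hK, hs⟩, hq⟩ := exists_lt_of_lt_csSup h hr
      exact Or.inr ⟨K, hK, (Ioo_subset_Ioo (by linarith) (by linarith)).trans hs⟩
  refine ⟨fun x => sSup (T x), ?_, ?_, ?_⟩
  · intro x y
    refine Real.sSup_le ?_ (add_nonneg (hnn y) (abs_nonneg _))
    rintro r ⟨hr, K, hK, hs⟩
    rcases le_or_gt r |x - y| with h | h
    · linarith [hnn y]
    · have h1 := le_abs_self (x - y)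
      have h2 := neg_abs_le (x - y)
      have : r - |x - y| ∈ T y :=
        ⟨by linarith, K, hK, (Ioo_subset_Ioo (by linarith) (by linarith)).trans hs⟩
      linarith [le_csSup (hbd y) this]
  · intro x hx
    rw [← hU] at hx
    obtain ⟨K, hK, hxK⟩ := hx
    obtain ⟨c, d, hcd, rfl⟩ := hP K hK
    have hm : 0 < min (x - c) (d - x) := lt_min (by linarith [hxK.1]) (by linarith [hxK.2])
    refine lt_of_lt_of_le hm (le_csSup (hbd x) ⟨hm.le, _, hK, Ioo_subset_Ioo ?_ ?_⟩)
    · linarith [min_le_left (x - c) (d - x)]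
    · linarith [min_le_right (x - c) (d - x)]
  · intro x r hr
    rcases hlt x r hr with h | h
    · obtain ⟨K, hK⟩ := hne
      refine absurd h (nonempty_iff_ne_empty.mp ⟨0, le_rfl, K, hK, by simp⟩)
    · exact h

/-- If `P` is a collection of nonempty bounded open intervals with
`⋃₀ P = (a, b)`, then `(a, b)` has an inner cover with respect to `P`. -/
theorem stmt11 (P : Set (Set ℝ)) (a b : ℝ) (hab : a < b)
    (hP : IsIntervalCollection P) (hU : ⋃₀ P = Ioo a b) :
    ∃ L : LinkedList, IsInnerCover P a b L := by
  have hne : P.Nonempty := by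
    have h : (a + b) / 2 ∈ ⋃₀ P := by rw [hU]; exact ⟨by linarith, by linarith⟩
    obtain ⟨K, hK, _⟩ := h
    exact ⟨K, hK⟩
  obtain ⟨δ, hL, hpos, hdom⟩ := exists_delta P a b hne hP hU
  have hbd : ∀ x ∈ Ioo a b, ∀ r < δ x, 0 < r → a ≤ x - r ∧ x + r ≤ b := by
    intro x hx r hr h0
    obtain ⟨K, hK, hs⟩ := hdom x r hr
    have h1 : Ioo (x - r) (x + r) ⊆ Ioo a b := hs.trans (hU ▸ subset_sUnion_of_mem hK)
    rwa [Ioo_subset_Ioo_iff (by linarith)] at h1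
  obtain ⟨s, sm, slt, sle, st, sb⟩ := exists_bi δ a b hab hL hpos
    (fun x hx => by
      by_contra! h
      have h0 := hpos x hx
      have := (hbd x hx ((max (b - x) 0 + δ x) / 2)
        (by rcases max_cases (b - x) 0 with h | h <;> linarith)
        (by linarith [le_max_right (b - x) 0])).2
      linarith [le_max_left (b - x) 0])
    (fun x hx => by
      by_contra! h
      have h0 := hpos x hx
      have := (hbd x hx ((max (x - a) 0 + δ x) / 2)
        (by rcases max_cases (x - a) 0 with h | h <;> linarith)
        (by linarith [le_max_right (x - a) 0])).1
      linarith [le_max_left (x - a) 0])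
  have hmono : StrictMono s := strictMono_int_of_lt_succ slt
  have hd3 : ∀ k, Dominated P (Ioo (s k) (s (k + 3))) := by
    intro k
    have e1 := slt k
    have e2 := slt (k + 1)
    have e3 := slt (k + 2)
    have f1 := sle k
    have f2 := sle (k + 1)
    have f3 := sle (k + 2)
    rw [show k + 1 + 1 = k + 2 by ring] at e2 f2
    rw [show k + 2 + 1 = k + 3 by ring] at e3 f3
    have g1 := hL (s (k + 1)) (s k)
    have g2 := hL (s (k + 2)) (s (k + 1))
    rw [abs_of_pos (by linarith)] at g1 g2
    have h0 := hpos _ (sm k)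
    obtain ⟨K, hK, hs⟩ := hdom (s k) (δ (s k) * (9 / 10)) (by linarith)
    exact ⟨K, hK, (Ioo_subset_Ioo (by linarith) (by linarith)).trans hs⟩
  refine ⟨⟨univ, univ_nonempty, fun _ _ _ _ _ _ _ => mem_univ _, fun i => s (2 * i),
    fun i => s (2 * i + 3), ?_, ?_, ?_, ?_, ?_⟩, ?_, ?_⟩
  · intro i _; exact hmono (by omega)
  · intro i _ _; exact hmono (by omega)
  · intro i _ _; exact hmono (by omega)
  · intro i _ _; exact hmono (by omega)
  · intro i _ _; exact hmono (by omega)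
  · ext y
    simp only [LinkedList.union, LinkedList.interval, mem_iUnion, mem_univ, exists_prop, true_and]
    constructor
    · rintro ⟨i, h1, h2⟩
      exact ⟨(sm _).1.trans h1, h2.trans (sm _).2⟩
    · rintro ⟨h1, h2⟩
      obtain ⟨N, hN⟩ := st y h2
      obtain ⟨k, hk, hmax⟩ := Int.exists_greatest_of_bdd (P := fun k => s k < y)
        ⟨N, fun z hz => (hmono.lt_iff_lt.mp (lt_trans hz hN)).le⟩ (sb y h1)
      have hy : y ≤ s (k + 1) := by
        by_contra! h
        have := hmax _ h
        omega
      refine ⟨k / 2, lt_of_le_of_lt (hmono.monotone (by omega)) hk,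
        lt_of_le_of_lt hy (hmono (by omega))⟩
  · intro i _
    exact ⟨fun _ => s (2 * i), fun _ => s (2 * i + 3), fun _ => hmono (by omega),
      fun _ => subset_rfl, fun _ => hd3 _, (iUnion_const _).symm⟩
end

section
/- Let P be a collection of nonempty bounded open intervals of ℝ with ∪P = (a,b) for real numbers a < b. Then the following are equivalent: (1) there exists x > a with L_P(x) = a; (2) there is an inner cover of (a,b) with respect to P having a least element. -/
open Set

lemma aux_dom_bounds {P : Set (Set ℝ)} {a b : ℝ} (hU : ⋃₀ P = Ioo a b) {c d : ℝ} (hcd : c < d)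
    (h : Dominated P (Ioo c d)) : a ≤ c ∧ d ≤ b := by
  obtain ⟨K, hK, hs⟩ := h
  have : Ioo c d ⊆ Ioo a b := by
    rw [← hU]; exact hs.trans (subset_sUnion_of_mem hK)
  exact (Ioo_subset_Ioo_iff hcd).1 this

lemma Dominated.mono {P : Set (Set ℝ)} {J K : Set ℝ} (h : Dominated P K) (hs : J ⊆ K) :
    Dominated P J := by
  obtain ⟨M, hM, h⟩ := h
  exact ⟨M, hM, hs.trans h⟩

lemma aux_rho (P : Set (Set ℝ)) (a b : ℝ) (hab : a < b)
    (hP : IsIntervalCollection P) (hU : ⋃₀ P = Ioo a b) :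
    ∃ ρ : ℝ → ℝ, (∀ t ∈ Ioo a b, 0 < ρ t ∧ ρ t ≤ t - a ∧ ρ t ≤ b - t) ∧
      (∀ t r, r < ρ t → Dominated P (Ioo (t - r) (t + r))) ∧
      (∀ s t, ρ t ≤ ρ s + |s - t|) := by
  have hne : P.Nonempty := by
    have : (a + b) / 2 ∈ ⋃₀ P := by rw [hU]; constructor <;> linarith
    obtain ⟨K, hK, _⟩ := this
    exact ⟨K, hK⟩
  let T : ℝ → Set ℝ := fun t => {r | 0 ≤ r ∧ Dominated P (Ioo (t - r) (t + r))}
  have hT0 : ∀ t, (0 : ℝ) ∈ T t := fun t => by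
    obtain ⟨K, hK⟩ := hne
    exact ⟨le_rfl, K, hK, by simp⟩
  have hbd : ∀ t, BddAbove (T t) := fun t => by
    refine ⟨b - a, ?_⟩
    rintro r ⟨h0, hr⟩
    rcases h0.eq_or_lt with h | h
    · linarith
    · have := aux_dom_bounds hU (by linarith) hr
      linarith [this.1, this.2]
  have hnn : ∀ t, 0 ≤ sSup (T t) := fun t => le_csSup (hbd t) (hT0 t)
  have hdom : ∀ t r, r < sSup (T t) → Dominated P (Ioo (t - r) (t + r)) := by
    intro t r hr
    obtain ⟨r', hr', hlt⟩ := exists_lt_of_lt_csSup ⟨0, hT0 t⟩ hr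
    exact hr'.2.mono (Ioo_subset_Ioo (by linarith) (by linarith))
  refine ⟨fun t => sSup (T t), ?_, hdom, ?_⟩
  · intro t ht
    refine ⟨?_, ?_, ?_⟩
    · have : t ∈ ⋃₀ P := by rw [hU]; exact ht
      obtain ⟨K, hK, htK⟩ := this
      obtain ⟨c, d, hcd, rfl⟩ := hP K hK
      have h1 : 0 < min (t - c) (d - t) := lt_min (by linarith [htK.1]) (by linarith [htK.2])
      refine h1.trans_le (le_csSup (hbd t) ⟨h1.le, _, hK, Ioo_subset_Ioo ?_ ?_⟩)
      · linarith [min_le_left (t - c) (d - t)]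
      · linarith [min_le_right (t - c) (d - t)]
    · refine csSup_le ⟨0, hT0 t⟩ ?_
      rintro r ⟨h0, hr⟩
      rcases h0.eq_or_lt with h | h
      · linarith [ht.1]
      · have := aux_dom_bounds hU (by linarith) hr
        linarith [this.1, this.2]
    · refine csSup_le ⟨0, hT0 t⟩ ?_
      rintro r ⟨h0, hr⟩
      rcases h0.eq_or_lt with h | h
      · linarith [ht.2]
      · have := aux_dom_bounds hU (by linarith) hr
        linarith [this.1, this.2]
  · intro s t
    refine csSup_le ⟨0, hT0 t⟩ ?_
    rintro r ⟨h0, hr⟩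
    by_cases h : r ≤ |s - t|
    · linarith [hnn s]
    · have : r - |s - t| ≤ sSup (T s) := by
        refine le_csSup (hbd s) ⟨by linarith, hr.mono (Ioo_subset_Ioo ?_ ?_)⟩
        · linarith [neg_abs_le (s - t)]
        · linarith [le_abs_self (s - t)]
      show r ≤ sSup (T s) + |s - t|
      linarith

lemma aux_seq (P : Set (Set ℝ)) (a b : ℝ) (hab : a < b)
    (hP : IsIntervalCollection P) (hU : ⋃₀ P = Ioo a b) (x : ℝ) (hx : x ∈ Ioo a b) :
    ∃ y : ℕ → ℝ, StrictMono y ∧ (∀ n, y n ∈ Ioo a b) ∧ y 1 ≤ x ∧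
      (∀ n, Dominated P (Ioo (y n) (y (n + 3)))) ∧ ∀ z < b, ∃ n, z < y n := by
  obtain ⟨ρ, h1, h2, h3⟩ := aux_rho P a b hab hP hU
  obtain ⟨hx1, hx2⟩ := hx
  let y : ℕ → ℝ := fun n => Nat.rec ((a + x) / 2) (fun _ t => t + ρ t / 10) n
  have hs : ∀ n, y (n + 1) = y n + ρ (y n) / 10 := fun n => rfl
  have h0 : y 0 = (a + x) / 2 := rfl
  have hm : ∀ n, y n ∈ Ioo a b := by
    intro n
    induction n with
    | zero => rw [h0]; constructor <;> linarith
    | succ n ih =>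
      have := h1 _ ih
      obtain ⟨i1, i2⟩ := ih
      rw [hs]; constructor <;> linarith
  have hmono : StrictMono y := strictMono_nat_of_lt_succ fun n => by
    rw [hs]; linarith [(h1 _ (hm n)).1]
  refine ⟨y, hmono, hm, ?_, ?_, ?_⟩
  · have := h1 _ (hm 0)
    have e := hs 0
    rw [zero_add] at e
    linarith [this.2.1, h0]
  · intro n
    have hL : ∀ k, ρ (y (k + 1)) ≤ ρ (y k) + ρ (y k) / 10 := fun k => by
      have := h3 (y k) (y (k + 1))
      rw [abs_sub_comm, abs_of_pos (by linarith [hmono (Nat.lt_succ_self k)])] at this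
      linarith [hs k]
    have hp := (h1 _ (hm n)).1
    refine (h2 (y n) (ρ (y n) / 2) (by linarith)).mono (Ioo_subset_Ioo (by linarith) ?_)
    linarith [hL n, hL (n + 1), hs n, hs (n + 1), hs (n + 2)]
  · intro z hz
    by_contra hcon
    have hc : ∀ n, y n ≤ z := fun n => not_lt.1 fun h => hcon ⟨n, h⟩
    have hbd : BddAbove (range y) := ⟨z, by rintro _ ⟨n, rfl⟩; exact hc n⟩
    have hle : ∀ n, y n ≤ sSup (range y) := fun n => le_csSup hbd ⟨n, rfl⟩
    have hlz : sSup (range y) ≤ z := csSup_le (range_nonempty _) (by rintro _ ⟨n, rfl⟩; exact hc n)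
    set l := sSup (range y)
    have hl : l ∈ Ioo a b := ⟨(hm 0).1.trans_le (hle 0), by linarith⟩
    have hp := (h1 l hl).1
    obtain ⟨_, ⟨n, rfl⟩, hn⟩ := exists_lt_of_lt_csSup (range_nonempty y)
      (show l - ρ l / 20 < sSup (range y) by linarith)
    have := h3 (y n) l
    rw [abs_sub_comm, abs_of_nonneg (by linarith [hle n])] at this
    linarith [hle (n + 1), hs n]

/-- A linked list indexed by the nonnegative integers. -/
def auxList (A B : ℕ → ℝ) (h1 : ∀ n, A n < A (n + 1)) (h2 : ∀ n, B n < B (n + 1))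
    (h3 : ∀ n, A (n + 1) < B n) (h4 : ∀ n, B n < A (n + 2)) : LinkedList where
  S := Ici 0
  nonempty := ⟨0, le_refl (0 : ℤ)⟩
  consecutive := fun i hi _ _ j hij _ => le_trans (show (0 : ℤ) ≤ i from hi) hij
  a := fun i => A i.toNat
  b := fun i => B i.toNat
  lt := fun i _ => (h1 _).trans (h3 _)
  mono_a := fun i hi _ => by
    lift i to ℕ using hi
    exact h1 i
  mono_b := fun i hi _ => by
    lift i to ℕ using hi
    exact h2 i
  overlap := fun i hi _ => by
    lift i to ℕ using hi
    exact h3 i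
  gap := fun i hi _ => by
    lift i to ℕ using hi
    exact h4 i

lemma aux_forward (P : Set (Set ℝ)) (a b : ℝ) (hab : a < b)
    (hP : IsIntervalCollection P) (hU : ⋃₀ P = Ioo a b) (x : ℝ) (hax : a < x)
    (hxP : x ∈ ⋃₀ P) (hx : leftEnd P x = a) :
    ∃ L : LinkedList, IsInnerCover P a b L ∧ L.HasLeast := by
  have hxm : x ∈ Ioo a b := hU ▸ hxP
  obtain ⟨y, hy, hym, hy1, hyd, hyb⟩ := aux_seq P a b hab hP hU x hxm
  have hdom : ∀ c, a < c → Dominated P (Ioo c x) := by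
    intro c hc
    have hne : {c | ∃ d, Ioo c d ∈ P ∧ x ∈ Ioo c d}.Nonempty := by
      obtain ⟨K, hK, hxK⟩ := hxP
      obtain ⟨c, d, _, rfl⟩ := hP K hK
      exact ⟨c, d, hK, hxK⟩
    obtain ⟨c', ⟨d, hd, hxd⟩, hlt⟩ := exists_lt_of_csInf_lt hne
      (show leftEnd P x < c by rw [hx]; exact hc)
    exact ⟨_, hd, Ioo_subset_Ioo hlt.le hxd.2.le⟩
  let A : ℕ → ℝ := fun n => Nat.casesOn n a (fun k => y (2 * k))
  have hA0 : A 0 = a := rfl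
  have hAs : ∀ k, A (k + 1) = y (2 * k) := fun k => rfl
  let B : ℕ → ℝ := fun n => y (2 * n + 1)
  have h1 : ∀ n, A n < A (n + 1) := by
    rintro (_ | n)
    · exact (hym 0).1
    · rw [hAs, hAs]; exact hy (by omega)
  refine ⟨auxList A B h1 (fun n => hy (by omega)) (fun n => hy (by omega))
    (fun n => hy (by omega)), ⟨?_, ?_⟩, 0, le_refl (0 : ℤ), fun j hj => hj⟩
  · ext z
    simp only [LinkedList.union, mem_iUnion, LinkedList.interval]
    constructor
    · rintro ⟨i, hi, hz⟩
      have hz1 : A i.toNat < z := hz.1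
      have hz2 : z < y (2 * i.toNat + 1) := hz.2
      refine ⟨?_, hz2.trans (hym _).2⟩
      rcases h : i.toNat with _ | k
      · rwa [h] at hz1
      · rw [h, hAs] at hz1
        exact (hym _).1.trans hz1
    · intro hz
      suffices ∃ n : ℕ, A n < z ∧ z < B n by
        obtain ⟨n, hn⟩ := this
        exact ⟨(n : ℤ), Int.natCast_nonneg n, hn⟩
      classical
      have hex := hyb z hz.2
      by_cases hz1 : z < y 1
      · exact ⟨0, hz.1, hz1⟩
      have hn := Nat.find_spec hex
      have hmin : ∀ m, m < Nat.find hex → ¬ z < y m := fun m hm => Nat.find_min hex hm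
      generalize Nat.find hex = n at hn hmin
      have hn2 : 2 ≤ n := by
        by_contra h
        exact hz1 (hn.trans_le (hy.monotone (by omega)))
      have hk := hmin (n - 1) (by omega)
      push Not at hk
      refine ⟨n / 2, ?_, hn.trans_le (hy.monotone (by omega))⟩
      obtain ⟨k, hk'⟩ : ∃ k, n / 2 = k + 1 := ⟨n / 2 - 1, by omega⟩
      rw [hk', hAs]
      exact lt_of_lt_of_le (hy (by omega)) hk
  · intro i hi
    show ApproxDominated P (Ioo (A i.toNat) (B i.toNat))
    rcases i.toNat with _ | k
    · have hp : 0 < y 1 - a := by linarith [(hym 1).1]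
      have hc : ∀ n : ℕ, a < a + (y 1 - a) / ((n : ℝ) + 2) := fun n => by
        have : 0 < (y 1 - a) / ((n : ℝ) + 2) := by positivity
        linarith
      refine ⟨fun n => a + (y 1 - a) / ((n : ℝ) + 2), fun _ => y 1, ?_, ?_, ?_, ?_⟩
      · intro n
        have : (y 1 - a) / ((n : ℝ) + 2) < y 1 - a := div_lt_self hp (by linarith [n.cast_nonneg (α := ℝ)])
        show a + (y 1 - a) / ((n : ℝ) + 2) < y 1
        linarith
      · intro n
        refine Ioo_subset_Ioo ?_ le_rfl
        push_cast
        gcongr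
        linarith
      · intro n
        exact (hdom _ (hc n)).mono (Ioo_subset_Ioo le_rfl hy1)
      · ext z
        simp only [mem_iUnion]
        constructor
        · rintro ⟨hz1, hz2⟩
          have hz1 : a < z := hz1
          obtain ⟨n, hn⟩ := exists_nat_gt ((y 1 - a) / (z - a))
          refine ⟨n, ?_, hz2⟩
          have hza : 0 < z - a := by linarith
          have hn0 : (0 : ℝ) < (n : ℝ) + 2 := by positivity
          have : (y 1 - a) / ((n : ℝ) + 2) < z - a := by
            rw [div_lt_iff₀ hza] at hn
            rw [div_lt_iff₀ hn0]
            nlinarith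
          linarith
        · rintro ⟨n, hz1, hz2⟩
          exact ⟨(hc n).trans hz1, hz2⟩
    · refine ⟨fun _ => y (2 * k), fun _ => y (2 * k + 3), fun _ => hy (by omega),
        fun _ => subset_rfl, fun _ => hyd _, ?_⟩
      rw [iUnion_const]
      rfl

lemma aux_backward (P : Set (Set ℝ)) (a b : ℝ)
    (hP : IsIntervalCollection P) (hU : ⋃₀ P = Ioo a b) (L : LinkedList)
    (hL : IsInnerCover P a b L) (hl : L.HasLeast) :
    ∃ x, a < x ∧ x ∈ ⋃₀ P ∧ leftEnd P x = a := by
  obtain ⟨hun, happ⟩ := hL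
  obtain ⟨i, hi, hmin⟩ := hl
  have hge : ∀ n : ℕ, i + n ∈ L.S → L.a i ≤ L.a (i + n) := by
    intro n
    induction n with
    | zero => intro _; simp
    | succ n ih =>
      intro hn
      have hm : i + n ∈ L.S := L.consecutive i hi _ hn _ (by omega) (by push_cast; omega)
      have h := L.mono_a _ hm (by rw [add_assoc]; exact_mod_cast hn)
      have e : i + ((n + 1 : ℕ) : ℤ) = i + n + 1 := by push_cast; ring
      rw [e]
      exact (ih hm).trans h.le
  have hge' : ∀ j ∈ L.S, L.a i ≤ L.a j := by
    intro j hj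
    have h := hge (j - i).toNat
    have e : i + ((j - i).toNat : ℤ) = j := by have := hmin j hj; omega
    rw [e] at h
    exact h hj
  have hlt := L.lt i hi
  have hsub : Ioo (L.a i) (L.b i) ⊆ Ioo a b := by
    rw [← hun]
    exact subset_biUnion_of_mem (u := L.interval) hi
  have hle := ((Ioo_subset_Ioo_iff hlt).1 hsub).1
  have hab : a < b := by
    have := ((Ioo_subset_Ioo_iff hlt).1 hsub).2
    linarith
  have hai : L.a i = a := by
    refine le_antisymm ?_ hle
    by_contra! h
    have hm : (a + min (L.a i) b) / 2 ∈ Ioo a b := by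
      have := lt_min h hab
      constructor <;> linarith [min_le_right (L.a i) b]
    rw [← hun] at hm
    simp only [LinkedList.union, mem_iUnion, LinkedList.interval] at hm
    obtain ⟨j, hj, hm⟩ := hm
    linarith [hm.1, hge' j hj, min_le_left (L.a i) b]
  obtain ⟨c, d, hcd, hinc, hdom, hJ⟩ := happ i hi
  have hJ : Ioo a (L.b i) = ⋃ n, Ioo (c n) (d n) := by rw [← hJ, ← hai]; rfl
  obtain ⟨x, hx⟩ : (Ioo (c 0) (d 0)).Nonempty := nonempty_Ioo.2 (hcd 0)
  have hxn : ∀ n, x ∈ Ioo (c n) (d n) := by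
    intro n
    induction n with
    | zero => exact hx
    | succ n ih => exact hinc n ih
  have hxJ : x ∈ Ioo a (L.b i) := by rw [hJ]; exact mem_iUnion.2 ⟨0, hx⟩
  have hlow : ∀ c' ∈ {c | ∃ d, Ioo c d ∈ P ∧ x ∈ Ioo c d}, a ≤ c' := by
    rintro c' ⟨d', hP', hx'⟩
    exact (aux_dom_bounds hU (hx'.1.trans hx'.2) ⟨_, hP', subset_rfl⟩).1
  have hxU : x ∈ ⋃₀ P := by
    rw [hU]; apply hsub; rw [hai]; exact hxJ
  refine ⟨x, hxJ.1, hxU, le_antisymm ?_ ?_⟩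
  · refine le_of_forall_gt_imp_ge_of_dense fun e he => ?_
    have hz : min e x ∈ Ioo a (L.b i) :=
      ⟨lt_min he hxJ.1, (min_le_right _ _).trans_lt hxJ.2⟩
    rw [hJ] at hz
    obtain ⟨n, hn⟩ := mem_iUnion.1 hz
    obtain ⟨K, hK, hs⟩ := hdom n
    obtain ⟨c', d', _, rfl⟩ := hP K hK
    have h1 := ((Ioo_subset_Ioo_iff (hcd n)).1 hs).1
    have : leftEnd P x ≤ c' := csInf_le ⟨a, hlow⟩ ⟨d', hK, hs (hxn n)⟩
    linarith [hn.1, min_le_left e x]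
  · refine le_csInf ?_ hlow
    obtain ⟨K, hK, hxK⟩ := hxU
    obtain ⟨c, d, _, rfl⟩ := hP K hK
    exact ⟨c, d, hK, hxK⟩

/-- For `⋃₀ P = (a, b)`: there exists `x > a` with `L_P(x) = a` iff there is
an inner cover of `(a, b)` with respect to `P` having a least element. -/
theorem stmt12 (P : Set (Set ℝ)) (a b : ℝ) (hab : a < b)
    (hP : IsIntervalCollection P) (hU : ⋃₀ P = Ioo a b) :
    (∃ x, a < x ∧ x ∈ ⋃₀ P ∧ leftEnd P x = a) ↔
      ∃ L : LinkedList, IsInnerCover P a b L ∧ L.HasLeast := by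
  constructor
  · rintro ⟨x, h1, h2, h3⟩
    exact aux_forward P a b hab hP hU x h1 h2 h3
  · rintro ⟨L, h1, h2⟩
    exact aux_backward P a b hP hU L h1 h2
end

section
/- Let P be a collection of nonempty bounded open intervals of ℝ with ∪P ⊆ (a,b) for real numbers a < b. Then the following are equivalent: (1) there exists x ∈ ∪P with x > a and L_P(x) = a; (2) every outer cover of (a,b) with respect to P has a least element. -/
open Set

/-- The descending sequence of right endpoints. -/
noncomputable def descB (f : ℝ → ℝ) (a b : ℝ) : ℕ → ℝ
  | 0 => b
  | n + 1 => (a + f (descB f a b n)) / 2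

theorem LinkedList.a_mono_aux (L : LinkedList) (i : ℤ) (hi : i ∈ L.S) (n : ℕ)
    (hn : i + n ∈ L.S) : L.a i ≤ L.a (i + n) := by
  induction n with
  | zero => simp
  | succ k ih =>
    have hk : i + k ∈ L.S := L.consecutive i hi _ hn _ (by omega) (by push_cast; omega)
    have h1 := ih hk
    have e : i + ((k + 1 : ℕ) : ℤ) = i + k + 1 := by push_cast; ring
    rw [e] at hn ⊢
    exact h1.trans (L.mono_a _ hk hn).le

theorem LinkedList.a_mono (L : LinkedList) (i j : ℤ) (hi : i ∈ L.S) (hj : j ∈ L.S)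
    (h : i ≤ j) : L.a i ≤ L.a j := by
  obtain ⟨n, rfl⟩ := Int.le.dest h
  exact L.a_mono_aux i hi n hj

theorem leftEnd_forward (P : Set (Set ℝ)) (a b : ℝ)
    (hP : IsIntervalCollection P) (hU : ⋃₀ P ⊆ Ioo a b) (x : ℝ) (hx : x ∈ ⋃₀ P)
    (hl : leftEnd P x = a) (L : LinkedList) (hL : IsOuterCover P a b L) : L.HasLeast := by
  by_contra hno
  have hdown : ∀ i ∈ L.S, i - 1 ∈ L.S := by
    intro i hi
    by_contra h
    apply hno
    refine ⟨i, hi, fun j hj => ?_⟩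
    by_contra hji
    exact h (L.consecutive j hj i hi (i - 1) (by omega) (by omega))
  have hxab := hU hx
  rw [← hL.1] at hxab
  simp only [LinkedList.union, LinkedList.interval, mem_iUnion, exists_prop] at hxab
  obtain ⟨i, hi, hxi⟩ := hxab
  have hi1 := hdown i hi
  have hi2 := hdown _ hi1
  have h21 := L.mono_a (i - 1 - 1) hi2 (by simpa using hi1)
  rw [sub_add_cancel] at h21
  have ha : a ≤ L.a (i - 1 - 1) := by
    by_contra hlt
    push Not at hlt
    have hlt2 := L.lt _ hi2
    obtain ⟨y, hy1, hy2⟩ := exists_between (lt_min hlt hlt2)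
    have : y ∈ L.union := by
      simp only [LinkedList.union, LinkedList.interval, mem_iUnion, exists_prop]
      exact ⟨_, hi2, hy1, hy2.trans_le (min_le_right _ _)⟩
    rw [hL.1] at this
    exact absurd (hy2.trans_le (min_le_left _ _)) (not_lt.2 this.1.le)
  have key : L.a (i - 1) ≤ leftEnd P x := by
    apply le_csInf
    · obtain ⟨J, hJ, hxJ⟩ := hx
      obtain ⟨c, d, hcd, rfl⟩ := hP J hJ
      exact ⟨c, d, hJ, hxJ⟩
    · rintro c ⟨d, hJ, hxJ⟩
      obtain ⟨k, hk, hsub⟩ := hL.2 _ hJ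
      have hxk := hsub hxJ
      have hik : i - 1 ≤ k := by
        by_contra hlt
        have hk2 : k + 2 ∈ L.S := L.consecutive k hk i hi _ (by omega) (by omega)
        have h1 := L.gap k hk hk2
        have h2 := L.a_mono (k + 2) i hk2 hi (by omega)
        have h3 := hxk.2
        have h4 := hxi.1
        linarith
      have h5 := L.a_mono _ _ hi1 hk hik
      have h6 := (Ioo_subset_Ioo_iff (hxJ.1.trans hxJ.2)).1 hsub
      exact h5.trans h6.1
  linarith

theorem exists_cover_no_least (P : Set (Set ℝ)) (a b : ℝ) (hab : a < b)
    (hP : IsIntervalCollection P) (hU : ⋃₀ P ⊆ Ioo a b)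
    (hne : ∀ x ∈ ⋃₀ P, leftEnd P x ≠ a) :
    ∃ L : LinkedList, IsOuterCover P a b L ∧ ¬ L.HasLeast := by
  have hca : ∀ c d : ℝ, c < d → Ioo c d ∈ P → a ≤ c ∧ d ≤ b := by
    intro c d hcd hJ
    exact (Ioo_subset_Ioo_iff hcd).1 ((subset_sUnion_of_mem hJ).trans hU)
  have hf : ∀ t : ℝ, ∃ s : ℝ, a < t → a < s ∧ s < t ∧
      ∀ c d, Ioo c d ∈ P → t ∈ Ioo c d → s ≤ c := by
    intro t
    by_cases hat : a < t
    swap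
    · exact ⟨0, fun h => absurd h hat⟩
    by_cases ht : t ∈ ⋃₀ P
    · have hbdd : BddBelow {c | ∃ d, Ioo c d ∈ P ∧ t ∈ Ioo c d} :=
        ⟨a, by rintro c ⟨d, hJ, h⟩; exact (hca c d (h.1.trans h.2) hJ).1⟩
      have hge : a ≤ leftEnd P t := by
        apply le_csInf
        · obtain ⟨J, hJ, hxJ⟩ := ht
          obtain ⟨c, d, hcd, rfl⟩ := hP J hJ
          exact ⟨c, d, hJ, hxJ⟩
        · rintro c ⟨d, hJ, h⟩
          exact (hca c d (h.1.trans h.2) hJ).1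
      have hgt : a < leftEnd P t := lt_of_le_of_ne hge (hne t ht).symm
      obtain ⟨s, hs1, hs2⟩ := exists_between (lt_min hgt hat)
      refine ⟨s, fun _ => ⟨hs1, hs2.trans_le (min_le_right _ _), fun c d hJ h => ?_⟩⟩
      exact (hs2.trans_le (min_le_left _ _)).le.trans (csInf_le hbdd ⟨d, hJ, h⟩)
    · obtain ⟨s, hs1, hs2⟩ := exists_between hat
      exact ⟨s, fun _ => ⟨hs1, hs2, fun c d hJ h => absurd ⟨_, hJ, h⟩ ht⟩⟩
  choose f hf using hf
  set B := descB f a b with hB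
  have B0 : B 0 = b := rfl
  have Bs : ∀ n, B (n + 1) = (a + f (B n)) / 2 := fun n => rfl
  have haB : ∀ n, a < B n := by
    intro n
    induction n with
    | zero => exact hab
    | succ k ih => rw [Bs]; linarith [(hf _ ih).1]
  have hA1 : ∀ n, a < f (B n) := fun n => (hf _ (haB n)).1
  have hA2 : ∀ n, f (B n) < B n := fun n => (hf _ (haB n)).2.1
  have hA3 : ∀ n, B (n + 1) < f (B n) := fun n => by rw [Bs]; linarith [hA1 n]
  have hpow : ∀ n, B n - a ≤ (b - a) * (1 / 2) ^ n := by
    intro n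
    induction n with
    | zero => simp [B0]
    | succ k ih => rw [pow_succ, Bs]; linarith [hA2 k]
  have hsmall : ∀ x, a < x → ∃ n, B (n + 1) < x := by
    intro x hx
    obtain ⟨n, hn⟩ := exists_pow_lt_of_lt_one (div_pos (sub_pos.2 hx) (sub_pos.2 hab))
      (by norm_num : (1 / 2 : ℝ) < 1)
    refine ⟨n, ?_⟩
    rw [lt_div_iff₀ (sub_pos.2 hab)] at hn
    have := hpow n
    linarith [hA2 n, hA3 n]
  have hBle : ∀ n, B n ≤ b := by
    intro n
    induction n with
    | zero => exact le_rfl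
    | succ k ih => linarith [hA2 k, hA3 k]
  let L : LinkedList :=
    { S := Iic 0
      nonempty := ⟨0, by simp⟩
      consecutive := by
        intro i hi k hk j hij hjk
        exact le_trans hjk hk
      a := fun i => f (B ((-i).toNat + 1))
      b := fun i => B ((-i).toNat)
      lt := by
        intro i hi
        show f (B ((-i).toNat + 1)) < B ((-i).toNat)
        linarith [hA2 ((-i).toNat + 1), hA3 ((-i).toNat), hA2 ((-i).toNat)]
      mono_a := by
        intro i hi hi1
        have hi1' : i + 1 ≤ 0 := hi1
        have e : (-i).toNat = (-(i + 1)).toNat + 1 := by omega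
        show f (B ((-i).toNat + 1)) < f (B ((-(i + 1)).toNat + 1))
        rw [e]
        linarith [hA2 ((-(i + 1)).toNat + 1 + 1), hA3 ((-(i + 1)).toNat + 1)]
      mono_b := by
        intro i hi hi1
        have hi1' : i + 1 ≤ 0 := hi1
        have e : (-i).toNat = (-(i + 1)).toNat + 1 := by omega
        show B ((-i).toNat) < B ((-(i + 1)).toNat)
        rw [e]
        linarith [hA2 ((-(i + 1)).toNat), hA3 ((-(i + 1)).toNat)]
      overlap := by
        intro i hi hi1
        have hi1' : i + 1 ≤ 0 := hi1
        have e : (-i).toNat = (-(i + 1)).toNat + 1 := by omega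
        show f (B ((-(i + 1)).toNat + 1)) < B ((-i).toNat)
        rw [e]
        exact hA2 _
      gap := by
        intro i hi hi1
        have hi1' : i + 2 ≤ 0 := hi1
        have e : (-i).toNat = (-(i + 2)).toNat + 1 + 1 := by omega
        show B ((-i).toNat) < f (B ((-(i + 2)).toNat + 1))
        rw [e]
        exact hA3 _ }
  have hint : ∀ n : ℕ, L.interval (-(n : ℤ)) = Ioo (f (B (n + 1))) (B n) := by
    intro n
    show Ioo (f (B ((-(-(n : ℤ))).toNat + 1))) (B ((-(-(n : ℤ))).toNat)) = _
    simp
  have hmem : ∀ n : ℕ, (-(n : ℤ)) ∈ L.S := fun n => by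
    show (-(n : ℤ)) ≤ 0
    omega
  refine ⟨L, ⟨?_, ?_⟩, ?_⟩
  · ext x
    simp only [LinkedList.union, mem_iUnion, exists_prop]
    constructor
    · rintro ⟨i, hi, hx⟩
      have hi' : i ≤ 0 := hi
      obtain ⟨n, rfl⟩ : ∃ n : ℕ, i = -(n : ℤ) := ⟨(-i).toNat, by omega⟩
      rw [hint] at hx
      exact ⟨(hA1 _).trans hx.1, hx.2.trans_le (hBle n)⟩
    · intro hx
      have hex : ∃ n, f (B (n + 1)) < x := by
        obtain ⟨n, hn⟩ := hsmall x hx.1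
        exact ⟨n, (hA2 _).trans hn⟩
      classical
      have h1 := Nat.find_spec hex
      have h2 := fun m => Nat.find_min hex (m := m)
      refine ⟨-((Nat.find hex : ℕ) : ℤ), hmem _, ?_⟩
      rw [hint]
      refine ⟨h1, ?_⟩
      rcases hn : Nat.find hex with _ | m
      · exact hx.2
      · have := h2 m (by omega)
        push Not at this
        linarith [hA2 (m + 1)]
  · intro J hJ
    obtain ⟨c, d, hcd, rfl⟩ := hP J hJ
    have hcab := hca c d hcd hJ
    have hno : ∀ n, c < f (B n) → d ≤ B n := by
      intro n h
      by_contra hd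
      push Not at hd
      have := (hf _ (haB n)).2.2 c d hJ ⟨h.trans (hA2 n), hd⟩
      linarith
    have hex : ∃ n, f (B (n + 1)) ≤ c := by
      obtain ⟨n, hn⟩ := hsmall d (by linarith)
      refine ⟨n, ?_⟩
      by_contra h
      push Not at h
      linarith [hno _ h]
    classical
    have h1 := Nat.find_spec hex
    have h2 := fun m => Nat.find_min hex (m := m)
    refine ⟨-((Nat.find hex : ℕ) : ℤ), hmem _, ?_⟩
    rw [hint]
    refine Ioo_subset_Ioo h1 ?_
    rcases hn : Nat.find hex with _ | m
    · exact hcab.2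
    · have := h2 m (by omega)
      push Not at this
      exact hno _ this
  · rintro ⟨i, hi, hmin⟩
    have hi' : i ≤ 0 := hi
    have := hmin (i - 1) (by show i - 1 ≤ 0; omega)
    omega

/-- For `⋃₀ P ⊆ (a, b)`: there exists `x ∈ ⋃₀ P` with `x > a` and
`L_P(x) = a` iff every outer cover of `(a, b)` with respect to `P` has a least element. -/
theorem stmt13 (P : Set (Set ℝ)) (a b : ℝ) (hab : a < b)
    (hP : IsIntervalCollection P) (hU : ⋃₀ P ⊆ Ioo a b) :
    (∃ x ∈ ⋃₀ P, a < x ∧ leftEnd P x = a) ↔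
      ∀ L : LinkedList, IsOuterCover P a b L → L.HasLeast := by
  constructor
  · rintro ⟨x, hx, -, hl⟩ L hL
    exact leftEnd_forward P a b hP hU x hx hl L hL
  · intro h
    by_contra hno
    push Not at hno
    obtain ⟨L, hL, hL2⟩ := exists_cover_no_least P a b hab hP hU
      (fun x hx => hno x hx (hU hx).1)
    exact hL2 (h L hL)
end
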